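/- arXiv:1810.10849 — 3 statements merged into one kernel-verified Lean document; each statement's English description precedes it below -/
import Mathlib

section
/- Let d ≥ 1 and N > 0. For every f ∈ 𝒫_N (pointwise values taken via the continuous representative of f), the family (f(n/N)·f_{N,n})_{n∈ℤ^d} is summable in L²(ℝ^d) with sum f, i.e. f = Σ_{n∈ℤ^d} f(n/N) f_{N,n} in L²(ℝ^d), and moreover ∫_{ℝ^d} |f(x)|² dx = N^{-d} Σ_{n∈ℤ^d} |f(n/N)|². -/
open MeasureTheory Filter Topology Metric ENNReal NNReal

noncomputable section

/-- `sinc` with value 1 at 0. -/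
def sinc' (x : ℝ) : ℝ := if x = 0 then 1 else Real.sin x / x

/-- The function `f_{N,n}(x) = ∏_j sin (π (N x_j - n_j)) / (π (N x_j - n_j))`. -/
def fN (d : ℕ) (N : ℝ) (n : Fin d → ℤ) (x : EuclideanSpace ℝ (Fin d)) : ℝ :=
  ∏ j, sinc' (Real.pi * (N * x j - n j))

/-- The lattice point `n / N` in `ℝ^d`. -/
def latticePt (d : ℕ) (N : ℝ) (n : Fin d → ℤ) : EuclideanSpace ℝ (Fin d) :=
  WithLp.toLp 2 (fun j => (n j : ℝ) / N)

/-- The heat solution at time `t > 0` with initial datum `u₀ ∈ L²(ℝ^d)`: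
`u(t,x) = (4πt)^{-d/2} ∫ e^{-|x-y|²/(4t)} u₀(y) dy`. -/
def heatSol (d : ℕ) (u₀ : EuclideanSpace ℝ (Fin d) → ℝ) (t : ℝ)
    (x : EuclideanSpace ℝ (Fin d)) : ℝ :=
  (4 * Real.pi * t) ^ (-(d : ℝ) / 2) * ∫ y, Real.exp (-‖x - y‖ ^ 2 / (4 * t)) * u₀ y

/-- The family `F` is summable in `L²(ℝ^d)` with sum `g`: the finite partial sums
converge to `g` in the `L²` norm along the filter of finite subsets of `ℤ^d`. -/
def HasSumL2 (d : ℕ) {V : Type} [NormedAddCommGroup V]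
    (F : (Fin d → ℤ) → EuclideanSpace ℝ (Fin d) → V)
    (g : EuclideanSpace ℝ (Fin d) → V) : Prop :=
  Tendsto (fun s : Finset (Fin d → ℤ) =>
    eLpNorm (fun x => g x - ∑ n ∈ s, F n x) 2 volume) atTop (𝓝 0)

/-- The closed cube `Q_r(0)` in `ℝ^d`, centered at the origin, of side length `2r`. -/
def Qcube (d : ℕ) (r : ℝ) : Set (EuclideanSpace ℝ (Fin d)) := {ξ | ∀ j, |ξ j| ≤ r}

/-- The truncated Fourier integral, with the paper's normalization
`(2π)^{-d/2} ∫_{|x| ≤ R} e^{-i x·ξ} f(x) dx`. -/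
def truncFT (d : ℕ) (f : EuclideanSpace ℝ (Fin d) → ℂ) (R : ℝ)
    (ξ : EuclideanSpace ℝ (Fin d)) : ℂ :=
  (((2 * Real.pi) ^ (-(d : ℝ) / 2) : ℝ) : ℂ) *
    ∫ x in closedBall (0 : EuclideanSpace ℝ (Fin d)) R,
      Complex.exp (-(Complex.I * ((inner ℝ x ξ : ℝ) : ℂ))) * f x

/-- `fhat` is the Fourier transform of `f ∈ L²(ℝ^d)` in the `L²` (Plancherel) sense:
`fhat ∈ L²` and the Fourier integrals of the truncations of `f` converge to `fhat`
in the `L²` norm. -/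
def IsL2Fourier (d : ℕ) (f fhat : EuclideanSpace ℝ (Fin d) → ℂ) : Prop :=
  MemLp fhat 2 volume ∧
    Tendsto (fun R : ℝ => eLpNorm (fun ξ => fhat ξ - truncFT d f R ξ) 2 volume)
      atTop (𝓝 0)

/-- The `L²(ℝ^d)` norm of a function, as a real number. -/
def l2norm (d : ℕ) {V : Type} [NormedAddCommGroup V]
    (f : EuclideanSpace ℝ (Fin d) → V) : ℝ :=
  (eLpNorm f 2 volume).toReal


open FourierTransform SchwartzMap in
lemma l2f_fourier {d : ℕ} (h : EuclideanSpace ℝ (Fin d) → ℂ) (h1 : Integrable h volume)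
    (h2 : MemLp h 2 volume) :
    (𝓕 (h2.toLp h : Lp ℂ 2 (volume : Measure (EuclideanSpace ℝ (Fin d)))) : Lp ℂ 2 (volume : Measure (EuclideanSpace ℝ (Fin d))))
      =ᵐ[volume] 𝓕 h := by
  have hc : Continuous (𝓕 h) :=
    VectorFourier.fourierIntegral_continuous Real.continuous_fourierChar
      (innerSL ℝ).continuous₂ h1
  have key : ∀ g : 𝓢(EuclideanSpace ℝ (Fin d), ℂ),
      ∫ x, g x • (𝓕 (h2.toLp h) : Lp ℂ 2 (volume : Measure (EuclideanSpace ℝ (Fin d)))) x = ∫ x, g x • 𝓕 h x := by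
    intro g
    rw [← Lp.toTemperedDistribution_apply, ← Lp.fourier_toTemperedDistribution_eq,
      TemperedDistribution.fourier_apply, Lp.toTemperedDistribution_apply]
    have e1 : ∫ x, (𝓕 g) x • (h2.toLp h) x = ∫ x, (𝓕 g) x • h x := by
      apply integral_congr_ae
      filter_upwards [h2.coeFn_toLp] with x hx
      rw [hx]
    rw [e1, SchwartzMap.fourier_coe]
    have := VectorFourier.integral_fourierIntegral_smul_eq_flip (L := innerₗ (EuclideanSpace ℝ (Fin d)))
      (μ := volume) (ν := volume) Real.continuous_fourierChar continuous_inner g.integrable h1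
    rw [flip_innerₗ] at this
    exact this
  have hz : (fun x => (𝓕 (h2.toLp h) : Lp ℂ 2 (volume : Measure (EuclideanSpace ℝ (Fin d)))) x - 𝓕 h x)
      =ᵐ[volume] 0 := by
    have l1 : LocallyIntegrable (𝓕 (h2.toLp h) : Lp ℂ 2 (volume : Measure (EuclideanSpace ℝ (Fin d)))) volume :=
      (Lp.memLp _).locallyIntegrable (by norm_num)
    have l2 := hc.locallyIntegrable (μ := volume)
    apply ae_eq_zero_of_integral_contDiff_smul_eq_zero (l1.sub l2)
    intro g gs gc
    have hg₁ : HasCompactSupport (Complex.ofRealCLM ∘ g) := gc.comp_left rfl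
    have hg₂ : ContDiff ℝ ((⊤ : ℕ∞) : WithTop ℕ∞) (Complex.ofRealCLM ∘ g) := by fun_prop
    have := key (hg₁.toSchwartzMap hg₂)
    simp only [Pi.sub_apply, smul_sub]
    rw [integral_sub (l1.integrable_smul_left_of_hasCompactSupport gs.continuous gc)
      (l2.integrable_smul_left_of_hasCompactSupport gs.continuous gc), sub_eq_zero]
    simpa using this
  filter_upwards [hz] with x hx
  exact sub_eq_zero.1 hx

open FourierTransform in
lemma cont_fourierInv {d : ℕ} (h : EuclideanSpace ℝ (Fin d) → ℂ) (h1 : Integrable h volume) :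
    Continuous (𝓕⁻ h) := by
  have hc : Continuous (𝓕 h) :=
    VectorFourier.fourierIntegral_continuous Real.continuous_fourierChar
      (innerSL ℝ).continuous₂ h1
  have : 𝓕⁻ h = fun x => 𝓕 h (-x) := by ext x; exact Real.fourierInv_eq_fourier_neg h x
  rw [this]; exact hc.comp continuous_neg

open FourierTransform SchwartzMap in
lemma l2f_fourierInv {d : ℕ} (h : EuclideanSpace ℝ (Fin d) → ℂ) (h1 : Integrable h volume)
    (h2 : MemLp h 2 volume) :
    (𝓕⁻ (h2.toLp h : Lp ℂ 2 (volume : Measure (EuclideanSpace ℝ (Fin d)))) : Lp ℂ 2 (volume : Measure (EuclideanSpace ℝ (Fin d))))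
      =ᵐ[volume] 𝓕⁻ h := by
  have hc : Continuous (𝓕⁻ h) := cont_fourierInv h h1
  have key : ∀ g : 𝓢(EuclideanSpace ℝ (Fin d), ℂ),
      ∫ x, g x • (𝓕⁻ (h2.toLp h) : Lp ℂ 2 (volume : Measure (EuclideanSpace ℝ (Fin d)))) x = ∫ x, g x • 𝓕⁻ h x := by
    intro g
    rw [← Lp.toTemperedDistribution_apply, ← Lp.fourierInv_toTemperedDistribution_eq,
      TemperedDistribution.fourierInv_apply, Lp.toTemperedDistribution_apply]
    have e1 : ∫ x, (𝓕⁻ g) x • (h2.toLp h) x = ∫ x, (𝓕⁻ g) x • h x := by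
      apply integral_congr_ae
      filter_upwards [h2.coeFn_toLp] with x hx
      rw [hx]
    rw [e1, SchwartzMap.fourierInv_coe]
    have := VectorFourier.integral_fourierIntegral_smul_eq_flip (L := -innerₗ (EuclideanSpace ℝ (Fin d)))
      (μ := volume) (ν := volume) Real.continuous_fourierChar (by simpa using! continuous_inner.neg) g.integrable h1
    have q1 : ∀ x, VectorFourier.fourierIntegral Real.fourierChar volume
        (-innerₗ (EuclideanSpace ℝ (Fin d))) (⇑g) x = 𝓕⁻ (⇑g) x := by
      intro x; simp [VectorFourier.fourierIntegral, Real.fourierInv_eq]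
    have q2 : ∀ x, VectorFourier.fourierIntegral Real.fourierChar volume
        (-innerₗ (EuclideanSpace ℝ (Fin d))).flip h x = 𝓕⁻ h x := by
      intro x; simp [VectorFourier.fourierIntegral, Real.fourierInv_eq, real_inner_comm]
    simp only [q1, q2] at this
    exact this
  have hz : (fun x => (𝓕⁻ (h2.toLp h) : Lp ℂ 2 (volume : Measure (EuclideanSpace ℝ (Fin d)))) x - 𝓕⁻ h x)
      =ᵐ[volume] 0 := by
    have l1 : LocallyIntegrable (𝓕⁻ (h2.toLp h) : Lp ℂ 2 (volume : Measure (EuclideanSpace ℝ (Fin d)))) volume :=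
      (Lp.memLp _).locallyIntegrable (by norm_num)
    have l2 := hc.locallyIntegrable (μ := volume)
    apply ae_eq_zero_of_integral_contDiff_smul_eq_zero (l1.sub l2)
    intro g gs gc
    have hg₁ : HasCompactSupport (Complex.ofRealCLM ∘ g) := gc.comp_left rfl
    have hg₂ : ContDiff ℝ ((⊤ : ℕ∞) : WithTop ℕ∞) (Complex.ofRealCLM ∘ g) := by fun_prop
    have := key (hg₁.toSchwartzMap hg₂)
    simp only [Pi.sub_apply, smul_sub]
    rw [integral_sub (l1.integrable_smul_left_of_hasCompactSupport gs.continuous gc)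
      (l2.integrable_smul_left_of_hasCompactSupport gs.continuous gc), sub_eq_zero]
    simpa using this
  filter_upwards [hz] with x hx
  exact sub_eq_zero.1 hx

def cubeC (d : ℕ) : Set (EuclideanSpace ℝ (Fin d)) :=
  {ξ | ∀ j, ξ j ∈ Set.Ioc (-1/2 : ℝ) (-1/2 + 1)}

lemma meas_cubeC (d : ℕ) : MeasurableSet (cubeC d) := by
  have : cubeC d = ⋂ j, (fun ξ : EuclideanSpace ℝ (Fin d) => ξ j) ⁻¹' Set.Ioc (-1/2 : ℝ) (-1/2 + 1) := by
    ext; simp [cubeC]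
  rw [this]
  exact MeasurableSet.iInter fun j => (by fun_prop : Measurable (fun ξ : EuclideanSpace ℝ (Fin d) => ξ j)) measurableSet_Ioc

def eN (d : ℕ) (n : Fin d → ℤ) (ξ : EuclideanSpace ℝ (Fin d)) : ℂ :=
  Complex.exp (2 * Real.pi * Complex.I * ((∑ j, (n j : ℝ) * ξ j : ℝ) : ℂ))

section torus

attribute [local instance] instMeasureSpaceUnitAddCircle

open UnitAddTorus

lemma torus_q (d : ℕ) : ∃ q : UnitAddTorus (Fin d) → EuclideanSpace ℝ (Fin d),
    MeasurePreserving q volume (volume.restrict (cubeC d)) ∧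
    ∀ n θ, mFourier n θ = eN d n (q θ) := by
  refine ⟨fun θ => WithLp.toLp 2 ((measurableEquivPiIoc (fun _ => (-1/2 : ℝ)) θ).1), ?_, ?_⟩
  · have h1 := measurePreserving_equivPiIoc (fun _ : Fin d => (-1/2 : ℝ))
    have hS : MeasurableSet {x : Fin d → ℝ | ∀ i, x i ∈ Set.Ioc (-1/2 : ℝ) (-1/2 + 1)} :=
      MeasurableSet.univ_pi' (fun i => measurableSet_Ioc)
    have h2 := measurePreserving_subtype_coe (μa := (volume : Measure (Fin d → ℝ))) hS
    have h3 := ((PiLp.volume_preserving_toLp (Fin d)).restrict_preimage (meas_cubeC d))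
    exact h3.comp (h2.comp h1)
  · intro n θ
    have hθ : ∀ j, θ j = (((measurableEquivPiIoc (fun _ => (-1/2 : ℝ)) θ).1 j : ℝ) : UnitAddCircle) := by
      intro j
      have := (measurableEquivPiIoc (fun _ : Fin d => (-1/2 : ℝ))).symm_apply_apply θ
      rw [coe_symm_measurableEquivPiIoc_apply] at this
      exact (congrFun this j).symm
    simp only [mFourier, ContinuousMap.coe_mk, eN]
    push_cast
    rw [Finset.mul_sum, Complex.exp_sum]
    refine Finset.prod_congr rfl fun j _ => ?_
    conv_lhs => rw [hθ j]
    rw [fourier_coe_apply]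
    congr 1
    push_cast; ring

lemma eN_cont (d : ℕ) (n : Fin d → ℤ) : Continuous (eN d n) := by
  unfold eN; fun_prop

lemma cube_series (d : ℕ) (G : EuclideanSpace ℝ (Fin d) → ℂ) (hG : MemLp G 2 volume)
    (h0 : ∀ᵐ ξ ∂(volume : Measure (EuclideanSpace ℝ (Fin d))), ξ ∉ cubeC d → G ξ = 0)
    (c : (Fin d → ℤ) → ℂ) (hc : ∀ n, c n = ∫ ξ, eN d n ξ * G ξ) :
    Tendsto (fun s : Finset (Fin d → ℤ) => eLpNorm (fun ξ => G ξ - ∑ n ∈ s,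
      c n * (cubeC d).indicator (eN d (-n)) ξ) 2 volume) atTop (𝓝 0) ∧
    HasSum (fun n => ‖c n‖ ^ 2) (∫ ξ, ‖G ξ‖ ^ 2) := by
  obtain ⟨q, hq, hqn⟩ := torus_q d
  have hGr := hG.restrict (cubeC d)
  have hH : MemLp (G ∘ q) 2 volume := hGr.comp_measurePreserving hq
  obtain ⟨Hl, hHl⟩ : ∃ Hl : Lp ℂ 2 (volume : Measure (UnitAddTorus (Fin d))),
    Hl =ᵐ[volume] G ∘ q := ⟨_, hH.coeFn_toLp⟩
  have tr : ∀ K : EuclideanSpace ℝ (Fin d) → ℂ, AEStronglyMeasurable K volume →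
      (∀ᵐ ξ ∂(volume : Measure (EuclideanSpace ℝ (Fin d))), ξ ∉ cubeC d → K ξ = 0) →
      ∫ t, K (q t) = ∫ ξ, K ξ := by
    intro K hK hK0
    rw [← setIntegral_eq_integral_of_ae_compl_eq_zero hK0, ← hq.map_eq,
      integral_map hq.aemeasurable (by rw [hq.map_eq]; exact hK.restrict)]
  have hco : ∀ n, mFourierCoeff Hl n = c (-n) := by
    intro n
    rw [hc, mFourierCoeff, ← tr]
    · apply integral_congr_ae
      filter_upwards [hHl] with t ht
      rw [ht, hqn]; rfl
    · exact (eN_cont d _).aestronglyMeasurable.mul hG.1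
    · filter_upwards [h0] with ξ hξ h
      rw [hξ h, mul_zero]
  constructor
  · have hs := hasSum_mFourier_series_L2 Hl
    rw [← (Equiv.neg (Fin d → ℤ)).hasSum_iff] at hs
    simp only [Function.comp_def, hco, Equiv.neg_apply, neg_neg] at hs
    have hs2 := tendsto_iff_edist_tendsto_0.1 (show Tendsto _ atTop (𝓝 _) from hs)
    refine hs2.congr fun s => ?_
    rw [edist_comm, Lp.edist_def]
    have hKm : AEStronglyMeasurable (fun ξ => G ξ - ∑ n ∈ s,
        c n * (cubeC d).indicator (eN d (-n)) ξ) volume := by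
      refine hG.1.sub (Finset.aestronglyMeasurable_fun_sum _ fun n _ => ?_)
      exact aestronglyMeasurable_const.mul
        ((eN_cont d _).aestronglyMeasurable.indicator (meas_cubeC d))
    have e1 : eLpNorm (fun ξ => G ξ - ∑ n ∈ s,
        c n * (cubeC d).indicator (eN d (-n)) ξ) 2 volume = eLpNorm (fun ξ => G ξ - ∑ n ∈ s,
        c n * (cubeC d).indicator (eN d (-n)) ξ) 2 (volume.restrict (cubeC d)) := by
      rw [← eLpNorm_indicator_eq_eLpNorm_restrict (meas_cubeC d)]
      apply eLpNorm_congr_ae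
      filter_upwards [h0] with ξ hξ
      by_cases h : ξ ∈ cubeC d
      · simp [h]
      · simp [h, hξ h]
    rw [e1, ← eLpNorm_comp_measurePreserving hKm.restrict hq]
    apply eLpNorm_congr_ae
    have hin : ∀ᵐ t, q t ∈ cubeC d := by
      refine hq.quasiMeasurePreserving.ae ?_
      exact ae_restrict_mem (meas_cubeC d)
    have hsum : ⇑(∑ n ∈ s, c n • mFourierLp 2 (-n)) =ᵐ[volume]
        fun t => ∑ n ∈ s, c n * mFourier (-n) t := by
      refine (Lp.coeFn_finsetSum _ _).trans ?_
      have : ∀ n ∈ s, ⇑(c n • mFourierLp 2 (-n)) =ᵐ[volume] fun t => c n * mFourier (-n) t := by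
        intro n _
        filter_upwards [Lp.coeFn_smul (c n) (mFourierLp 2 (-n)), coeFn_mFourierLp 2 (-n)] with t h1 h2
        rw [h1, Pi.smul_apply, h2, smul_eq_mul]
      have this2 := (Finset.eventually_all s).2 this
      filter_upwards [this2] with t ht
      rw [Finset.sum_apply]
      exact Finset.sum_congr rfl ht
    filter_upwards [hin, hsum, hHl] with t h1 h2 h3
    simp only [Pi.sub_apply, Function.comp_apply, h2, h3, Set.indicator_of_mem h1, hqn]
  · have hs := hasSum_sq_mFourierCoeff Hl
    rw [← (Equiv.neg (Fin d → ℤ)).hasSum_iff] at hs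
    simp only [Function.comp_def, hco, Equiv.neg_apply, neg_neg] at hs
    convert hs using 1
    have := tr (fun ξ => ((‖G ξ‖ ^ 2 : ℝ) : ℂ))
      (Complex.continuous_ofReal.comp_aestronglyMeasurable (hG.1.norm.pow 2))
      (by filter_upwards [h0] with ξ hξ h; simp [hξ h])
    rw [integral_complex_ofReal, integral_complex_ofReal, Complex.ofReal_inj] at this
    rw [← this]
    apply integral_congr_ae
    filter_upwards [hHl] with t ht
    simp [ht]

end torus

lemma sinc_int (a : ℝ) : ∫ t : ℝ, (Set.Ioc (-1/2 : ℝ) (-1/2 + 1)).indicator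
    (fun t : ℝ => Complex.exp ((2 * Real.pi * Complex.I * a) * t)) t = (sinc' (Real.pi * a) : ℂ) := by
  rw [integral_indicator measurableSet_Ioc, ← intervalIntegral.integral_of_le (by norm_num)]
  by_cases ha : a = 0
  · subst ha; simp [sinc']
  · have hpi := Real.pi_ne_zero
    have hc : (2 * Real.pi * Complex.I * a : ℂ) ≠ 0 := by
      simp [ha]
    rw [integral_exp_mul_complex hc]
    have hpa : Real.pi * a ≠ 0 := mul_ne_zero hpi ha
    simp only [sinc', hpa, if_false]
    push_cast
    rw [Complex.sin]
    have e1 : (2 * Real.pi * Complex.I * a : ℂ) * (-1/2 + 1) = Real.pi * a * Complex.I := by ring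
    have e2 : (2 * Real.pi * Complex.I * a : ℂ) * (-1/2) = -(Real.pi * a) * Complex.I := by ring
    rw [e1, e2]
    have hpi' : (Real.pi : ℂ) ≠ 0 := by exact_mod_cast hpi
    have ha' : (a : ℂ) ≠ 0 := by exact_mod_cast ha
    have := Complex.I_ne_zero
    field_simp
    linear_combination (Complex.exp (Real.pi * a * Complex.I) - Complex.exp (-(Real.pi * a * Complex.I))) * Complex.I_sq

open FourierTransform in
lemma fourierInv_eN (d : ℕ) (n : Fin d → ℤ) (x : EuclideanSpace ℝ (Fin d)) :
    𝓕⁻ ((cubeC d).indicator (eN d (-n))) x = (fN d 1 n x : ℂ) := by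
  rw [Real.fourierInv_eq', ← (PiLp.volume_preserving_toLp (Fin d)).integral_comp
    (MeasurableEquiv.toLp 2 (Fin d → ℝ)).measurableEmbedding]
  have : ∀ y : Fin d → ℝ, Complex.exp ((2 * Real.pi * (inner ℝ (WithLp.toLp 2 y) x) : ℝ) * Complex.I) •
      ((cubeC d).indicator (eN d (-n))) (WithLp.toLp 2 y) =
      ∏ j, (Set.Ioc (-1/2 : ℝ) (-1/2 + 1)).indicator
        (fun t : ℝ => Complex.exp ((2 * Real.pi * Complex.I * ((1 * x j - n j : ℝ) : ℂ)) * t)) (y j) := by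
    intro y
    by_cases h : WithLp.toLp 2 y ∈ cubeC d
    · rw [Set.indicator_of_mem h]
      have h' : ∀ j, y j ∈ Set.Ioc (-1/2 : ℝ) (-1/2 + 1) := h
      simp only [Set.indicator_of_mem (h' _)]
      rw [← Complex.exp_sum, eN, smul_eq_mul, ← Complex.exp_add]
      congr 1
      simp only [PiLp.inner_apply, RCLike.inner_apply, conj_trivial, Pi.neg_apply]
      push_cast
      simp only [Finset.mul_sum, Finset.sum_mul, ← Finset.sum_add_distrib]
      refine Finset.sum_congr rfl fun j _ => ?_
      ring
    · rw [Set.indicator_of_notMem h, smul_zero]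
      have : ∃ j, y j ∉ Set.Ioc (-1/2 : ℝ) (-1/2 + 1) := by
        by_contra hh; push Not at hh; exact h hh
      obtain ⟨j, hj⟩ := this
      rw [Finset.prod_eq_zero (Finset.mem_univ j)]
      rw [Set.indicator_of_notMem hj]
  simp only [this]
  rw [MeasureTheory.integral_fintype_prod_volume_eq_prod]
  simp only [sinc_int, fN]
  push_cast; rfl

lemma eN_norm (d : ℕ) (n : Fin d → ℤ) (ξ : EuclideanSpace ℝ (Fin d)) : ‖eN d n ξ‖ = 1 := by
  rw [eN, show (2 * Real.pi * Complex.I * ((∑ j, (n j : ℝ) * ξ j : ℝ) : ℂ) : ℂ) =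
    ((2 * Real.pi * (∑ j, (n j : ℝ) * ξ j) : ℝ) : ℂ) * Complex.I by push_cast; ring]
  exact Complex.norm_exp_ofReal_mul_I _

lemma vol_cubeC (d : ℕ) : volume (cubeC d) < ⊤ := by
  rw [← (PiLp.volume_preserving_toLp (Fin d)).measure_preimage (meas_cubeC d).nullMeasurableSet]
  have : (WithLp.toLp 2) ⁻¹' (cubeC d) = Set.univ.pi fun _ : Fin d => Set.Ioc (-1/2 : ℝ) (-1/2 + 1) := by
    ext; simp [cubeC]
  rw [this, Real.volume_pi_Ioc]
  norm_num

lemma eN_memLp (d : ℕ) (n : Fin d → ℤ) (p : ℝ≥0∞) :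
    MemLp ((cubeC d).indicator (eN d n)) p volume := by
  rw [memLp_indicator_iff_restrict (meas_cubeC d)]
  have : IsFiniteMeasure (volume.restrict (cubeC d)) := ⟨by simpa using vol_cubeC d⟩
  exact MemLp.of_bound (eN_cont d n).aestronglyMeasurable 1 (by simp [eN_norm])

lemma cube_ae (d : ℕ) : ∀ᵐ ξ ∂(volume : Measure (EuclideanSpace ℝ (Fin d))),
    ξ ∈ Qcube d (1/2) → ξ ∈ cubeC d := by
  have h : ∀ᵐ y ∂(volume : Measure (Fin d → ℝ)), ∀ j, y j ≠ -1/2 := by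
    rw [ae_all_iff]
    intro j
    have := Measure.pi_hyperplane (fun _ : Fin d => (volume : Measure ℝ)) j (-1/2)
    rw [ae_iff]
    simp only [ne_eq, not_not]
    exact this
  have h2 := ((PiLp.volume_preserving_ofLp (Fin d)).quasiMeasurePreserving).ae h
  filter_upwards [h2] with ξ hξ hq j
  have := abs_le.1 (hq j)
  constructor
  · refine lt_of_le_of_ne (by linarith [this.1]) (fun h => hξ j h.symm)
  · linarith [this.2]

open FourierTransform in
lemma core_one (d : ℕ) (F : EuclideanSpace ℝ (Fin d) → ℂ) (hc : Continuous F)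
    (hm : MemLp F 2 volume)
    (hs : ∀ᵐ η ∂(volume : Measure (EuclideanSpace ℝ (Fin d))), η ∉ Qcube d (1/2) →
      (𝓕 (hm.toLp F) : Lp ℂ 2 (volume : Measure (EuclideanSpace ℝ (Fin d)))) η = 0) :
    Tendsto (fun s : Finset (Fin d → ℤ) => eLpNorm (fun x => F x - ∑ n ∈ s,
      F (latticePt d 1 n) * (fN d 1 n x : ℂ)) 2 volume) atTop (𝓝 0) ∧
    HasSum (fun n => ‖F (latticePt d 1 n)‖ ^ 2) (∫ x, ‖F x‖ ^ 2) := by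
  obtain ⟨Gl, hGl⟩ : ∃ Gl : Lp ℂ 2 (volume : Measure (EuclideanSpace ℝ (Fin d))),
    Gl = 𝓕 (hm.toLp F) := ⟨_, rfl⟩
  rw [← hGl] at hs
  have hG2 : MemLp (Gl : EuclideanSpace ℝ (Fin d) → ℂ) 2 volume := Lp.memLp Gl
  have h0 : ∀ᵐ ξ ∂(volume : Measure (EuclideanSpace ℝ (Fin d))), ξ ∉ cubeC d → Gl ξ = 0 := by
    filter_upwards [hs, cube_ae d] with ξ h1 h2 h3
    exact h1 fun h => h3 (h2 h)
  have hG1 : Integrable (Gl : EuclideanSpace ℝ (Fin d) → ℂ) volume := by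
    have : (Gl : EuclideanSpace ℝ (Fin d) → ℂ) =ᵐ[volume] (cubeC d).indicator Gl := by
      filter_upwards [h0] with ξ h
      by_cases hξ : ξ ∈ cubeC d
      · simp [hξ]
      · simp [hξ, h hξ]
    refine Integrable.congr ?_ this.symm
    rw [integrable_indicator_iff (meas_cubeC d)]
    have : IsFiniteMeasure (volume.restrict (cubeC d)) := ⟨by simpa using vol_cubeC d⟩
    exact (hG2.restrict (cubeC d)).integrable (by norm_num)
  have hinv : 𝓕⁻ Gl = hm.toLp F := by rw [hGl]; exact FourierTransform.fourierInv_fourier_eq _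
  have hFeq : F = 𝓕⁻ (Gl : EuclideanSpace ℝ (Fin d) → ℂ) := by
    refine (Continuous.ae_eq_iff_eq volume hc (cont_fourierInv _ hG1)).1 ?_
    have := l2f_fourierInv _ hG1 hG2
    rw [Lp.toLp_coeFn, hinv] at this
    exact hm.coeFn_toLp.symm.trans this
  have hcn : ∀ n, F (latticePt d 1 n) = ∫ ξ, eN d n ξ * Gl ξ := by
    intro n
    rw [hFeq, Real.fourierInv_eq']
    congr 1
    ext ξ
    rw [smul_eq_mul, eN]
    congr 2
    simp only [PiLp.inner_apply, RCLike.inner_apply, conj_trivial, latticePt]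
    push_cast
    simp only [Finset.mul_sum, Finset.sum_mul]
    refine Finset.sum_congr rfl fun j _ => ?_
    ring
  obtain ⟨t1, t2⟩ := cube_series d Gl hG2 h0 _ hcn
  constructor
  · refine t1.congr fun s => ?_
    set el : (Fin d → ℤ) → Lp ℂ 2 (volume : Measure (EuclideanSpace ℝ (Fin d))) :=
      fun n => (eN_memLp d (-n) 2).toLp _ with hel
    have hel' : ∀ n, (𝓕⁻ (el n) : Lp ℂ 2 (volume : Measure (EuclideanSpace ℝ (Fin d))))
        =ᵐ[volume] fun x => (fN d 1 n x : ℂ) := by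
      intro n
      refine (l2f_fourierInv _ (memLp_one_iff_integrable.1 (eN_memLp d (-n) 1)) (eN_memLp d (-n) 2)).trans ?_
      exact Eventually.of_forall fun x => fourierInv_eN d n x
    have key : ‖Gl - ∑ n ∈ s, F (latticePt d 1 n) • el n‖ₑ =
        ‖hm.toLp F - ∑ n ∈ s, F (latticePt d 1 n) • (𝓕⁻ (el n) : Lp ℂ 2 (volume : Measure (EuclideanSpace ℝ (Fin d))))‖ₑ := by
      have : hm.toLp F - ∑ n ∈ s, F (latticePt d 1 n) • (𝓕⁻ (el n) : Lp ℂ 2 (volume : Measure (EuclideanSpace ℝ (Fin d)))) =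
        (Lp.fourierTransformₗᵢ (EuclideanSpace ℝ (Fin d)) ℂ).symm (Gl - ∑ n ∈ s, F (latticePt d 1 n) • el n) := by
        rw [map_sub, map_sum]
        simp only [map_smul]
        rw [← hinv]
        rfl
      rw [this, LinearIsometryEquiv.enorm_map]
    rw [Lp.enorm_def, Lp.enorm_def] at key
    have gen : ∀ (A : Lp ℂ 2 (volume : Measure (EuclideanSpace ℝ (Fin d))))
        (B : (Fin d → ℤ) → Lp ℂ 2 (volume : Measure (EuclideanSpace ℝ (Fin d))))
        (A' : EuclideanSpace ℝ (Fin d) → ℂ) (B' : (Fin d → ℤ) → EuclideanSpace ℝ (Fin d) → ℂ),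
        A =ᵐ[volume] A' → (∀ n, B n =ᵐ[volume] B' n) →
        eLpNorm (⇑(A - ∑ n ∈ s, F (latticePt d 1 n) • B n)) 2 volume =
        eLpNorm (fun x => A' x - ∑ n ∈ s, F (latticePt d 1 n) * B' n x) 2 volume := by
      intro A B A' B' hA hB
      apply eLpNorm_congr_ae
      have this : ∀ n ∈ s, ⇑(F (latticePt d 1 n) • B n) =ᵐ[volume] fun t => F (latticePt d 1 n) * B' n t := by
        intro n _
        filter_upwards [Lp.coeFn_smul (F (latticePt d 1 n)) (B n), hB n] with t h1 h2
        rw [h1, Pi.smul_apply, h2, smul_eq_mul]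
      have this2 := (Finset.eventually_all s).2 this
      filter_upwards [Lp.coeFn_sub A (∑ n ∈ s, F (latticePt d 1 n) • B n),
        Lp.coeFn_finsetSum s (fun n => F (latticePt d 1 n) • B n), this2, hA] with t h1 h2 h3 h4
      rw [h1, Pi.sub_apply, h2, Finset.sum_apply, h4, Finset.sum_congr rfl h3]
    rw [gen Gl el Gl (fun n => (cubeC d).indicator (eN d (-n))) (ae_eq_refl _) (fun n => MemLp.coeFn_toLp _),
      gen _ _ F (fun n x => (fN d 1 n x : ℂ)) hm.coeFn_toLp hel'] at key
    exact key
  · convert t2 using 1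
    have hn : ‖Gl‖ = ‖hm.toLp F‖ := by rw [hGl]; exact Lp.norm_fourier_eq _
    have sq : ∀ A : Lp ℂ 2 (volume : Measure (EuclideanSpace ℝ (Fin d))), ‖A‖ ^ 2 = ∫ x, ‖A x‖ ^ 2 := by
      intro A
      have := L2.inner_def (𝕜 := ℂ) A A
      rw [inner_self_eq_norm_sq_to_K] at this
      simp only [inner_self_eq_norm_sq_to_K] at this
      have h2 : ((‖A‖ ^ 2 : ℝ) : ℂ) = ((∫ x, ‖A x‖ ^ 2 : ℝ) : ℂ) := by
        rw [← integral_complex_ofReal]; push_cast; exact this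
      exact_mod_cast h2
    rw [← sq, hn, sq]
    apply integral_congr_ae
    filter_upwards [hm.coeFn_toLp] with x hx
    rw [hx]

lemma eLpNorm_scale (d : ℕ) (c : ℝ) (hc : c ≠ 0) : ∃ K : ℝ≥0∞, K ≠ ⊤ ∧
    ∀ g : EuclideanSpace ℝ (Fin d) → ℂ,
      eLpNorm (fun x => g (c • x)) 2 volume = K * eLpNorm g 2 volume := by
  refine ⟨(ENNReal.ofReal |(c ^ Module.finrank ℝ (EuclideanSpace ℝ (Fin d)))⁻¹|) ^ (1 / (2 : ℝ≥0∞)).toReal, ?_, fun g => ?_⟩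
  rotate_left
  · have he : MeasurableEmbedding (fun x : EuclideanSpace ℝ (Fin d) => c • x) :=
      (Homeomorph.smulOfNeZero c hc).measurableEmbedding
    have := he.eLpNorm_map_measure (g := g) (p := 2) (μ := volume)
    rw [Measure.map_addHaar_smul volume hc, eLpNorm_smul_measure_of_ne_top (by norm_num)] at this
    rw [smul_eq_mul] at this
    exact this.symm
  · exact ENNReal.rpow_ne_top_of_nonneg (by positivity) ENNReal.ofReal_ne_top

lemma tendsto_trunc (d : ℕ) (F : EuclideanSpace ℝ (Fin d) → ℂ) (hm : MemLp F 2 volume) :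
    Tendsto (fun R : ℝ => eLpNorm (fun x => F x - (closedBall 0 R).indicator F x) 2 volume)
      atTop (𝓝 0) := by
  have h1 : Tendsto (fun R : ℝ => ∫⁻ x, ‖F x - (closedBall 0 R).indicator F x‖ₑ ^ (2 : ℝ))
      atTop (𝓝 (∫⁻ _ : EuclideanSpace ℝ (Fin d), 0)) := by
    refine tendsto_lintegral_filter_of_dominated_convergence' (fun x => ‖F x‖ₑ ^ (2 : ℝ)) ?_ ?_ ?_ ?_
    · refine Eventually.of_forall fun R => ?_
      exact ((hm.1.sub (hm.1.indicator isClosed_closedBall.measurableSet)).enorm).pow_const _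
    · refine Eventually.of_forall fun R => Eventually.of_forall fun x => ?_
      by_cases h : x ∈ closedBall (0 : EuclideanSpace ℝ (Fin d)) R
      · simp [Set.indicator_of_mem h]
      · simp [Set.indicator_of_notMem h]
    · have := lintegral_rpow_enorm_lt_top_of_eLpNorm_lt_top (p := 2) (by norm_num) (by norm_num) hm.2
      simpa using this.ne
    · refine Eventually.of_forall fun x => ?_
      refine tendsto_const_nhds.congr' ?_
      filter_upwards [eventually_ge_atTop ‖x‖] with R hR
      rw [Set.indicator_of_mem (by simpa using hR)]
      simp
  rw [lintegral_zero] at h1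
  have h2 := (ENNReal.continuous_rpow_const (y := 1/2)).tendsto 0 |>.comp h1
  rw [ENNReal.zero_rpow_of_pos (by norm_num)] at h2
  refine h2.congr fun R => ?_
  rw [eLpNorm_eq_lintegral_rpow_enorm_toReal (by norm_num) (by norm_num)]
  simp

open FourierTransform in
lemma fourier_trunc (d : ℕ) (N : ℝ) (hN : 0 < N) (f : EuclideanSpace ℝ (Fin d) → ℂ) (R : ℝ)
    (η : EuclideanSpace ℝ (Fin d)) :
    𝓕 ((closedBall 0 R).indicator (fun y => f (N⁻¹ • y))) η =
      ((N ^ d * (2 * Real.pi) ^ ((d : ℝ) / 2) : ℝ) : ℂ) *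
        truncFT d f (R / N) ((2 * Real.pi * N) • η) := by
  have hcv := Measure.integral_comp_smul (volume : Measure (EuclideanSpace ℝ (Fin d)))
    (fun v => Complex.exp ((-2 * Real.pi * inner ℝ v η : ℝ) * Complex.I) •
      (closedBall 0 R).indicator (fun y => f (N⁻¹ • y)) v) N
  rw [Real.fourier_eq']
  rw [finrank_euclideanSpace_fin, abs_of_pos (by positivity)] at hcv
  have hNd : (N ^ d : ℝ) ≠ 0 := by positivity
  have h2 : ∫ v, Complex.exp ((-2 * Real.pi * inner ℝ v η : ℝ) * Complex.I) •
      (closedBall 0 R).indicator (fun y => f (N⁻¹ • y)) v = ((N ^ d : ℝ) : ℂ) *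
      ∫ x in closedBall (0 : EuclideanSpace ℝ (Fin d)) (R / N),
      Complex.exp (-(Complex.I * ((inner ℝ x ((2 * Real.pi * N) • η) : ℝ) : ℂ))) * f x := by
    have h3 : ∫ x in closedBall (0 : EuclideanSpace ℝ (Fin d)) (R / N),
        Complex.exp (-(Complex.I * ((inner ℝ x ((2 * Real.pi * N) • η) : ℝ) : ℂ))) * f x =
        ∫ x, Complex.exp ((-2 * Real.pi * inner ℝ (N • x) η : ℝ) * Complex.I) •
      (closedBall 0 R).indicator (fun y => f (N⁻¹ • y)) (N • x) := by
      rw [← integral_indicator isClosed_closedBall.measurableSet]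
      congr 1
      ext x
      by_cases h : x ∈ closedBall (0 : EuclideanSpace ℝ (Fin d)) (R / N)
      · have h' : N • x ∈ closedBall (0 : EuclideanSpace ℝ (Fin d)) R := by
          rw [mem_closedBall_zero_iff] at h ⊢
          rw [norm_smul, Real.norm_of_nonneg hN.le]
          rw [le_div_iff₀ hN] at h; linarith
        rw [Set.indicator_of_mem h, Set.indicator_of_mem h', inv_smul_smul₀ hN.ne', smul_eq_mul]
        congr 2
        rw [inner_smul_left, inner_smul_right]
        push_cast
        simp
        ring
      · have h' : N • x ∉ closedBall (0 : EuclideanSpace ℝ (Fin d)) R := by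
          rw [mem_closedBall_zero_iff] at h ⊢
          rw [norm_smul, Real.norm_of_nonneg hN.le]
          rw [le_div_iff₀ hN] at h; linarith
        rw [Set.indicator_of_notMem h, Set.indicator_of_notMem h', smul_zero]
    rw [h3, hcv, Complex.real_smul, ← mul_assoc, ← Complex.ofReal_mul, mul_inv_cancel₀ hNd]
    simp
  rw [h2, truncFT, ← mul_assoc, ← Complex.ofReal_mul]
  congr 2
  rw [mul_assoc, ← Real.rpow_add (by positivity)]
  norm_num [neg_div]

open FourierTransform in
lemma fourier_scaled (d : ℕ) (N : ℝ) (hN : 0 < N) (f fhat : EuclideanSpace ℝ (Fin d) → ℂ)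
    (hcont : Continuous f) (hFT : IsL2Fourier d f fhat)
    (hm : MemLp (fun y => f (N⁻¹ • y)) 2 volume) :
    (𝓕 (hm.toLp _) : Lp ℂ 2 (volume : Measure (EuclideanSpace ℝ (Fin d)))) =ᵐ[volume]
      fun η => ((N ^ d * (2 * Real.pi) ^ ((d : ℝ) / 2) : ℝ) : ℂ) * fhat ((2 * Real.pi * N) • η) := by
  set K0 : ℂ := ((N ^ d * (2 * Real.pi) ^ ((d : ℝ) / 2) : ℝ) : ℂ) with hK0
  have hc0 : (2 * Real.pi * N) ≠ 0 := by positivity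
  set F : EuclideanSpace ℝ (Fin d) → ℂ := fun y => f (N⁻¹ • y) with hF
  have hFc : Continuous F := by fun_prop
  obtain ⟨K, hK, hKs⟩ := eLpNorm_scale d _ hc0
  have hfh : AEStronglyMeasurable (fun η => fhat ((2 * Real.pi * N) • η)) volume :=
    hFT.1.1.comp_quasiMeasurePreserving
      ⟨(by fun_prop), by
        rw [Measure.map_addHaar_smul volume hc0]
        exact Measure.smul_absolutelyContinuous⟩
  have hR2 : ∀ R, MemLp ((closedBall 0 R).indicator F) 2 volume := fun R =>
    hm.indicator isClosed_closedBall.measurableSet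
  have hR1 : ∀ R, Integrable ((closedBall 0 R).indicator F) volume := fun R => by
    rw [integrable_indicator_iff isClosed_closedBall.measurableSet]
    exact hFc.continuousOn.integrableOn_compact (isCompact_closedBall _ _)
  have t1 := tendsto_trunc d F hm
  have t2 : Tendsto (fun R : ℝ => ‖K0‖ₑ * (K * eLpNorm (fun ξ => fhat ξ - truncFT d f (R / N) ξ) 2 volume))
      atTop (𝓝 0) := by
    have a := hFT.2.comp (tendsto_id.atTop_div_const hN)
    have b := ENNReal.Tendsto.const_mul (ENNReal.Tendsto.const_mul a (Or.inr hK))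
      (Or.inr (enorm_ne_top (x := K0)))
    simpa using b
  have t3 := t1.add t2
  rw [add_zero] at t3
  have hle : ∀ R : ℝ, eLpNorm (fun η => (𝓕 (hm.toLp F) : Lp ℂ 2 (volume : Measure (EuclideanSpace ℝ (Fin d)))) η
      - K0 * fhat ((2 * Real.pi * N) • η)) 2 volume ≤
      eLpNorm (fun x => F x - (closedBall 0 R).indicator F x) 2 volume +
      ‖K0‖ₑ * (K * eLpNorm (fun ξ => fhat ξ - truncFT d f (R / N) ξ) 2 volume) := by
    intro R
    have e1 : eLpNorm (fun x => F x - (closedBall 0 R).indicator F x) 2 volume =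
        eLpNorm (fun η => (𝓕 (hm.toLp F) : Lp ℂ 2 (volume : Measure (EuclideanSpace ℝ (Fin d)))) η
          - 𝓕 ((closedBall 0 R).indicator F) η) 2 volume := by
      have a : ‖hm.toLp F - (hR2 R).toLp _‖ₑ =
          ‖(𝓕 (hm.toLp F) : Lp ℂ 2 (volume : Measure (EuclideanSpace ℝ (Fin d)))) - 𝓕 ((hR2 R).toLp _)‖ₑ := by
        rw [← LinearIsometryEquiv.enorm_map (Lp.fourierTransformₗᵢ (EuclideanSpace ℝ (Fin d)) ℂ), map_sub]
        rfl
      rw [Lp.enorm_def, Lp.enorm_def] at a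
      convert a using 1
      · apply eLpNorm_congr_ae
        filter_upwards [Lp.coeFn_sub (hm.toLp F) ((hR2 R).toLp _), hm.coeFn_toLp, (hR2 R).coeFn_toLp] with x h1 h2 h3
        rw [h1, Pi.sub_apply, h2, h3]
      · apply eLpNorm_congr_ae
        filter_upwards [Lp.coeFn_sub (𝓕 (hm.toLp F) : Lp ℂ 2 (volume : Measure (EuclideanSpace ℝ (Fin d)))) (𝓕 ((hR2 R).toLp _)),
          l2f_fourier _ (hR1 R) (hR2 R)] with x h1 h2
        rw [h1, Pi.sub_apply, h2]
    have e2 : ‖K0‖ₑ * (K * eLpNorm (fun ξ => fhat ξ - truncFT d f (R / N) ξ) 2 volume) =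
        eLpNorm (fun η => 𝓕 ((closedBall 0 R).indicator F) η - K0 * fhat ((2 * Real.pi * N) • η)) 2 volume := by
      rw [← hKs, ← eLpNorm_const_smul, ← eLpNorm_neg]
      congr 1
      ext η
      rw [hF, fourier_trunc d N hN f R η]
      simp [hK0]
      ring
    rw [e1, e2]
    have hcF : Continuous (𝓕 ((closedBall 0 R).indicator F)) :=
      VectorFourier.fourierIntegral_continuous Real.continuous_fourierChar
        (innerSL ℝ).continuous₂ (hR1 R)
    refine le_trans (le_of_eq ?_) (eLpNorm_add_le ((Lp.aestronglyMeasurable _).sub hcF.aestronglyMeasurable)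
      (hcF.aestronglyMeasurable.sub (aestronglyMeasurable_const.mul hfh)) (by norm_num))
    congr 1
    ext η
    simp
  have hz := le_antisymm (ge_of_tendsto' t3 hle) bot_le
  have hz' := (eLpNorm_eq_zero_iff ((Lp.aestronglyMeasurable _).sub
    (aestronglyMeasurable_const.mul hfh)) (by norm_num)).1 hz
  filter_upwards [hz'] with η h
  exact sub_eq_zero.1 h

theorem statement0 (d : ℕ) (hd : 1 ≤ d) (N : ℝ) (hN : 0 < N)
    (f fhat : EuclideanSpace ℝ (Fin d) → ℂ)
    (hcont : Continuous f) (hmem : MemLp f 2 volume)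
    (hFT : IsL2Fourier d f fhat)
    (hsupp : ∀ᵐ ξ ∂(volume : Measure (EuclideanSpace ℝ (Fin d))),
      ξ ∉ Qcube d (Real.pi * N) → fhat ξ = 0) :
    HasSumL2 d (fun n x => f (latticePt d N n) * (fN d N n x : ℂ)) f ∧
    Summable (fun n : Fin d → ℤ => ‖f (latticePt d N n)‖ ^ 2) ∧
    ∫ x, ‖f x‖ ^ 2 = N ^ (-(d : ℝ)) * ∑' n : Fin d → ℤ, ‖f (latticePt d N n)‖ ^ 2 := by
  have hNi : N⁻¹ ≠ 0 := inv_ne_zero hN.ne'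
  have hc0 : (2 * Real.pi * N) ≠ 0 := by positivity
  obtain ⟨K1, hK1, hK1s⟩ := eLpNorm_scale d N⁻¹ hNi
  obtain ⟨K2, hK2, hK2s⟩ := eLpNorm_scale d N hN.ne'
  have hFc : Continuous (fun y => f (N⁻¹ • y)) := by fun_prop
  have hm : MemLp (fun y => f (N⁻¹ • y)) 2 volume := by
    refine ⟨hFc.aestronglyMeasurable, ?_⟩
    rw [hK1s]
    exact ENNReal.mul_lt_top hK1.lt_top hmem.2
  have hqm : Measure.QuasiMeasurePreserving
      (fun η : EuclideanSpace ℝ (Fin d) => (2 * Real.pi * N) • η) volume volume :=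
    ⟨(by fun_prop), by
        rw [Measure.map_addHaar_smul volume hc0]
        exact Measure.smul_absolutelyContinuous⟩
  obtain ⟨t1, t2⟩ := core_one d _ hFc hm (by
    filter_upwards [fourier_scaled d N hN f fhat hcont hFT hm, hqm.ae hsupp] with η h1 h2 h3
    rw [h1, h2, mul_zero]
    intro h
    apply h3
    intro j
    have := h j
    rw [PiLp.smul_apply, smul_eq_mul, abs_mul, abs_of_pos (by positivity)] at this
    have hp : 0 < Real.pi * N := by positivity
    nlinarith)
  have hl : ∀ n, N⁻¹ • latticePt d 1 n = latticePt d N n := by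
    intro n
    ext j
    simp [latticePt, div_eq_inv_mul]
  simp only [hl] at t1 t2
  refine ⟨?_, t2.summable, ?_⟩
  · have := ENNReal.Tendsto.const_mul t1 (Or.inr hK2)
    rw [mul_zero] at this
    refine this.congr fun s => ?_
    rw [← hK2s]
    congr 1
    ext x
    rw [inv_smul_smul₀ hN.ne']
    congr 1
    refine Finset.sum_congr rfl fun n _ => ?_
    simp [fN]
  · rw [t2.tsum_eq]
    have := Measure.integral_comp_smul (volume : Measure (EuclideanSpace ℝ (Fin d)))
      (fun y => ‖f (N⁻¹ • y)‖ ^ 2) N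
    simp only [inv_smul_smul₀ hN.ne'] at this
    rw [this, finrank_euclideanSpace_fin, abs_of_pos (by positivity), smul_eq_mul,
      Real.rpow_neg hN.le, Real.rpow_natCast]
end
end

section
/- Let u₀ ∈ L²(ℝ^d), T > 0 and N > 0, and let u be the heat solution with initial datum u₀. Then the family (u(T, n/N)·f_{N,n})_{n∈ℤ^d} is summable in L²(ℝ^d) with sum equal to u(T,·) if and only if u₀ ∈ 𝒫_N, i.e. supp û₀ ⊆ Q_{πN}(0). -/
open MeasureTheory Filter Topology Metric ENNReal NNReal

noncomputable section

open FourierTransform SchwartzMap in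
lemma aux_fourier_ae {d : ℕ} (h : EuclideanSpace ℝ (Fin d) → ℂ) (h1 : Integrable h)
    (h2 : MemLp h 2 volume) :
    ((𝓕 (h2.toLp h) : Lp ℂ 2 (volume : Measure (EuclideanSpace ℝ (Fin d)))) :
      EuclideanSpace ℝ (Fin d) → ℂ) =ᵐ[volume] 𝓕 h := by
  have hc : Continuous (𝓕 h) := by
    apply VectorFourier.fourierIntegral_continuous Real.continuous_fourierChar
      (L := innerₗ _) continuous_inner h1
  refine ae_eq_of_integral_contDiff_smul_eq ((Lp.memLp _).locallyIntegrable (by norm_num))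
    hc.locallyIntegrable ?_
  intro g g_smooth g_cpt
  have hg₁ : HasCompactSupport (Complex.ofRealCLM ∘ g) := g_cpt.comp_left rfl
  have hg₂ : ContDiff ℝ (((⊤ : ℕ∞) : WithTop ℕ∞)) (Complex.ofRealCLM ∘ g) := by fun_prop
  have e1 := congrArg (fun D => D (hg₁.toSchwartzMap hg₂))
    (Lp.fourier_toTemperedDistribution_eq (h2.toLp h))
  simp only [TemperedDistribution.fourier_apply, Lp.toTemperedDistribution_apply] at e1
  have e2 := VectorFourier.integral_fourierIntegral_smul_eq_flip (μ := volume) (ν := volume)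
    (L := innerₗ (EuclideanSpace ℝ (Fin d))) Real.continuous_fourierChar continuous_inner
    (hg₁.toSchwartzMap hg₂).integrable h1
  rw [flip_innerₗ] at e2
  have e3 : ∫ x, (𝓕 (hg₁.toSchwartzMap hg₂)) x • (h2.toLp h) x
      = ∫ x, (𝓕 (hg₁.toSchwartzMap hg₂)) x • h x := by
    apply integral_congr_ae
    filter_upwards [h2.coeFn_toLp] with x hx
    rw [hx]
  rw [e3] at e1
  calc _ = ∫ x, (hg₁.toSchwartzMap hg₂) x • (𝓕 (h2.toLp h) : Lp ℂ 2 _) x := by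
        congr 1
    _ = _ := e1.symm
    _ = _ := by rw [SchwartzMap.fourier_coe]; exact e2

open FourierTransform SchwartzMap in
lemma aux_fourierInv_ae {d : ℕ} (h : EuclideanSpace ℝ (Fin d) → ℂ) (h1 : Integrable h)
    (h2 : MemLp h 2 volume) :
    ((𝓕⁻ (h2.toLp h) : Lp ℂ 2 (volume : Measure (EuclideanSpace ℝ (Fin d)))) :
      EuclideanSpace ℝ (Fin d) → ℂ) =ᵐ[volume] 𝓕⁻ h := by
  have hc : Continuous (𝓕⁻ h) := by
    have : 𝓕⁻ h = fun x => 𝓕 h (-x) := by ext x; exact Real.fourierInv_eq_fourier_neg h x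
    rw [this]
    have hc : Continuous (𝓕 h) := by
      apply VectorFourier.fourierIntegral_continuous Real.continuous_fourierChar
        (L := innerₗ _) continuous_inner h1
    exact hc.comp continuous_neg
  refine ae_eq_of_integral_contDiff_smul_eq ((Lp.memLp _).locallyIntegrable (by norm_num))
    hc.locallyIntegrable ?_
  intro g g_smooth g_cpt
  have hg₁ : HasCompactSupport (Complex.ofRealCLM ∘ g) := g_cpt.comp_left rfl
  have hg₂ : ContDiff ℝ (((⊤ : ℕ∞) : WithTop ℕ∞)) (Complex.ofRealCLM ∘ g) := by fun_prop
  have e1 := congrArg (fun D => D (hg₁.toSchwartzMap hg₂))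
    (Lp.fourierInv_toTemperedDistribution_eq (h2.toLp h))
  simp only [TemperedDistribution.fourierInv_apply, Lp.toTemperedDistribution_apply] at e1
  have e2 := VectorFourier.integral_fourierIntegral_smul_eq_flip (μ := volume) (ν := volume)
    (L := -innerₗ (EuclideanSpace ℝ (Fin d))) Real.continuous_fourierChar
    (by simpa using! continuous_inner.neg)
    (hg₁.toSchwartzMap hg₂).integrable h1
  have e4 : (-innerₗ (EuclideanSpace ℝ (Fin d))).flip = -innerₗ (EuclideanSpace ℝ (Fin d)) := by
    ext x y; simp [real_inner_comm]
  rw [e4] at e2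
  have e3 : ∫ x, (𝓕⁻ (hg₁.toSchwartzMap hg₂)) x • (h2.toLp h) x
      = ∫ x, (𝓕⁻ (hg₁.toSchwartzMap hg₂)) x • h x := by
    apply integral_congr_ae
    filter_upwards [h2.coeFn_toLp] with x hx
    rw [hx]
  rw [e3] at e1
  calc _ = ∫ x, (hg₁.toSchwartzMap hg₂) x • (𝓕⁻ (h2.toLp h) : Lp ℂ 2 _) x := by
        congr 1
    _ = _ := e1.symm
    _ = _ := by rw [SchwartzMap.fourierInv_coe]; exact e2

open FourierTransform in
lemma aux_plancherel_inv {d : ℕ} (h : EuclideanSpace ℝ (Fin d) → ℂ) (h1 : Integrable h)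
    (h2 : MemLp h 2 volume) : eLpNorm (𝓕⁻ h) 2 volume = eLpNorm h 2 volume := by
  rw [← eLpNorm_congr_ae (aux_fourierInv_ae h h1 h2), ← eLpNorm_congr_ae h2.coeFn_toLp,
    ← Lp.enorm_def, ← Lp.enorm_def]
  have : ‖(𝓕⁻ (h2.toLp h) : Lp ℂ 2 (volume : Measure (EuclideanSpace ℝ (Fin d))))‖ = ‖h2.toLp h‖ :=
    (Lp.fourierTransformₗᵢ _ ℂ).symm.norm_map _
  simp only [enorm_eq_nnnorm]
  congr 1
  exact NNReal.eq this

lemma aux_qmp {d : ℕ} {r : ℝ} (hr : r ≠ 0) :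
    Measure.QuasiMeasurePreserving (fun x : EuclideanSpace ℝ (Fin d) => r • x) volume volume := by
  refine ⟨measurable_const_smul r, ?_⟩
  rw [Measure.map_addHaar_smul volume hr]
  exact Measure.smul_absolutelyContinuous

lemma aux_ae_smul {d : ℕ} {r : ℝ} (hr : r ≠ 0) (P : EuclideanSpace ℝ (Fin d) → Prop) :
    (∀ᵐ x, P (r • x)) ↔ ∀ᵐ x, P x := by
  constructor
  · intro h
    have := (aux_qmp (d := d) (inv_ne_zero hr)).ae h
    simpa [smul_smul, hr] using this
  · intro h
    exact (aux_qmp hr).ae h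

lemma aux_scale {d : ℕ} {r : ℝ} (hr : r ≠ 0) : ∃ C : ℝ≥0∞, C ≠ ∞ ∧
    ∀ g : EuclideanSpace ℝ (Fin d) → ℂ, AEStronglyMeasurable g volume →
      eLpNorm (fun x => g (r • x)) 2 volume = C * eLpNorm g 2 volume := by
  set K : ℝ≥0∞ := ENNReal.ofReal |(r ^ Module.finrank ℝ (EuclideanSpace ℝ (Fin d)))⁻¹| with hK
  refine ⟨K ^ (1 / (2 : ℝ≥0∞)).toReal, ?_, ?_⟩
  · exact ENNReal.rpow_ne_top_of_nonneg (by simp) ENNReal.ofReal_ne_top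
  · intro g hg
    have hm := Measure.map_addHaar_smul (volume : Measure (EuclideanSpace ℝ (Fin d))) hr
    have : AEStronglyMeasurable g (Measure.map (fun x => r • x) volume) := by
      rw [hm]; exact hg.smul_measure _
    have e := eLpNorm_map_measure (p := 2) this (measurable_const_smul r).aemeasurable
    rw [hm, eLpNorm_smul_measure_of_ne_top (by simp)] at e
    simpa [Function.comp_def, hK] using e.symm

lemma aux_tail {d : ℕ} (f : EuclideanSpace ℝ (Fin d) → ℂ) (hf : MemLp f 2 volume) :
    Tendsto (fun R : ℝ => eLpNorm (fun x => f x - (closedBall 0 R).indicator f x) 2 volume)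
      atTop (𝓝 0) := by
  have key : Tendsto (fun R : ℝ => ∫⁻ x, ‖f x - (closedBall 0 R).indicator f x‖ₑ ^ (2:ℝ))
      atTop (𝓝 (∫⁻ x : EuclideanSpace ℝ (Fin d), 0)) := by
    apply tendsto_lintegral_filter_of_dominated_convergence' (fun x => ‖f x‖ₑ ^ (2 : ℝ))
    · refine Eventually.of_forall fun R => ?_
      have := (hf.1.sub (hf.1.indicator (measurableSet_closedBall (x := 0) (ε := R)))).enorm
      exact this.pow_const _
    · refine Eventually.of_forall fun R => Eventually.of_forall fun x => ?_
      by_cases hx : x ∈ closedBall (0 : EuclideanSpace ℝ (Fin d)) R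
      · simp [Set.indicator_of_mem hx]
      · simp [Set.indicator_of_notMem hx]
    · have := lintegral_rpow_enorm_lt_top_of_eLpNorm_lt_top (by norm_num) (by norm_num) hf.2
      simpa using this.ne
    · refine Eventually.of_forall fun x => ?_
      apply tendsto_const_nhds.congr'
      filter_upwards [eventually_ge_atTop ‖x‖] with R hR
      have hx : x ∈ closedBall (0 : EuclideanSpace ℝ (Fin d)) R := by simpa using hR
      simp [Set.indicator_of_mem hx]
  rw [lintegral_zero] at key
  have := (ENNReal.continuous_rpow_const (y := 1 / 2)).tendsto 0 |>.comp key
  simp only [Function.comp_def] at this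
  rw [ENNReal.zero_rpow_of_pos (by norm_num)] at this
  refine this.congr fun R => ?_
  rw [eLpNorm_eq_lintegral_rpow_enorm_toReal (by norm_num) (by norm_num)]
  simp

open FourierTransform in
lemma aux_trunc {d : ℕ} (f : EuclideanSpace ℝ (Fin d) → ℂ) (R : ℝ)
    (ξ : EuclideanSpace ℝ (Fin d)) :
    truncFT d f R ξ = (((2 * Real.pi) ^ (-(d : ℝ) / 2) : ℝ) : ℂ) *
      𝓕 ((closedBall 0 R).indicator f) ((2 * Real.pi)⁻¹ • ξ) := by
  unfold truncFT
  congr 1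
  rw [← integral_indicator measurableSet_closedBall, Real.fourier_eq']
  congr 1
  ext x
  by_cases hx : x ∈ closedBall (0 : EuclideanSpace ℝ (Fin d)) R
  · simp only [Set.indicator_of_mem hx, smul_eq_mul, inner_smul_right]
    congr 2
    have : (Real.pi : ℂ) ≠ 0 := by exact_mod_cast Real.pi_ne_zero
    push_cast
    field_simp
  · simp [Set.indicator_of_notMem hx]

open FourierTransform in
lemma aux_hat {d : ℕ} (f fhat : EuclideanSpace ℝ (Fin d) → ℂ) (hf : MemLp f 2 volume)
    (h : IsL2Fourier d f fhat) :
    fhat =ᵐ[volume] fun ξ => (((2 * Real.pi) ^ (-(d : ℝ) / 2) : ℝ) : ℂ) *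
      (𝓕 (hf.toLp f) : Lp ℂ 2 (volume : Measure (EuclideanSpace ℝ (Fin d))))
        ((2 * Real.pi)⁻¹ • ξ) := by
  set w : Lp ℂ 2 (volume : Measure (EuclideanSpace ℝ (Fin d))) := 𝓕 (hf.toLp f) with hw
  set c : ℂ := (((2 * Real.pi) ^ (-(d : ℝ) / 2) : ℝ) : ℂ) with hc
  have hr : (2 * Real.pi)⁻¹ ≠ 0 := inv_ne_zero (by positivity)
  obtain ⟨C, hC, hs⟩ := aux_scale (d := d) hr
  obtain ⟨hm, ht⟩ := h
  have hfR2 : ∀ R : ℝ, MemLp ((closedBall 0 R).indicator f) 2 volume := fun R =>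
    hf.indicator measurableSet_closedBall
  have hfR1 : ∀ R : ℝ, Integrable ((closedBall 0 R).indicator f) volume := fun R => by
    rw [integrable_indicator_iff measurableSet_closedBall]
    exact (hf.locallyIntegrable (by norm_num)).integrableOn_isCompact (isCompact_closedBall 0 R)
  have hmF : ∀ R : ℝ, AEStronglyMeasurable (𝓕 ((closedBall 0 R).indicator f)) volume := fun R =>
    (Lp.aestronglyMeasurable _).congr (aux_fourier_ae _ (hfR1 R) (hfR2 R))
  have hdiff : ∀ R : ℝ, eLpNorm (fun v => w v - 𝓕 ((closedBall 0 R).indicator f) v) 2 volume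
      = eLpNorm (fun x => f x - (closedBall 0 R).indicator f x) 2 volume := fun R => by
    have e1 : (fun v => w v - 𝓕 ((closedBall 0 R).indicator f) v) =ᵐ[volume]
        (𝓕 (hf.toLp f - (hfR2 R).toLp _) : Lp ℂ 2 (volume : Measure (EuclideanSpace ℝ (Fin d)))) := by
      have e0 : (𝓕 (hf.toLp f - (hfR2 R).toLp _) :
          Lp ℂ 2 (volume : Measure (EuclideanSpace ℝ (Fin d)))) = w - 𝓕 ((hfR2 R).toLp _) :=
        (Lp.fourierTransformₗᵢ _ ℂ).map_sub _ _
      rw [e0]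
      filter_upwards [Lp.coeFn_sub w (𝓕 ((hfR2 R).toLp _)), aux_fourier_ae _ (hfR1 R) (hfR2 R)]
        with v h1 h2
      rw [h1, Pi.sub_apply, h2]
    rw [eLpNorm_congr_ae e1, ← Lp.enorm_def]
    have e2 : (fun x => f x - (closedBall 0 R).indicator f x) =ᵐ[volume]
        (hf.toLp f - (hfR2 R).toLp _ : Lp ℂ 2 (volume : Measure (EuclideanSpace ℝ (Fin d)))) := by
      filter_upwards [Lp.coeFn_sub (hf.toLp f) ((hfR2 R).toLp _), hf.coeFn_toLp,
        (hfR2 R).coeFn_toLp] with v h1 h2 h3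
      rw [h1, Pi.sub_apply, h2, h3]
    rw [eLpNorm_congr_ae e2, ← Lp.enorm_def]
    simp only [enorm_eq_nnnorm]
    congr 1
    exact NNReal.eq (Lp.norm_fourier_eq _)
  have hwm : AEStronglyMeasurable (fun ξ => c * w ((2 * Real.pi)⁻¹ • ξ)) volume :=
    ((Lp.aestronglyMeasurable w).comp_quasiMeasurePreserving (aux_qmp hr)).const_mul c
  have hTm : ∀ R : ℝ, AEStronglyMeasurable (truncFT d f R) volume := fun R => by
    have := ((hmF R).comp_quasiMeasurePreserving (aux_qmp hr)).const_mul c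
    refine this.congr (Eventually.of_forall fun ξ => ?_)
    rw [aux_trunc]; rfl
  have hbd : ∀ R : ℝ, eLpNorm (fun ξ => fhat ξ - c * w ((2 * Real.pi)⁻¹ • ξ)) 2 volume ≤
      eLpNorm (fun ξ => fhat ξ - truncFT d f R ξ) 2 volume + ‖c‖ₑ * (C *
        eLpNorm (fun x => f x - (closedBall 0 R).indicator f x) 2 volume) := fun R => by
    rw [← hdiff R, ← hs (fun v => w v - 𝓕 ((closedBall 0 R).indicator f) v)
      ((Lp.aestronglyMeasurable w).sub (hmF R))]
    have e3 := eLpNorm_const_smul c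
      (fun ξ => w ((2 * Real.pi)⁻¹ • ξ) - 𝓕 ((closedBall 0 R).indicator f) ((2 * Real.pi)⁻¹ • ξ))
      2 (volume : Measure (EuclideanSpace ℝ (Fin d)))
    rw [← e3, ← eLpNorm_neg (c • _)]
    refine le_trans (le_of_eq ?_) (eLpNorm_add_le (hm.1.sub (hTm R)) ?_ (by norm_num))
    · congr 1
      ext ξ
      simp [aux_trunc, ← hc]
      ring
    · apply AEStronglyMeasurable.neg
      refine AEStronglyMeasurable.const_smul ?_ c
      exact ((Lp.aestronglyMeasurable w).sub (hmF R)).comp_quasiMeasurePreserving (aux_qmp hr)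
  have hlim : Tendsto (fun R : ℝ => eLpNorm (fun ξ => fhat ξ - truncFT d f R ξ) 2 volume +
      ‖c‖ₑ * (C * eLpNorm (fun x => f x - (closedBall 0 R).indicator f x) 2 volume))
      atTop (𝓝 0) := by
    have t1 := ENNReal.Tendsto.const_mul (a := ‖c‖ₑ)
      (ENNReal.Tendsto.const_mul (a := C) (aux_tail f hf) (Or.inr hC)) (Or.inr enorm_ne_top)
    simpa using ht.add t1
  have h0 : eLpNorm (fun ξ => fhat ξ - c * w ((2 * Real.pi)⁻¹ • ξ)) 2 volume = 0 :=
    le_antisymm (ge_of_tendsto' hlim hbd) bot_le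
  have h0' := (eLpNorm_eq_zero_iff (hm.1.sub hwm) (by norm_num)).1 h0
  filter_upwards [h0'] with ξ hξ
  exact sub_eq_zero.mp hξ

open FourierTransform in
lemma aux_supp {d : ℕ} (f fhat : EuclideanSpace ℝ (Fin d) → ℂ) (hf : MemLp f 2 volume)
    (h : IsL2Fourier d f fhat) (N : ℝ) :
    (∀ᵐ ξ, ξ ∉ Qcube d (Real.pi * N) → fhat ξ = 0) ↔
    ∀ᵐ v, v ∉ Qcube d (N / 2) →
      (𝓕 (hf.toLp f) : Lp ℂ 2 (volume : Measure (EuclideanSpace ℝ (Fin d)))) v = 0 := by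
  have hr : (2 * Real.pi)⁻¹ ≠ 0 := inv_ne_zero (by positivity)
  rw [← aux_ae_smul hr (fun v => v ∉ Qcube d (N / 2) → _)]
  have hQ : ∀ ξ : EuclideanSpace ℝ (Fin d), (2 * Real.pi)⁻¹ • ξ ∈ Qcube d (N / 2) ↔
      ξ ∈ Qcube d (Real.pi * N) := fun ξ => by
    simp only [Qcube, Set.mem_ofPred_eq]
    refine forall_congr' fun j => ?_
    have hp := Real.pi_pos
    simp only [PiLp.smul_apply, smul_eq_mul, abs_mul, abs_of_pos (by positivity : 0 < (2 * Real.pi)⁻¹)]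
    rw [inv_mul_le_iff₀ (by positivity)]
    ring_nf
  have hc : (((2 * Real.pi) ^ (-(d : ℝ) / 2) : ℝ) : ℂ) ≠ 0 := by
    have : (0:ℝ) < (2 * Real.pi) ^ (-(d : ℝ) / 2) := by positivity
    exact_mod_cast this.ne'
  apply eventually_congr
  filter_upwards [aux_hat f fhat hf h] with ξ hξ
  rw [hQ, hξ, mul_eq_zero, or_iff_right hc]

/-- The Gaussian multiplier of the heat semigroup applied to `w`. -/
def auxg (d : ℕ) (T : ℝ) (w : EuclideanSpace ℝ (Fin d) → ℂ) (v : EuclideanSpace ℝ (Fin d)) : ℂ :=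
  ((Real.exp (-(4 * Real.pi ^ 2 * T) * ‖v‖ ^ 2) : ℝ) : ℂ) * w v

lemma aux_gauss_int {d : ℕ} {b : ℝ} (hb : 0 < b) :
    Integrable (fun v : EuclideanSpace ℝ (Fin d) => Real.exp (-b * ‖v‖ ^ 2)) := by
  have h := GaussianFourier.integrable_cexp_neg_mul_sq_norm_add_of_euclideanSpace (ι := Fin d) (b := (b : ℂ))
    (by simpa using hb) 0 0 |>.norm
  refine h.congr (Eventually.of_forall fun v => ?_)
  simp only [zero_mul, add_zero]
  rw [Complex.norm_exp]
  congr 1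
  norm_cast

lemma aux_gauss_L2 {d : ℕ} {b : ℝ} (hb : 0 < b) :
    MemLp (fun v : EuclideanSpace ℝ (Fin d) => Real.exp (-b * ‖v‖ ^ 2)) 2 volume := by
  rw [memLp_two_iff_integrable_sq (by fun_prop)]
  refine (aux_gauss_int (b := 2 * b) (by positivity)).congr (Eventually.of_forall fun v => ?_)
  simp only [← Real.exp_nat_mul]
  congr 1
  push_cast
  ring

lemma auxg_int {d : ℕ} {T : ℝ} (hT : 0 < T) (w : EuclideanSpace ℝ (Fin d) → ℂ)
    (hw : MemLp w 2 volume) : Integrable (auxg d T w) := by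
  have := Real.pi_pos
  exact MemLp.integrable_mul (p := 2) (q := 2)
    (aux_gauss_L2 (d := d) (b := 4 * Real.pi ^ 2 * T) (by positivity)).ofReal hw

lemma auxg_L2 {d : ℕ} {T : ℝ} (hT : 0 < T) (w : EuclideanSpace ℝ (Fin d) → ℂ)
    (hw : MemLp w 2 volume) : MemLp (auxg d T w) 2 volume := by
  refine MemLp.of_le hw ?_ (Eventually.of_forall fun v => ?_)
  · exact (by fun_prop : Continuous fun v : EuclideanSpace ℝ (Fin d) =>
      ((Real.exp (-(4 * Real.pi ^ 2 * T) * ‖v‖ ^ 2) : ℝ) : ℂ)).aestronglyMeasurable.mul hw.1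
  · unfold auxg
    rw [norm_mul, Complex.norm_real, Real.norm_of_nonneg (Real.exp_pos _).le]
    refine mul_le_of_le_one_left (norm_nonneg _) (Real.exp_le_one_iff.2 ?_)
    have : 0 ≤ 4 * Real.pi ^ 2 * T * ‖v‖ ^ 2 := by positivity
    linarith

open FourierTransform in
lemma aux_heat {d : ℕ} {T : ℝ} (hT : 0 < T) (u₀ : EuclideanSpace ℝ (Fin d) → ℝ)
    (hf : MemLp (fun x => (u₀ x : ℂ)) 2 volume) (x : EuclideanSpace ℝ (Fin d)) :
    ((heatSol d u₀ T x : ℝ) : ℂ) = 𝓕⁻ (auxg d T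
      (𝓕 (hf.toLp _) : Lp ℂ 2 (volume : Measure (EuclideanSpace ℝ (Fin d))))) x := by
  have hpi := Real.pi_pos
  set u := hf.toLp _ with hu
  set b : ℝ := 4 * Real.pi ^ 2 * T with hbdef
  have hb : 0 < b := by positivity
  set G : EuclideanSpace ℝ (Fin d) → ℂ := fun v =>
    Complex.exp (-(b : ℂ) * ‖v‖ ^ 2 + 2 * Real.pi * Complex.I * (inner ℝ (-x) v : ℝ)) with hG
  have G1 : Integrable G :=
    GaussianFourier.integrable_cexp_neg_mul_sq_norm_add_of_euclideanSpace (by simpa using hb) _ _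
  have Gn : ∀ v, ‖G v‖ = Real.exp (-b * ‖v‖ ^ 2) := fun v => by
    rw [hG, Complex.norm_exp]
    congr 1
    simp [← Complex.ofReal_pow]
  have G2 : MemLp G 2 volume := by
    refine (aux_gauss_L2 hb).of_le G1.1 (Eventually.of_forall fun v => ?_)
    rw [Gn]; exact le_abs_self _
  have e1 : ∀ y, 𝓕⁻ G y = (((4 * Real.pi * T) ^ (-(d : ℝ) / 2) *
      Real.exp (-‖x - y‖ ^ 2 / (4 * T)) : ℝ) : ℂ) := fun y => by
    rw [Real.fourierInv_eq_fourier_neg, hG,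
      fourier_gaussian_innerProductSpace' (by simpa using hb)]
    push_cast
    congr 1
    · have : (Real.pi : ℂ) / b = (((4 * Real.pi * T)⁻¹ : ℝ) : ℂ) := by
        rw [hbdef]
        have hp : (Real.pi : ℂ) ≠ 0 := by exact_mod_cast hpi.ne'
        have hT' : (T : ℂ) ≠ 0 := by exact_mod_cast hT.ne'
        push_cast
        field_simp
      rw [this]
      rw [show -(d : ℝ) / 2 = -((d : ℝ) / 2) by ring, Real.rpow_neg (by positivity),
        ← Real.inv_rpow (by positivity), Complex.ofReal_cpow (by positivity)]
      simp
    · congr 1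
      have : ‖-x - -y‖ = ‖x - y‖ := by rw [← norm_neg]; congr 1; abel
      rw [this, hbdef]
      have hp : (Real.pi : ℂ) ≠ 0 := by exact_mod_cast hpi.ne'
      have hT' : (T : ℂ) ≠ 0 := by exact_mod_cast hT.ne'
      push_cast
      field_simp
  have e2 : inner ℂ (𝓕⁻ (G2.toLp G) : Lp ℂ 2 (volume : Measure (EuclideanSpace ℝ (Fin d)))) u
      = inner ℂ (G2.toLp G) (𝓕 u) := by
    rw [← Lp.inner_fourier_eq, fourier_fourierInv_eq]
  rw [L2.inner_def, L2.inner_def] at e2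
  have e3 : ((heatSol d u₀ T x : ℝ) : ℂ) = ∫ a, inner ℂ ((𝓕⁻ (G2.toLp G) :
      Lp ℂ 2 (volume : Measure (EuclideanSpace ℝ (Fin d)))) a) (u a) := by
    unfold heatSol
    rw [← integral_const_mul, ← integral_complex_ofReal]
    apply integral_congr_ae
    filter_upwards [aux_fourierInv_ae G G1 G2, hf.coeFn_toLp] with y h1 h2
    rw [h1, hu, h2, e1, RCLike.inner_apply, Complex.conj_ofReal]
    push_cast
    ring
  rw [e3, e2, Real.fourierInv_eq']
  apply integral_congr_ae
  filter_upwards [G2.coeFn_toLp] with v hv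
  rw [hv, RCLike.inner_apply, hG, auxg, ← Complex.exp_conj, smul_eq_mul, mul_comm, ← mul_assoc]
  congr 1
  rw [Complex.ofReal_exp, ← Complex.exp_add]
  congr 1
  have c2 : (starRingEnd ℂ) 2 = 2 := map_ofNat _ 2
  have c4 : (starRingEnd ℂ) 4 = 4 := map_ofNat _ 4
  simp [real_inner_comm, hbdef, c2, c4]
  ring

/-- The Fourier-side version of `fN`. -/
def auxk (d : ℕ) (N : ℝ) (n : Fin d → ℤ) : EuclideanSpace ℝ (Fin d) → ℂ :=
  (Qcube d (N / 2)).indicator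
    (fun v => ∏ j, ((N : ℂ)⁻¹ * Complex.exp (-(2 * Real.pi * Complex.I * n j * v j / N))))

lemma aux_Q_preimage (d : ℕ) (r : ℝ) : Qcube d r =
    WithLp.ofLp ⁻¹' (Set.pi Set.univ (fun _ : Fin d => Set.Icc (-r) r)) := by
  ext v
  simp [Qcube, abs_le, Pi.le_def, forall_and]

lemma aux_Q_meas (d : ℕ) (r : ℝ) : MeasurableSet (Qcube d r) := by
  rw [aux_Q_preimage]
  exact (PiLp.volume_preserving_ofLp (Fin d)).measurable
    (MeasurableSet.univ_pi fun _ => measurableSet_Icc)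

lemma aux_Q_fin (d : ℕ) (r : ℝ) : volume (Qcube d r) < ∞ := by
  rw [aux_Q_preimage, (PiLp.volume_preserving_ofLp (Fin d)).measure_preimage
    (MeasurableSet.univ_pi fun _ => measurableSet_Icc).nullMeasurableSet]
  exact (isCompact_univ_pi fun _ => isCompact_Icc).measure_lt_top

lemma auxk_memLp (d : ℕ) (N : ℝ) (n : Fin d → ℤ) (p : ℝ≥0∞) :
    MemLp (auxk d N n) p volume := by
  unfold auxk
  rw [memLp_indicator_iff_restrict (aux_Q_meas _ _)]
  haveI : IsFiniteMeasure ((volume : Measure (EuclideanSpace ℝ (Fin d))).restrict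
    (Qcube d (N / 2))) := ⟨by simpa using aux_Q_fin d (N / 2)⟩
  refine MemLp.of_bound (Continuous.aestronglyMeasurable (by fun_prop)) (∏ _j : Fin d, ‖(N : ℂ)⁻¹‖)
    (Eventually.of_forall fun v => ?_)
  rw [norm_prod]
  refine Finset.prod_le_prod (fun _ _ => norm_nonneg _) fun j _ => ?_
  rw [norm_mul]
  have : -(2 * Real.pi * Complex.I * n j * v j / N : ℂ)
      = ((-(2 * Real.pi * n j * v j / N) : ℝ) : ℂ) * Complex.I := by push_cast; ring
  rw [this, Complex.norm_exp_ofReal_mul_I, mul_one]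

lemma aux_sinc1 {N : ℝ} (hN : 0 < N) (m : ℤ) (y : ℝ) :
    ∫ s : ℝ, Complex.exp (2 * Real.pi * s * y * Complex.I) *
      (Set.Icc (-(N / 2)) (N / 2)).indicator
        (fun s : ℝ => (N : ℂ)⁻¹ * Complex.exp (-(2 * Real.pi * Complex.I * m * s / N))) s
      = ((sinc' (Real.pi * (N * y - m)) : ℝ) : ℂ) := by
  have hNc : (N : ℂ) ≠ 0 := by exact_mod_cast hN.ne'
  have hp : (Real.pi : ℂ) ≠ 0 := by exact_mod_cast Real.pi_ne_zero
  set θ : ℝ := Real.pi * (N * y - m) with hθ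
  have e1 : ∀ s : ℝ, Complex.exp (2 * Real.pi * s * y * Complex.I) *
      (Set.Icc (-(N / 2)) (N / 2)).indicator
        (fun s : ℝ => (N : ℂ)⁻¹ * Complex.exp (-(2 * Real.pi * Complex.I * m * s / N))) s
      = (Set.Icc (-(N / 2)) (N / 2)).indicator
        (fun s : ℝ => (N : ℂ)⁻¹ * Complex.exp ((2 * θ * Complex.I / N) * s)) s := fun s => by
    by_cases hs : s ∈ Set.Icc (-(N / 2)) (N / 2)
    · rw [Set.indicator_of_mem hs, Set.indicator_of_mem hs, mul_left_comm, ← Complex.exp_add]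
      congr 2
      rw [hθ]
      push_cast
      field_simp
      ring
    · simp [Set.indicator_of_notMem hs]
  simp_rw [e1]
  rw [integral_indicator measurableSet_Icc, integral_Icc_eq_integral_Ioc,
    ← intervalIntegral.integral_of_le (by linarith), intervalIntegral.integral_const_mul]
  unfold sinc'
  split_ifs with h0
  · rw [h0]
    simp
    field_simp
  · have hθc : (θ : ℂ) ≠ 0 := by exact_mod_cast h0
    have hc : (2 * θ * Complex.I / N : ℂ) ≠ 0 :=
      div_ne_zero (mul_ne_zero (mul_ne_zero two_ne_zero hθc) Complex.I_ne_zero) hNc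
    rw [integral_exp_mul_complex hc]
    have a1 : (2 * θ * Complex.I / N : ℂ) * ((N / 2 : ℝ) : ℂ) = θ * Complex.I := by
      push_cast; field_simp
    have a2 : (2 * θ * Complex.I / N : ℂ) * ((-(N / 2) : ℝ) : ℂ) = -θ * Complex.I := by
      push_cast; field_simp
    rw [a1, a2]
    push_cast
    rw [Complex.sin]
    have hI := Complex.I_ne_zero
    field_simp
    rw [Complex.I_sq]
    ring

open FourierTransform in
lemma aux_fN {d : ℕ} {N : ℝ} (hN : 0 < N) (n : Fin d → ℤ) (x : EuclideanSpace ℝ (Fin d)) :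
    𝓕⁻ (auxk d N n) x = ((fN d N n x : ℝ) : ℂ) := by
  rw [Real.fourierInv_eq', ← (PiLp.volume_preserving_toLp (Fin d)).integral_comp
    (MeasurableEquiv.toLp 2 _).measurableEmbedding]
  unfold fN
  rw [Complex.ofReal_prod]
  simp_rw [← aux_sinc1 hN]
  rw [← integral_fintype_prod_volume_eq_prod]
  congr 1
  ext v
  rw [Finset.prod_mul_distrib, ← Complex.exp_sum, smul_eq_mul]
  congr 1
  · congr 1
    rw [PiLp.inner_apply]
    push_cast
    rw [Finset.mul_sum, Finset.sum_mul]
    refine Finset.sum_congr rfl fun j _ => ?_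
    simp
    ring
  · unfold auxk
    by_cases hv : ∀ j, v j ∈ Set.Icc (-(N / 2)) (N / 2)
    · rw [Set.indicator_of_mem (by simpa [Qcube, abs_le] using hv)]
      refine Finset.prod_congr rfl fun j _ => ?_
      rw [Set.indicator_of_mem (hv j)]
    · rw [Set.indicator_of_notMem (by simpa [Qcube, abs_le] using hv)]
      push Not at hv
      obtain ⟨j, hj⟩ := hv
      exact (Finset.prod_eq_zero (Finset.mem_univ j) (Set.indicator_of_notMem hj _)).symm

section torus

/-- The Haar probability measure on the unit circle. -/
@[reducible] def auxCircleMeasureSpace : MeasureSpace UnitAddCircle := ⟨AddCircle.haarAddCircle⟩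

attribute [local instance] auxCircleMeasureSpace

local instance auxCircleProb : IsProbabilityMeasure (volume : Measure UnitAddCircle) :=
  inferInstanceAs (IsProbabilityMeasure AddCircle.haarAddCircle)

open UnitAddTorus

lemma aux_torus {d : ℕ} {N : ℝ} (hN : 0 < N) :
    ∃ Φ : UnitAddTorus (Fin d) → EuclideanSpace ℝ (Fin d), Measurable Φ ∧
      Measure.map Φ volume = ENNReal.ofReal (N ^ d)⁻¹ • volume.restrict (Qcube d (N / 2)) ∧
      (∀ t, Φ t ∈ Qcube d (N / 2)) ∧
      ∀ t (n : Fin d → ℤ), mFourier (-n) t =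
        ∏ j, Complex.exp (-(2 * Real.pi * Complex.I * n j * Φ t j / N)) := by
  set S : Set (Fin d → ℝ) := {x | ∀ i, x i ∈ Set.Ioc (-(1/2) : ℝ) (-(1/2) + 1)} with hS
  have hSm : MeasurableSet S := MeasurableSet.univ_pi' (fun i => measurableSet_Ioc)
  set S' : Set (EuclideanSpace ℝ (Fin d)) :=
    {x | ∀ i, x i ∈ Set.Ioc (-(1/2) : ℝ) (-(1/2) + 1)} with hS'
  have hSm' : MeasurableSet S' := (PiLp.volume_preserving_ofLp (Fin d)).measurable hSm
  set C : Set (EuclideanSpace ℝ (Fin d)) :=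
    {x | ∀ i, x i ∈ Set.Ioc (-(N/2) : ℝ) (N/2)} with hC
  have hCm : MeasurableSet C := (PiLp.volume_preserving_ofLp (Fin d)).measurable
    (MeasurableSet.univ_pi' (fun i => measurableSet_Ioc) :
      MeasurableSet {x : Fin d → ℝ | ∀ i, x i ∈ Set.Ioc (-(N/2) : ℝ) (N/2)})
  have hCQ : C =ᵐ[volume] Qcube d (N / 2) := by
    have hCe : C = WithLp.ofLp ⁻¹' (Set.pi Set.univ fun _ : Fin d => Set.Ioc (-(N/2)) (N/2)) := by
      ext v; simp [hC]
    rw [aux_Q_preimage, hCe]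
    have h := Measure.univ_pi_Ioc_ae_eq_Icc (μ := fun _ : Fin d => (volume : Measure ℝ))
      (f := fun _ => -(N/2)) (g := fun _ => N/2)
    rw [← Set.pi_univ_Icc] at h
    have h2 := (PiLp.volume_preserving_ofLp (Fin d)).quasiMeasurePreserving.preimage_ae_eq h
    exact h2
  have m1 : MeasurePreserving (fun t : UnitAddTorus (Fin d) =>
      ((measurableEquivPiIoc (fun _ => (-(1/2) : ℝ)) t : _) : Fin d → ℝ)) volume
      (volume.restrict S) :=
    (measurePreserving_subtype_coe hSm).comp (measurePreserving_equivPiIoc _)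
  have m2 : MeasurePreserving (WithLp.toLp 2 : (Fin d → ℝ) → EuclideanSpace ℝ (Fin d))
      (volume.restrict S) (volume.restrict S') :=
    (PiLp.volume_preserving_toLp (Fin d)).restrict_preimage hSm'
  have m3 := m2.comp m1
  have hpre : (fun x : EuclideanSpace ℝ (Fin d) => N • x) ⁻¹' C = S' := by
    ext v
    simp only [hC, hS', Set.mem_preimage, Set.mem_ofPred_eq, Set.mem_Ioc, PiLp.smul_apply,
      smul_eq_mul]
    refine forall_congr' fun i => ?_
    constructor <;> rintro ⟨h1, h2⟩ <;> constructor <;> nlinarith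
  have hm4 : Measure.map (fun x : EuclideanSpace ℝ (Fin d) => N • x) (volume.restrict S') =
      ENNReal.ofReal (N ^ d)⁻¹ • volume.restrict (Qcube d (N / 2)) := by
    rw [← hpre, ← Measure.restrict_map (measurable_const_smul N) hCm,
      Measure.map_addHaar_smul volume hN.ne', Measure.restrict_smul,
      Measure.restrict_congr_set hCQ]
    simp [abs_of_pos hN]
  refine ⟨fun t => N • WithLp.toLp 2
    ((measurableEquivPiIoc (fun _ => (-(1/2) : ℝ)) t : _) : Fin d → ℝ), ?_, ?_, ?_, ?_⟩
  · exact (measurable_const_smul N).comp m3.measurable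
  · rw [← hm4, ← m3.map_eq, Measure.map_map (measurable_const_smul N) m3.measurable]
    rfl
  · intro t j
    have := (measurableEquivPiIoc (fun _ => (-(1/2) : ℝ)) t).2 j
    obtain ⟨h1, h2⟩ := this
    simp only [PiLp.smul_apply, smul_eq_mul]
    rw [abs_le]
    constructor <;> nlinarith
  · intro t n
    have ht : ∀ j, t j = (((measurableEquivPiIoc (fun _ => (-(1/2) : ℝ)) t).1 j : ℝ) :
        UnitAddCircle) := fun j => by
      have := congrFun ((measurableEquivPiIoc (fun _ => (-(1/2) : ℝ))).symm_apply_apply t) j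
      exact this.symm
    change ∏ j, fourier ((-n) j) (t j) = _
    refine Finset.prod_congr rfl fun j _ => ?_
    rw [ht j]
    rw [fourier_coe_apply]
    congr 1
    have hNc : (N : ℂ) ≠ 0 := by exact_mod_cast hN.ne'
    simp only [PiLp.smul_apply, smul_eq_mul, Pi.neg_apply]
    push_cast
    field_simp

open FourierTransform in
lemma aux_series {d : ℕ} {N : ℝ} (hN : 0 < N) (g : EuclideanSpace ℝ (Fin d) → ℂ)
    (g2 : MemLp g 2 volume) (hg : ∀ᵐ v, v ∉ Qcube d (N / 2) → g v = 0) :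
    Tendsto (fun s : Finset (Fin d → ℤ) =>
      eLpNorm (fun v => g v - ∑ n ∈ s, 𝓕⁻ g (latticePt d N n) * auxk d N n v) 2 volume)
      atTop (𝓝 0) := by
  obtain ⟨Φ, hΦm, hΦ, hΦQ, hΦe⟩ := aux_torus (d := d) hN
  set K : ℝ≥0∞ := ENNReal.ofReal (N ^ d)⁻¹ with hK
  have hK0 : K ≠ 0 := by
    rw [hK]; simpa using by positivity
  have hKt : K ≠ ∞ := ENNReal.ofReal_ne_top
  set Q := Qcube d (N / 2) with hQ
  have hQm : MeasurableSet Q := aux_Q_meas _ _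
  have hae : ∀ F : EuclideanSpace ℝ (Fin d) → ℂ, AEStronglyMeasurable F volume →
      AEStronglyMeasurable F (Measure.map Φ volume) := fun F hF => by
    rw [hΦ]; exact hF.restrict.smul_measure _
  have hnorm : ∀ F : EuclideanSpace ℝ (Fin d) → ℂ, AEStronglyMeasurable F volume →
      eLpNorm (fun t => F (Φ t)) 2 volume =
        K ^ (1 / (2 : ℝ≥0∞)).toReal * eLpNorm F 2 (volume.restrict Q) := fun F hF => by
    have e := eLpNorm_map_measure (p := 2) (hae F hF) hΦm.aemeasurable
    rw [hΦ, eLpNorm_smul_measure_of_ne_top (by simp)] at e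
    exact e.symm
  have G2 : MemLp (fun t => g (Φ t)) 2 volume := by
    refine ⟨(hae g g2.1).comp_measurable hΦm, ?_⟩
    rw [hnorm g g2.1]
    refine ENNReal.mul_lt_top ?_ (g2.restrict Q).2
    exact ENNReal.rpow_lt_top_of_nonneg (by simp) hKt
  set G := G2.toLp _ with hG
  have hcoef : ∀ n, mFourierCoeff G (-n) = ((N : ℂ) ^ d)⁻¹ * 𝓕⁻ g (latticePt d N n) := fun n => by
    unfold mFourierCoeff
    let F : EuclideanSpace ℝ (Fin d) → ℂ := fun v =>
      (∏ j, Complex.exp (-(2 * Real.pi * Complex.I * (-n) j * v j / N))) * g v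
    have e1 : ∫ t, mFourier (-(-n)) t • G t = ∫ t, F (Φ t) := by
      apply integral_congr_ae
      filter_upwards [G2.coeFn_toLp] with t ht
      rw [hG, ht, hΦe]
      simp [F]
    have hFm : AEStronglyMeasurable F volume :=
      (Continuous.aestronglyMeasurable (by fun_prop)).mul g2.1
    have e1b : ∫ t, F (Φ t) = ∫ v, F v ∂(Measure.map Φ volume) :=
      (integral_map hΦm.aemeasurable (hae F hFm)).symm
    rw [e1, e1b, hΦ, integral_smul_measure]
    · rw [hK, ENNReal.toReal_ofReal (by positivity), Complex.real_smul]
      push_cast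
      congr 1
      rw [setIntegral_eq_integral_of_ae_compl_eq_zero, Real.fourierInv_eq']
      · congr 1
        ext v
        simp only [F]
        rw [smul_eq_mul, ← Complex.exp_sum]
        congr 2
        rw [PiLp.inner_apply]
        push_cast
        rw [Finset.mul_sum, Finset.sum_mul]
        refine Finset.sum_congr rfl fun j _ => ?_
        simp [latticePt]
        ring
      · filter_upwards [hg] with v hv hvQ
        simp only [F]
        rw [hv hvQ, mul_zero]
  have hsum := hasSum_mFourier_series_L2 G
  rw [← (Equiv.neg (Fin d → ℤ)).hasSum_iff] at hsum
  have hlim : Tendsto (fun s : Finset (Fin d → ℤ) => ‖G - ∑ n ∈ s,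
      mFourierCoeff G (-n) • mFourierLp 2 (-n)‖ₑ) atTop (𝓝 0) := by
    have h1 : Tendsto (fun s : Finset (Fin d → ℤ) => G - ∑ n ∈ s,
      mFourierCoeff G (-n) • mFourierLp 2 (-n)) atTop (𝓝 (G - G)) :=
      tendsto_const_nhds.sub hsum
    have := h1.enorm
    simpa using this
  have hkm : ∀ s : Finset (Fin d → ℤ), AEStronglyMeasurable
      (fun v => g v - ∑ n ∈ s, 𝓕⁻ g (latticePt d N n) * auxk d N n v) volume := fun s =>
    g2.1.sub (Finset.aestronglyMeasurable_fun_sum s fun n _ =>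
      (auxk_memLp d N n 2).1.const_mul _)
  have hK' : K ^ (1 / (2 : ℝ≥0∞)).toReal ≠ 0 := by
    simp [ENNReal.rpow_eq_zero_iff, hK0, hKt]
  have hK'' : K ^ (1 / (2 : ℝ≥0∞)).toReal ≠ ∞ := ENNReal.rpow_ne_top_of_nonneg (by simp) hKt
  have heq : ∀ s : Finset (Fin d → ℤ), ‖G - ∑ n ∈ s, mFourierCoeff G (-n) • mFourierLp 2 (-n)‖ₑ
      = K ^ (1 / (2 : ℝ≥0∞)).toReal * eLpNorm
        (fun v => g v - ∑ n ∈ s, 𝓕⁻ g (latticePt d N n) * auxk d N n v) 2 volume := fun s => by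
    have i1 : eLpNorm (fun v => g v - ∑ n ∈ s, 𝓕⁻ g (latticePt d N n) * auxk d N n v) 2 volume
        = eLpNorm (fun v => g v - ∑ n ∈ s, 𝓕⁻ g (latticePt d N n) * auxk d N n v) 2
          (volume.restrict Q) := by
      rw [← eLpNorm_indicator_eq_eLpNorm_restrict hQm]
      apply eLpNorm_congr_ae
      filter_upwards [hg] with v hv
      by_cases hvQ : v ∈ Q
      · rw [Set.indicator_of_mem hvQ]
      · rw [Set.indicator_of_notMem hvQ, hv hvQ]
        simp [auxk, Set.indicator_of_notMem hvQ, ← hQ]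
    rw [i1, ← hnorm _ (hkm s), Lp.enorm_def]
    apply eLpNorm_congr_ae
    have i2 : ∀ n : Fin d → ℤ, (mFourierCoeff G (-n) • mFourierLp 2 (-n) :
        Lp ℂ 2 (volume : Measure (UnitAddTorus (Fin d)))) =ᵐ[volume]
        fun t => 𝓕⁻ g (latticePt d N n) * auxk d N n (Φ t) := fun n => by
      filter_upwards [Lp.coeFn_smul (mFourierCoeff G (-n)) (mFourierLp 2 (-n)),
        coeFn_mFourierLp 2 (-n)] with t h1 h2
      rw [h1, Pi.smul_apply, h2, hcoef, hΦe, auxk, Set.indicator_of_mem (hΦQ t),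
        Finset.prod_mul_distrib]
      simp
      ring
    have i3 : ((∑ n ∈ s, mFourierCoeff G (-n) • mFourierLp 2 (-n) :
        Lp ℂ 2 (volume : Measure (UnitAddTorus (Fin d)))) : UnitAddTorus (Fin d) → ℂ) =ᵐ[volume]
        fun t => ∑ n ∈ s, 𝓕⁻ g (latticePt d N n) * auxk d N n (Φ t) := by
      have j1 := Lp.coeFn_finsetSum s (fun n => (mFourierCoeff G (-n) • mFourierLp 2 (-n) :
        Lp ℂ 2 (volume : Measure (UnitAddTorus (Fin d)))))
      have j2 := (ae_ball_iff s.countable_toSet).2 (fun n (_ : n ∈ (s : Set (Fin d → ℤ))) => i2 n)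
      filter_upwards [j1, j2] with t h1 h2
      rw [h1, Finset.sum_apply]
      exact Finset.sum_congr rfl fun n hn => h2 n hn
    filter_upwards [Lp.coeFn_sub G (∑ n ∈ s, mFourierCoeff G (-n) • mFourierLp 2 (-n)), i3,
      G2.coeFn_toLp] with t h1 h2 h3
    rw [h1, Pi.sub_apply, h2, hG, h3]
  simp_rw [heq] at hlim
  have := ENNReal.Tendsto.const_mul (a := (K ^ (1 / (2 : ℝ≥0∞)).toReal)⁻¹) hlim
    (Or.inr (ENNReal.inv_ne_top.2 hK'))
  rw [mul_zero] at this
  refine this.congr fun s => ?_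
  rw [← mul_assoc, ENNReal.inv_mul_cancel hK' hK'', one_mul]

end torus
/-- For `u₀ ∈ L²(ℝ^d)`, `T > 0`, `N > 0`, the family `(u(T, n/N) f_{N,n})_{n ∈ ℤ^d}` is
summable in `L²(ℝ^d)` with sum `u(T,·)` if and only if `u₀ ∈ 𝒫_N`, i.e. the (Plancherel)
Fourier transform of `u₀` is supported in `Q_{πN}(0)`. -/
theorem statement3 (d : ℕ) (hd : 0 < d)
    (u₀ : EuclideanSpace ℝ (Fin d) → ℝ) (hmem : MemLp u₀ 2 volume)
    (T N : ℝ) (hT : 0 < T) (hN : 0 < N)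
    (u₀hat : EuclideanSpace ℝ (Fin d) → ℂ)
    (hFT : IsL2Fourier d (fun x => (u₀ x : ℂ)) u₀hat) :
    HasSumL2 d (fun n x => heatSol d u₀ T (latticePt d N n) * fN d N n x)
        (fun x => heatSol d u₀ T x)
      ↔ (∀ᵐ ξ ∂(volume : Measure (EuclideanSpace ℝ (Fin d))),
          ξ ∉ Qcube d (Real.pi * N) → u₀hat ξ = 0) := by
  have hf : MemLp (fun x => (u₀ x : ℂ)) 2 volume := hmem.ofReal
  rw [aux_supp _ _ hf hFT N]
  set w : Lp ℂ 2 (volume : Measure (EuclideanSpace ℝ (Fin d))) :=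
    FourierTransform.fourier (hf.toLp _) with hw
  set g := auxg d T w with hg
  have g1 : Integrable g := auxg_int hT _ (Lp.memLp w)
  have g2 : MemLp g 2 volume := auxg_L2 hT _ (Lp.memLp w)
  have hgw : ∀ v, g v = 0 ↔ w v = 0 := fun v => by
    rw [hg, auxg, mul_eq_zero, or_iff_right]
    exact_mod_cast (Real.exp_pos _).ne'
  have hk1 : ∀ n, Integrable (auxk d N n) := fun n => memLp_one_iff_integrable.1 (auxk_memLp d N n 1)
  have hheat : ∀ x, ((heatSol d u₀ T x : ℝ) : ℂ) = FourierTransformInv.fourierInv g x :=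
    aux_heat hT u₀ hf
  have key : ∀ s : Finset (Fin d → ℤ), eLpNorm (fun x => heatSol d u₀ T x -
      ∑ n ∈ s, heatSol d u₀ T (latticePt d N n) * fN d N n x) 2 volume =
      eLpNorm (fun v => g v - ∑ n ∈ s, FourierTransformInv.fourierInv g (latticePt d N n) *
        auxk d N n v) 2 volume := fun s => by
    have hs1 : Integrable (fun v => ∑ n ∈ s,
        FourierTransformInv.fourierInv g (latticePt d N n) * auxk d N n v) :=
      integrable_finsetSum s fun n _ => (hk1 n).const_mul _
    rw [← aux_plancherel_inv (fun v => g v - ∑ n ∈ s,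
      FourierTransformInv.fourierInv g (latticePt d N n) * auxk d N n v) (g1.sub hs1)
      (g2.sub (memLp_finsetSum s fun n _ => (auxk_memLp d N n 2).const_mul _))]
    apply eLpNorm_congr_norm_ae
    refine Eventually.of_forall fun x => ?_
    have hI : ∀ h : EuclideanSpace ℝ (Fin d) → ℂ, Integrable h →
        Integrable (fun v => Real.fourierChar (inner ℝ v x) • h v) := fun h hh => by
      have := (Real.fourierIntegral_convergent_iff (-x)).2 hh
      simpa using this
    have e : FourierTransformInv.fourierInv (fun v => g v - ∑ n ∈ s,
        FourierTransformInv.fourierInv g (latticePt d N n) * auxk d N n v) x =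
        ((heatSol d u₀ T x -
          ∑ n ∈ s, heatSol d u₀ T (latticePt d N n) * fN d N n x : ℝ) : ℂ) := by
      push_cast
      simp_rw [hheat, ← aux_fN hN]
      rw [Real.fourierInv_eq]
      simp_rw [smul_sub]
      rw [integral_sub (hI _ g1) (hI _ hs1), Real.fourierInv_eq g x]
      congr 1
      simp_rw [Finset.smul_sum]
      rw [integral_finsetSum s fun n _ => hI _ ((hk1 n).const_mul _)]
      refine Finset.sum_congr rfl fun n _ => ?_
      rw [Real.fourierInv_eq (auxk d N n) x, ← integral_const_mul]
      congr 1
      ext v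
      rw [mul_smul_comm]
    exact (congrArg norm e |>.trans (Complex.norm_real _)).symm
  have hiff : (∀ᵐ v, v ∉ Qcube d (N / 2) → w v = 0) ↔
      ∀ᵐ v, v ∉ Qcube d (N / 2) → g v = 0 := by simp_rw [hgw]
  rw [hiff]
  unfold HasSumL2
  simp_rw [key]
  constructor
  · intro h
    have hb : ∀ s : Finset (Fin d → ℤ), eLpNorm ((Qcube d (N / 2))ᶜ.indicator g) 2 volume ≤
        eLpNorm (fun v => g v - ∑ n ∈ s, FourierTransformInv.fourierInv g (latticePt d N n) *
        auxk d N n v) 2 volume := fun s => by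
      refine eLpNorm_mono fun v => ?_
      by_cases hv : v ∈ Qcube d (N / 2)
      · rw [Set.indicator_of_notMem (by simpa using hv)]
        simp
      · rw [Set.indicator_of_mem (by simpa using hv)]
        simp [auxk, Set.indicator_of_notMem hv]
    have h0 : eLpNorm ((Qcube d (N / 2))ᶜ.indicator g) 2 volume = 0 :=
      le_antisymm (ge_of_tendsto' h hb) bot_le
    rw [eLpNorm_eq_zero_iff (g2.1.indicator (aux_Q_meas _ _).compl) (by norm_num)] at h0
    filter_upwards [h0] with v hv hvQ
    rwa [Set.indicator_of_mem (by simpa using hvQ)] at hv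
  · intro h
    exact aux_series hN g g2 h
end
end

section
/- There is a constant C = C(d) > 0, depending only on the dimension d, with the following property: for every u₀ ∈ L²(ℝ^d), every T > 0, N > 0, ε ∈ (0,1), and every family (λ_n)_{n∈ℤ^d} ⊂ ℝ^d satisfying |λ_n − n/N| ≤ ε/N for all n ∈ ℤ^d, there exists R̃ ∈ L²(ℝ^d) with ‖R̃‖ ≤ C (ε + (1 + (TN²)^{-1/2}) (TN²)^{-d/4} e^{-TN²}) ‖u₀‖ such that the family (u(T, λ_n)·f_{N,n})_{n∈ℤ^d} is summable in L²(ℝ^d) and u(T,·) = Σ_{n∈ℤ^d} u(T, λ_n) f_{N,n} + R̃ in L²(ℝ^d), where u is the heat solution with initial datum u₀. -/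
open MeasureTheory Filter Topology Metric ENNReal NNReal

noncomputable section

open scoped FourierTransform SchwartzMap ContDiff in
theorem lp_fourier_ae {d : ℕ} (f : Lp (α := EuclideanSpace ℝ (Fin d)) ℂ 2)
    (hf : Integrable f volume) :
    (𝓕 f : Lp (α := EuclideanSpace ℝ (Fin d)) ℂ 2) =ᵐ[volume] 𝓕 (f : EuclideanSpace ℝ (Fin d) → ℂ) := by
  have hc : Continuous (𝓕 (f : EuclideanSpace ℝ (Fin d) → ℂ)) :=
    VectorFourier.fourierIntegral_continuous Real.continuous_fourierChar
      (by exact continuous_inner) hf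
  refine ae_eq_of_integral_contDiff_smul_eq ?_ hc.locallyIntegrable ?_
  · exact (Lp.memLp _).locallyIntegrable (by norm_num)
  intro g hg hgc
  have h1 : HasCompactSupport (fun x => (g x : ℂ)) := hgc.comp_left (g := Complex.ofReal) (by simp)
  have h2 : ContDiff ℝ ∞ (fun x => (g x : ℂ)) := Complex.ofRealCLM.contDiff.comp hg
  set ψ : 𝓢(EuclideanSpace ℝ (Fin d), ℂ) := h1.toSchwartzMap h2 with hψ
  have h3 := congrArg (fun D => D ψ) (Lp.fourier_toTemperedDistribution_eq f)
  simp only [TemperedDistribution.fourier_apply, Lp.toTemperedDistribution_apply] at h3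
  have h4 := VectorFourier.integral_fourierIntegral_smul_eq_flip (μ := volume) (ν := volume)
    (L := innerₗ (EuclideanSpace ℝ (Fin d))) (f := ψ) (g := f)
    Real.continuous_fourierChar (by exact continuous_inner) ψ.integrable hf
  have h5 : ∀ x, ψ x = (g x : ℂ) := fun x => rfl
  simp only [h5] at h3
  simp only [Complex.real_smul] 
  simp only [smul_eq_mul] at h3 h4
  rw [← h3]
  refine Eq.trans (b := ∫ ξ, VectorFourier.fourierIntegral Real.fourierChar volume (innerₗ (EuclideanSpace ℝ (Fin d))) (⇑ψ) ξ * f ξ) ?_ ?_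
  · rfl
  · rw [h4, flip_innerₗ]; rfl

def Qc (d : ℕ) : Set (EuclideanSpace ℝ (Fin d)) := {ξ | ∀ j, ξ j ∈ Set.Ioc (-1/2 : ℝ) (-1/2 + 1)}

def chE (d : ℕ) (x ξ : EuclideanSpace ℝ (Fin d)) : ℂ :=
  Complex.exp (2 * Real.pi * Complex.I * (inner ℝ x ξ : ℝ))

def ptE (d : ℕ) (n : Fin d → ℤ) : EuclideanSpace ℝ (Fin d) := WithLp.toLp 2 (fun j => (n j : ℝ))

section torus
local instance : MeasureSpace UnitAddCircle := ⟨AddCircle.haarAddCircle⟩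
local instance : Measure.IsAddHaarMeasure (volume : Measure UnitAddCircle) :=
  inferInstanceAs (Measure.IsAddHaarMeasure AddCircle.haarAddCircle)
local instance : IsProbabilityMeasure (volume : Measure UnitAddCircle) :=
  inferInstanceAs (IsProbabilityMeasure AddCircle.haarAddCircle)

def qT (d : ℕ) (ξ : EuclideanSpace ℝ (Fin d)) : UnitAddTorus (Fin d) := fun j => (ξ j : UnitAddCircle)

lemma measurableSet_Qc (d : ℕ) : MeasurableSet (Qc d) := by
  have : Qc d = ⋂ j, (fun ξ : EuclideanSpace ℝ (Fin d) => ξ j) ⁻¹' Set.Ioc (-1/2 : ℝ) (-1/2 + 1) := by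
    ext; simp [Qc]
  rw [this]
  refine MeasurableSet.iInter fun j => measurableSet_Ioc.preimage (by fun_prop)

lemma mp_qT (d : ℕ) : MeasurePreserving (qT d) (volume.restrict (Qc d)) volume := by
  have h1 : MeasurePreserving (fun (x : Fin d → ℝ) => (fun i => (x i : UnitAddCircle)))
      (volume.restrict (Set.univ.pi fun _ => Set.Ioc (-1/2 : ℝ) (-1/2+1)))
      (volume : Measure (UnitAddTorus (Fin d))) := by
    have := (measurePreserving_pi _ _ (fun i : Fin d => AddCircle.measurePreserving_mk 1 (-1/2)))
    rw [← Measure.restrict_pi_pi] at this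
    convert! this
    simp [volume, AddCircle.haarAddCircle]
  have h2 := (EuclideanSpace.volume_preserving_symm_measurableEquiv_toLp (Fin d)).restrict_preimage
     (s := Set.univ.pi fun _ => Set.Ioc (-1/2 : ℝ) (-1/2+1)) (MeasurableSet.univ_pi fun _ => measurableSet_Ioc)
  have h3 := h1.comp h2
  convert! h3 using 2
  ext; simp [Qc]

def repT (d : ℕ) (t : UnitAddTorus (Fin d)) : EuclideanSpace ℝ (Fin d) :=
  WithLp.toLp 2 (fun j => ((AddCircle.measurableEquivIoc 1 (-1/2 : ℝ) (t j)) : ℝ))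

lemma measurable_repT (d : ℕ) : Measurable (repT d) := by
  unfold repT
  have : Measurable (fun t : UnitAddTorus (Fin d) => (fun j => ((AddCircle.measurableEquivIoc 1 (-1/2 : ℝ) (t j)) : ℝ))) := by
    refine measurable_pi_lambda _ fun j => ?_
    exact measurable_subtype_coe.comp ((AddCircle.measurableEquivIoc 1 (-1/2 : ℝ)).measurable.comp (measurable_pi_apply j))
  exact (MeasurableEquiv.toLp 2 (Fin d → ℝ)).measurable.comp this

lemma repT_qT (d : ℕ) {ξ : EuclideanSpace ℝ (Fin d)} (h : ξ ∈ Qc d) : repT d (qT d ξ) = ξ := by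
  ext j
  simp only [repT, qT]
  have := (AddCircle.measurableEquivIoc 1 (-1/2 : ℝ)).apply_symm_apply ⟨ξ j, h j⟩
  exact congrArg Subtype.val this

abbrev HT (d : ℕ) := Lp ℂ 2 (volume : Measure (UnitAddTorus (Fin d)))
abbrev HE (d : ℕ) := Lp (α := EuclideanSpace ℝ (Fin d)) ℂ 2

lemma eLpNorm_ind (d : ℕ) {φ : UnitAddTorus (Fin d) → ℂ} (h : AEStronglyMeasurable φ volume) :
    eLpNorm ((Qc d).indicator (φ ∘ qT d)) 2 volume = eLpNorm φ 2 volume := by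
  rw [eLpNorm_indicator_eq_eLpNorm_restrict (measurableSet_Qc d),
    eLpNorm_comp_measurePreserving h (mp_qT d)]

lemma memLp_ind (d : ℕ) (φ : HT d) : MemLp ((Qc d).indicator (φ ∘ qT d)) 2 volume := by
  refine ⟨?_, ?_⟩
  · rw [aestronglyMeasurable_indicator_iff (measurableSet_Qc d)]
    exact (Lp.aestronglyMeasurable φ).comp_measurePreserving (mp_qT d)
  · rw [eLpNorm_ind d (Lp.aestronglyMeasurable φ)]; exact Lp.eLpNorm_lt_top φ

lemma ind_congr (d : ℕ) {φ ψ : UnitAddTorus (Fin d) → ℂ} (h : φ =ᵐ[volume] ψ) :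
    (Qc d).indicator (φ ∘ qT d) =ᵐ[volume] (Qc d).indicator (ψ ∘ qT d) := by
  have := (mp_qT d).quasiMeasurePreserving.ae_eq_comp h
  exact (ae_eq_restrict_iff_indicator_ae_eq (measurableSet_Qc d)).1 this

def JT (d : ℕ) : HT d →ₗᵢ[ℂ] HE d where
  toFun φ := (memLp_ind d φ).toLp
  map_add' φ ψ := by
    rw [← MemLp.toLp_add]
    refine (MemLp.toLp_eq_toLp_iff _ _).2 ?_
    refine (ind_congr d (Lp.coeFn_add φ ψ)).trans (Eventually.of_forall fun ξ => ?_)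
    by_cases h : ξ ∈ Qc d <;> simp [h]
  map_smul' c φ := by
    simp only [RingHom.id_apply]
    rw [← MemLp.toLp_const_smul]
    refine (MemLp.toLp_eq_toLp_iff _ _).2 ?_
    refine (ind_congr d (Lp.coeFn_smul c φ)).trans (Eventually.of_forall fun ξ => ?_)
    by_cases h : ξ ∈ Qc d <;> simp [h]
  norm_map' φ := by
    simp only [LinearMap.coe_mk, AddHom.coe_mk, Lp.norm_toLp]
    rw [eLpNorm_ind d (Lp.aestronglyMeasurable φ), Lp.norm_def]

lemma mFourier_qT (d : ℕ) (n : Fin d → ℤ) (ξ : EuclideanSpace ℝ (Fin d)) :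
    UnitAddTorus.mFourier n (qT d ξ) = chE d (ptE d n) ξ := by
  simp only [UnitAddTorus.mFourier, ContinuousMap.coe_mk, qT, chE, ptE, fourier_coe_apply]
  rw [← Complex.exp_sum]
  congr 1
  simp [PiLp.inner_apply, Finset.mul_sum]
  refine Finset.sum_congr rfl fun j _ => by ring

theorem lemA (d : ℕ) : ∃ e : (Fin d → ℤ) → HE d,
    (∀ n, e n =ᵐ[volume] (Qc d).indicator (chE d (ptE d n))) ∧ Orthonormal ℂ e ∧
    ∀ h : HE d, (∀ᵐ ξ, ξ ∉ Qc d → h ξ = 0) → HasSum (fun n => (inner ℂ (e n) h : ℂ) • e n) h := by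
  refine ⟨fun n => JT d (UnitAddTorus.mFourierLp 2 n), fun n => ?_, ?_, fun h hh => ?_⟩
  · refine (MemLp.coeFn_toLp (memLp_ind d _)).trans ((ind_congr d (UnitAddTorus.coeFn_mFourierLp 2 n)).trans ?_)
    refine Eventually.of_forall fun ξ => ?_
    by_cases h : ξ ∈ Qc d <;> simp [h, mFourier_qT]
  · exact UnitAddTorus.orthonormal_mFourier.comp_linearIsometry (JT d)
  · have hm : AEStronglyMeasurable h volume := Lp.aestronglyMeasurable h
    set h' := hm.mk h
    have hsm : StronglyMeasurable h' := hm.stronglyMeasurable_mk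
    have hφm : StronglyMeasurable (h' ∘ repT d) := hsm.comp_measurable (measurable_repT d)
    have hi : (Qc d).indicator ((h' ∘ repT d) ∘ qT d) =ᵐ[volume] h := by
      filter_upwards [hh, hm.ae_eq_mk] with ξ h1 h2
      by_cases hξ : ξ ∈ Qc d
      · simp [hξ, repT_qT, h2, h']
      · simp [hξ, h1 hξ]
    have hφ : MemLp (h' ∘ repT d) 2 (volume : Measure (UnitAddTorus (Fin d))) := by
      refine ⟨hφm.aestronglyMeasurable, ?_⟩
      rw [← eLpNorm_ind d hφm.aestronglyMeasurable, eLpNorm_congr_ae hi]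
      exact Lp.eLpNorm_lt_top h
    have hJ : JT d hφ.toLp = h := by
      refine Lp.ext ((MemLp.coeFn_toLp (memLp_ind d _)).trans ((ind_congr d hφ.coeFn_toLp).trans hi))
    have := ((UnitAddTorus.mFourierBasis (d := Fin d)).hasSum_repr hφ.toLp).mapL (JT d).toContinuousLinearMap
    rw [← hJ]
    simp only [LinearIsometry.inner_map_map]
    simpa [HilbertBasis.repr_apply_apply] using this

lemma volume_Qc (d : ℕ) : volume (Qc d) = 1 := by
  have := (mp_qT d).measure_preimage (s := Set.univ) MeasurableSet.univ.nullMeasurableSet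
  simpa using this
end torus

lemma sinc'_eq (x : ℝ) : sinc' x = Real.sinc x := rfl

lemma int1 (a : ℝ) : ∫ v : ℝ, (Set.Ioc (-1/2 : ℝ) (-1/2 + 1)).indicator
    (fun v => Complex.exp (2 * Real.pi * Complex.I * (a * v))) v = (Real.sinc (Real.pi * a) : ℂ) := by
  rw [integral_indicator measurableSet_Ioc, ← intervalIntegral.integral_of_le (by norm_num)]
  by_cases ha : a = 0
  · simp [ha]
  have h := integral_exp_mul_I_eq_sinc (Real.pi * a)
  have h2 := intervalIntegral.integral_comp_mul_left (a := (-1/2:ℝ)) (b := -1/2+1) (fun t : ℝ => Complex.exp (t * Complex.I)) (c := 2 * Real.pi * a) (by positivity)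
  have e1 : 2 * Real.pi * a * (-1/2) = -(Real.pi * a) := by ring
  have e2 : 2 * Real.pi * a * (-1/2 + 1) = (Real.pi * a) := by ring
  rw [e1, e2, h] at h2
  have : (fun v : ℝ => Complex.exp (2 * Real.pi * Complex.I * (a * v))) = fun v : ℝ => Complex.exp ((2 * Real.pi * a * v : ℝ) * Complex.I) := by
    ext v; congr 1; push_cast; ring
  rw [this, h2, Complex.real_smul]
  push_cast
  have hp : (Real.pi : ℂ) ≠ 0 := by exact_mod_cast Real.pi_ne_zero
  have ha' : (a : ℂ) ≠ 0 := by exact_mod_cast ha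
  field_simp

open scoped FourierTransform in
lemma fourier_ind (d : ℕ) (n : Fin d → ℤ) (x : EuclideanSpace ℝ (Fin d)) :
    𝓕 ((Qc d).indicator (chE d (ptE d n))) x = (fN d 1 n x : ℂ) := by
  rw [Real.fourier_eq']
  have h1 : ∀ v : EuclideanSpace ℝ (Fin d), Complex.exp ((-2 * Real.pi * inner ℝ v x : ℝ) * Complex.I) •
      (Qc d).indicator (chE d (ptE d n)) v = (fun w : Fin d → ℝ => ∏ j, (Set.Ioc (-1/2 : ℝ) (-1/2 + 1)).indicator
    (fun v => Complex.exp (2 * Real.pi * Complex.I * ((n j - x j : ℝ) * v))) (w j)) ((MeasurableEquiv.toLp 2 (Fin d → ℝ)).symm v) := by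
    intro v
    by_cases hv : v ∈ Qc d
    · have : ∀ j, v j ∈ Set.Ioc (-1/2 : ℝ) (-1/2 + 1) := hv
      simp only [Set.indicator_of_mem hv, MeasurableEquiv.coe_toLp_symm, Set.indicator_of_mem (this _)]
      rw [← Complex.exp_sum, chE, smul_eq_mul, ← Complex.exp_add]
      congr 1
      simp [ptE, PiLp.inner_apply, Finset.mul_sum, Finset.sum_mul]
      rw [← Finset.sum_neg_distrib, ← Finset.sum_add_distrib]
      refine Finset.sum_congr rfl fun j _ => by ring
    · have : ∃ j, v j ∉ Set.Ioc (-1/2 : ℝ) (-1/2 + 1) := by simpa [Qc] using hv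
      obtain ⟨j, hj⟩ := this
      simp only [Set.indicator_of_notMem hv, smul_zero, MeasurableEquiv.coe_toLp_symm]
      symm
      exact Finset.prod_eq_zero (Finset.mem_univ j) (Set.indicator_of_notMem hj _)
  simp only [h1]
  rw [(EuclideanSpace.volume_preserving_symm_measurableEquiv_toLp (Fin d)).integral_comp' (g := (fun w : Fin d → ℝ => ∏ j, (Set.Ioc (-1/2 : ℝ) (-1/2 + 1)).indicator
    (fun v => Complex.exp (2 * Real.pi * Complex.I * ((n j - x j : ℝ) * v))) (w j)))]
  rw [integral_fintype_prod_volume_eq_prod (f := fun j => (Set.Ioc (-1/2 : ℝ) (-1/2 + 1)).indicator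
    (fun v => Complex.exp (2 * Real.pi * Complex.I * ((n j - x j : ℝ) * v))))]
  simp only [int1, fN, sinc'_eq]
  push_cast
  refine Finset.prod_congr rfl fun j _ => ?_
  rw [← Real.sinc_neg]; congr 2; ring

open scoped FourierTransform in
theorem lp_fourier_toLp {d : ℕ} {f : EuclideanSpace ℝ (Fin d) → ℂ} (h2 : MemLp f 2 volume)
    (h1 : Integrable f volume) :
    (𝓕 h2.toLp : HE d) =ᵐ[volume] 𝓕 f := by
  refine (lp_fourier_ae _ ((integrable_congr h2.coeFn_toLp).2 h1)).trans ?_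
  exact Eventually.of_forall fun x => Real.fourier_congr_ae h2.coeFn_toLp x

lemma norm_chE (d : ℕ) (x ξ) : ‖chE d x ξ‖ = 1 := by
  rw [chE, Complex.norm_exp]; simp

open scoped FourierTransform in
theorem lp_fourier_e {d : ℕ} {n : Fin d → ℤ} (e : HE d) (he : e =ᵐ[volume] (Qc d).indicator (chE d (ptE d n))) :
    (𝓕 e : HE d) =ᵐ[volume] fun x => (fN d 1 n x : ℂ) := by
  have hv : volume (Qc d) < ∞ := by
    refine lt_of_le_of_lt (measure_mono (t := closedBall 0 (Real.sqrt d)) ?_) measure_closedBall_lt_top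
    intro ξ hξ
    rw [mem_closedBall_zero_iff, EuclideanSpace.norm_eq]
    refine Real.sqrt_le_sqrt ?_
    calc _ ≤ ∑ i : Fin d, (1:ℝ) := Finset.sum_le_sum fun i _ => by
            have := hξ i
            simp only [Real.norm_eq_abs, sq_abs]
            nlinarith [this.1, this.2]
      _ = d := by simp
  have hi : Integrable ((Qc d).indicator (chE d (ptE d n))) volume := by
    rw [integrable_indicator_iff (measurableSet_Qc d)]
    refine Measure.integrableOn_of_bounded (M := 1) hv.ne ?_ ?_
    · have : Continuous (chE d (ptE d n)) := by unfold chE; fun_prop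
      exact this.aestronglyMeasurable
    · exact Eventually.of_forall fun ξ => (norm_chE _ _ _).le
  refine (lp_fourier_ae e ((integrable_congr he).2 hi)).trans ?_
  refine Eventually.of_forall fun x => ?_
  rw [Real.fourier_congr_ae he x, fourier_ind]

def gsn (d : ℕ) (s : ℝ) (ξ : EuclideanSpace ℝ (Fin d)) : ℝ := Real.exp (-(4 * Real.pi ^ 2 * s) * ‖ξ‖ ^ 2)

lemma integrable_gsn (d : ℕ) {b : ℝ} (hb : 0 < b) :
    Integrable (fun ξ : EuclideanSpace ℝ (Fin d) => Real.exp (-b * ‖ξ‖ ^ 2)) volume := by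
  have := (GaussianFourier.integrable_cexp_neg_mul_sq_norm_add (V := EuclideanSpace ℝ (Fin d)) (b := (b:ℂ)) (by simpa using hb) 0 0).norm
  refine this.congr (Eventually.of_forall fun ξ => ?_)
  simp only [Complex.norm_exp]
  congr 1
  simp
  left
  norm_cast

lemma memLp_gsnx (d : ℕ) {s : ℝ} (hs : 0 < s) (x : EuclideanSpace ℝ (Fin d)) :
    MemLp (fun ξ => (gsn d s ξ : ℂ) * chE d x ξ) 2 volume := by
  have hc : Continuous (fun ξ => (gsn d s ξ : ℂ) * chE d x ξ) := by unfold gsn chE; fun_prop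
  rw [memLp_two_iff_integrable_sq_norm hc.aestronglyMeasurable]
  refine (integrable_gsn d (b := 8 * Real.pi ^ 2 * s) (by positivity)).congr (Eventually.of_forall fun ξ => ?_)
  simp only [norm_mul, norm_chE, mul_one, Complex.norm_real, gsn, Real.norm_eq_abs, Real.abs_exp]
  rw [← Real.exp_nat_mul]
  congr 1; push_cast; ring

lemma integrable_gsnx (d : ℕ) {s : ℝ} (hs : 0 < s) (x : EuclideanSpace ℝ (Fin d)) :
    Integrable (fun ξ => (gsn d s ξ : ℂ) * chE d x ξ) volume := by
  have hc : Continuous (fun ξ => (gsn d s ξ : ℂ) * chE d x ξ) := by unfold gsn chE; fun_prop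
  refine (integrable_norm_iff hc.aestronglyMeasurable).1 ?_
  refine (integrable_gsn d (b := 4 * Real.pi ^ 2 * s) (by positivity)).congr (Eventually.of_forall fun ξ => ?_)
  simp only [norm_mul, norm_chE, mul_one, Complex.norm_real, gsn, Real.norm_eq_abs, Real.abs_exp]

open scoped FourierTransform in
lemma fourier_gsnx (d : ℕ) {s : ℝ} (hs : 0 < s) (x y : EuclideanSpace ℝ (Fin d)) :
    𝓕 (fun ξ => (gsn d s ξ : ℂ) * chE d x ξ) y =
      (((4 * Real.pi * s) ^ (-(d : ℝ) / 2) * Real.exp (-‖x - y‖ ^ 2 / (4 * s)) : ℝ) : ℂ) := by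
  have h := fourier_gaussian_innerProductSpace' (V := EuclideanSpace ℝ (Fin d)) (b := ((4 * Real.pi ^ 2 * s : ℝ) : ℂ))
    (by rw [Complex.ofReal_re]; positivity) x y
  have e1 : (fun ξ => (gsn d s ξ : ℂ) * chE d x ξ) = (fun v ↦ Complex.exp (-((4 * Real.pi ^ 2 * s : ℝ) : ℂ) * ‖v‖ ^ 2 + 2 * Real.pi * Complex.I * (inner ℝ x v : ℝ))) := by
    ext ξ
    simp only [gsn, chE, Complex.exp_add]
    push_cast
    rfl
  rw [e1, h]
  push_cast
  congr 1
  · have : (Real.pi : ℂ) / (4 * Real.pi ^ 2 * s) = ((4 * Real.pi * s : ℝ)⁻¹ : ℝ) := by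
      have hp : (Real.pi : ℂ) ≠ 0 := by exact_mod_cast Real.pi_ne_zero
      push_cast
      field_simp
    rw [this]
    have h4 : (0:ℝ) ≤ 4 * Real.pi * s := by positivity
    have : ((Module.finrank ℝ (EuclideanSpace ℝ (Fin d)) : ℂ) / 2) = ((d / 2 : ℝ) : ℂ) := by simp
    rw [this, ← Complex.ofReal_cpow (by positivity), Real.inv_rpow h4, ← Real.rpow_neg h4]
    congr 2; ring
  · congr 1
    have hp : (Real.pi : ℂ) ≠ 0 := by exact_mod_cast Real.pi_ne_zero
    field_simp

open scoped FourierTransform in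
theorem heat_repr (d : ℕ) {u₀ : EuclideanSpace ℝ (Fin d) → ℝ} (hu : MemLp u₀ 2 volume) {s : ℝ} (hs : 0 < s) :
    ∃ g V : HE d, ‖g‖ = l2norm d u₀ ∧ (V =ᵐ[volume] fun ξ => (gsn d s ξ : ℂ) * g ξ) ∧ Integrable V volume ∧
      (∀ x, (heatSol d u₀ s x : ℂ) = ∫ ξ, (starRingEnd ℂ) (chE d x ξ) * V ξ) ∧
      (𝓕 V : HE d) =ᵐ[volume] fun x => (heatSol d u₀ s x : ℂ) := by
  have hU : MemLp (fun x => (u₀ x : ℂ)) 2 volume := hu.ofReal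
  set U : HE d := hU.toLp with hUdef
  set g : HE d := 𝓕⁻ U with hg
  have hg0 : MemLp (fun ξ => (gsn d s ξ : ℂ)) 2 volume := by simpa [chE] using memLp_gsnx d hs 0
  have hV1 : Integrable (fun ξ => (gsn d s ξ : ℂ) * g ξ) volume := hg0.integrable_mul (Lp.memLp g)
  have hV2 : MemLp (fun ξ => (gsn d s ξ : ℂ) * g ξ) 2 volume := by
    refine (Lp.memLp g).of_le (hg0.1.mul (Lp.memLp g).1) (Eventually.of_forall fun ξ => ?_)
    rw [norm_mul]
    refine mul_le_of_le_one_left (norm_nonneg _) ?_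
    simp only [Complex.norm_real, gsn, Real.norm_eq_abs, Real.abs_exp, Real.exp_le_one_iff]
    have : 0 ≤ (4 * Real.pi ^ 2 * s) * ‖ξ‖ ^ 2 := by positivity
    linarith
  have hrep : ∀ x, (heatSol d u₀ s x : ℂ) = ∫ ξ, (starRingEnd ℂ) (chE d x ξ) * ((gsn d s ξ : ℂ) * g ξ) := by
    intro x
    set A : HE d := (memLp_gsnx d hs x).toLp with hA
    have h1 : inner ℂ (𝓕 A : HE d) U = inner ℂ A g := by
      have : U = 𝓕 g := (FourierTransform.fourier_fourierInv_eq U).symm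
      rw [this, Lp.inner_fourier_eq]
    have hFA := lp_fourier_toLp (memLp_gsnx d hs x) (integrable_gsnx d hs x)
    have hAa := (memLp_gsnx d hs x).coeFn_toLp
    rw [L2.inner_def, L2.inner_def] at h1
    have h2 : ∫ a, inner ℂ ((𝓕 A : HE d) a) (U a) = (heatSol d u₀ s x : ℂ) := by
      rw [heatSol, ← integral_const_mul, ← integral_complex_ofReal]
      refine integral_congr_ae ?_
      filter_upwards [hFA, hU.coeFn_toLp] with y h3 h4
      rw [h3, h4, fourier_gsnx d hs, RCLike.inner_apply, Complex.conj_ofReal]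
      push_cast; ring
    rw [← h2, h1]
    refine integral_congr_ae ?_
    filter_upwards [hAa] with y h3
    rw [h3, RCLike.inner_apply, map_mul, Complex.conj_ofReal]; ring
  refine ⟨g, hV2.toLp, ?_, hV2.coeFn_toLp, (integrable_congr hV2.coeFn_toLp).2 hV1, ?_, ?_⟩
  · have : U = 𝓕 g := (FourierTransform.fourier_fourierInv_eq U).symm
    rw [← Lp.norm_fourier_eq, ← this, hUdef, Lp.norm_toLp, l2norm]
    congr 1
    exact eLpNorm_congr_norm_ae (Eventually.of_forall fun x => by simp)
  · intro x
    rw [hrep]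
    refine integral_congr_ae ?_
    filter_upwards [hV2.coeFn_toLp] with y h3
    rw [h3]
  · refine (lp_fourier_toLp hV2 hV1).trans (Eventually.of_forall fun x => ?_)
    simp only [hrep]
    rw [Real.fourier_eq']
    refine integral_congr_ae (Eventually.of_forall fun ξ => ?_)
    simp only [smul_eq_mul]
    congr 1
    rw [chE, ← Complex.exp_conj]
    congr 1
    have h2 : (starRingEnd ℂ) 2 = 2 := Complex.conj_ofReal 2
    simp [real_inner_comm, h2]
    ring

def Qk (d : ℕ) (k : Fin d → ℤ) : Set (EuclideanSpace ℝ (Fin d)) := {ξ | ξ - ptE d k ∈ Qc d}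

lemma measurableSet_Qk (d : ℕ) (k) : MeasurableSet (Qk d k) :=
  (measurableSet_Qc d).preimage (by fun_prop : Measurable fun ξ : EuclideanSpace ℝ (Fin d) => ξ - ptE d k)

lemma disj_Qk (d : ℕ) : Pairwise (Function.onFun Disjoint (Qk d)) := by
  intro k l hkl
  rw [Function.onFun, Set.disjoint_left]
  intro ξ h1 h2
  apply hkl
  ext j
  have a1 := h1 j
  have a2 := h2 j
  simp only [ptE, PiLp.sub_apply, Set.mem_Ioc] at a1 a2
  have : (k j : ℝ) < l j + 1 := by linarith [a1.1, a2.2]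
  have h3 : (l j : ℝ) < k j + 1 := by linarith [a1.1, a2.2]
  have : k j < l j + 1 := by exact_mod_cast this
  have : l j < k j + 1 := by exact_mod_cast h3
  omega

lemma iUnion_Qk (d : ℕ) : ⋃ k, Qk d k = Set.univ := by
  refine Set.eq_univ_of_forall fun ξ => Set.mem_iUnion.2 ⟨fun j => ⌈ξ j - 1/2⌉, fun j => ?_⟩
  simp only [ptE, PiLp.sub_apply, Set.mem_Ioc]
  have := Int.ceil_lt_add_one (ξ j - 1/2)
  have := Int.le_ceil (ξ j - 1/2)
  constructor <;> linarith

lemma mp_sub (d : ℕ) (k : Fin d → ℤ) : MeasurePreserving (fun ξ : EuclideanSpace ℝ (Fin d) => ξ - ptE d k) volume volume :=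
  measurePreserving_sub_right volume _
lemma mp_add (d : ℕ) (k : Fin d → ℤ) : MeasurePreserving (fun ξ : EuclideanSpace ℝ (Fin d) => ξ + ptE d k) volume volume :=
  measurePreserving_add_right volume _

lemma volume_Qk (d : ℕ) (k) : volume (Qk d k) = 1 := by
  rw [← volume_Qc d]
  exact (mp_sub d k).measure_preimage (measurableSet_Qc d).nullMeasurableSet

lemma norm_Qc (d : ℕ) {ξ} (h : ξ ∈ Qc d) : ‖ξ‖ ≤ Real.sqrt d := by
  rw [EuclideanSpace.norm_eq]
  refine Real.sqrt_le_sqrt ?_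
  calc _ ≤ ∑ i : Fin d, (1:ℝ) := Finset.sum_le_sum fun i _ => by
          have := h i
          simp only [Real.norm_eq_abs, sq_abs]
          nlinarith [this.1, this.2]
    _ = d := by simp

lemma integral_gsn (d : ℕ) {b : ℝ} (hb : 0 < b) :
    ∫ ξ : EuclideanSpace ℝ (Fin d), Real.exp (-b * ‖ξ‖ ^ 2) = (Real.pi / b) ^ (d / 2 : ℝ) := by
  have := GaussianFourier.integral_rexp_neg_mul_sq_norm (V := EuclideanSpace ℝ (Fin d)) hb
  simpa using this

lemma lintegral_gsn (d : ℕ) {b : ℝ} (hb : 0 < b) (y : EuclideanSpace ℝ (Fin d)) :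
    ∫⁻ ξ : EuclideanSpace ℝ (Fin d), ENNReal.ofReal (Real.exp (-b * ‖ξ - y‖ ^ 2)) = ENNReal.ofReal ((Real.pi / b) ^ (d / 2 : ℝ)) := by
  rw [lintegral_sub_right_eq_self (fun ξ : EuclideanSpace ℝ (Fin d) => ENNReal.ofReal (Real.exp (-b * ‖ξ‖ ^ 2))) y]
  rw [← integral_gsn d hb, ofReal_integral_eq_lintegral_ofReal (integrable_gsn d hb)]
  exact Eventually.of_forall fun _ => (Real.exp_pos _).le

theorem lemG (d : ℕ) {b : ℝ} (hb : 0 < b) (y : EuclideanSpace ℝ (Fin d)) (lam : (Fin d → ℤ) → EuclideanSpace ℝ (Fin d))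
    (hl : ∀ n, ‖lam n - ptE d n‖ ≤ 1) :
    ∑' n, ENNReal.ofReal (Real.exp (-b * ‖lam n - y‖ ^ 2)) ≤
      ENNReal.ofReal (Real.exp (b * (1 + Real.sqrt d) ^ 2) * (2 * Real.pi / b) ^ (d / 2 : ℝ)) := by
  have h1 : ∀ n, ENNReal.ofReal (Real.exp (-b * ‖lam n - y‖ ^ 2)) ≤
      ∫⁻ z in Qk d n, ENNReal.ofReal (Real.exp (b * (1 + Real.sqrt d) ^ 2)) * ENNReal.ofReal (Real.exp (-(b/2) * ‖z - y‖ ^ 2)) := by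
    intro n
    calc ENNReal.ofReal (Real.exp (-b * ‖lam n - y‖ ^ 2))
        = ∫⁻ z in Qk d n, ENNReal.ofReal (Real.exp (-b * ‖lam n - y‖ ^ 2)) := by
          rw [setLIntegral_const, volume_Qk, mul_one]
      _ ≤ _ := by
          refine setLIntegral_mono' (measurableSet_Qk d n) fun z hz => ?_
          rw [← ENNReal.ofReal_mul (Real.exp_pos _).le, ← Real.exp_add]
          refine ENNReal.ofReal_le_ofReal (Real.exp_le_exp.2 ?_)
          have h2 : ‖z - ptE d n‖ ≤ Real.sqrt d := norm_Qc d hz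
          have h3 : ‖z - y‖ ≤ ‖lam n - y‖ + (1 + Real.sqrt d) := by
            have : z - y = (lam n - y) + (z - ptE d n - (lam n - ptE d n)) := by abel
            rw [this]
            refine (norm_add_le _ _).trans ?_
            have := norm_sub_le (z - ptE d n) (lam n - ptE d n)
            linarith [hl n]
          have h4 : ‖z - y‖ ^ 2 ≤ 2 * ‖lam n - y‖ ^ 2 + 2 * (1 + Real.sqrt d) ^ 2 := by
            have h5 := norm_nonneg (z - y)
            have := pow_le_pow_left₀ h5 h3 2
            nlinarith [sq_nonneg (‖lam n - y‖ - (1 + Real.sqrt d))]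
          nlinarith
  calc _ ≤ ∑' n, ∫⁻ z in Qk d n, ENNReal.ofReal (Real.exp (b * (1 + Real.sqrt d) ^ 2)) * ENNReal.ofReal (Real.exp (-(b/2) * ‖z - y‖ ^ 2)) := ENNReal.tsum_le_tsum h1
    _ = ∫⁻ z, ENNReal.ofReal (Real.exp (b * (1 + Real.sqrt d) ^ 2)) * ENNReal.ofReal (Real.exp (-(b/2) * ‖z - y‖ ^ 2)) := by
        rw [← lintegral_iUnion (measurableSet_Qk d) (disj_Qk d), iUnion_Qk, setLIntegral_univ]
    _ = _ := by
        rw [lintegral_const_mul' _ _ ENNReal.ofReal_ne_top, lintegral_gsn d (by positivity), ENNReal.ofReal_mul (Real.exp_pos _).le]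
        congr 3
        field_simp

lemma summable_gsn (d : ℕ) {b : ℝ} (hb : 0 < b) : Summable (fun k : Fin d → ℤ => Real.exp (-b * ‖ptE d k‖ ^ 2)) := by
  have h := lemG d hb 0 (fun n => ptE d n) (by simp)
  simp only [sub_zero] at h
  have := ENNReal.summable_toReal (h.trans_lt ENNReal.ofReal_lt_top).ne
  simpa [ENNReal.toReal_ofReal, (Real.exp_pos _).le] using this

lemma gsn_le_of_mem (d : ℕ) {s : ℝ} (hs : 0 < s) (k : Fin d → ℤ) {ξ} (h : ξ ∈ Qc d) :
    gsn d s (ξ + ptE d k) ≤ Real.exp (-(Real.pi ^ 2 * s) * ‖ptE d k‖ ^ 2) := by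
  have h1 : ‖ptE d k‖ ^ 2 ≤ 4 * ‖ξ + ptE d k‖ ^ 2 := by
    rw [EuclideanSpace.norm_sq_eq, EuclideanSpace.norm_sq_eq, Finset.mul_sum]
    refine Finset.sum_le_sum fun j _ => ?_
    have := h j
    simp only [Real.norm_eq_abs, sq_abs, ptE, PiLp.add_apply]
    rcases lt_trichotomy (k j) 0 with hk | hk | hk
    · have : (k j : ℝ) ≤ -1 := by exact_mod_cast Int.le_sub_one_of_lt hk
      nlinarith [this, h j |>.1, h j |>.2]
    · simp [hk]; positivity
    · have : (1 : ℝ) ≤ k j := by exact_mod_cast hk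
      nlinarith [this, h j |>.1, h j |>.2]
  unfold gsn
  refine Real.exp_le_exp.2 ?_
  have : 0 < Real.pi ^ 2 * s := by positivity
  nlinarith

lemma gsn_le_of_notMem (d : ℕ) {s : ℝ} (hs : 0 < s) {ξ} (h : ξ ∉ Qc d) :
    gsn d s ξ ≤ Real.exp (-(Real.pi ^ 2 * s)) := by
  have : ∃ j, ξ j ∉ Set.Ioc (-1/2 : ℝ) (-1/2 + 1) := by simpa [Qc] using h
  obtain ⟨j, hj⟩ := this
  have h2 : 1/4 ≤ (ξ j) ^ 2 := by
    by_contra hc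
    push Not at hc
    have : |ξ j| < 1/2 := abs_lt_of_sq_lt_sq (by linarith) (by norm_num)
    rw [abs_lt] at this
    exact hj ⟨by linarith, by linarith⟩
  have h1 : (ξ j) ^ 2 ≤ ‖ξ‖ ^ 2 := by
    rw [EuclideanSpace.norm_sq_eq]
    have := Finset.single_le_sum (f := fun i => ‖ξ i‖ ^ 2) (fun i _ => by positivity) (Finset.mem_univ j)
    simpa using this
  unfold gsn
  refine Real.exp_le_exp.2 ?_
  have : 0 < Real.pi ^ 2 * s := by positivity
  nlinarith

lemma one_le_normsq (d : ℕ) {k : Fin d → ℤ} (hk : k ≠ 0) : 1 ≤ ‖ptE d k‖ ^ 2 := by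
  obtain ⟨j, hj⟩ := Function.ne_iff.1 hk
  rw [EuclideanSpace.norm_sq_eq]
  have := Finset.single_le_sum (f := fun i => ‖(ptE d k) i‖ ^ 2) (fun i _ => by positivity) (Finset.mem_univ j)
  refine le_trans ?_ this
  simp only [ptE, Real.norm_eq_abs, sq_abs]
  have : 1 ≤ (k j) ^ 2 := by
    have h0 : k j ≠ 0 := hj
    have : 0 < (k j)^2 := by positivity
    omega
  exact_mod_cast this

lemma chE_add (d : ℕ) (n k : Fin d → ℤ) (ξ) : chE d (ptE d n) (ξ + ptE d k) = chE d (ptE d n) ξ := by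
  have : (inner ℝ (ptE d n) (ptE d k) : ℝ) = ((∑ j, n j * k j : ℤ) : ℝ) := by
    simp [PiLp.inner_apply, ptE, mul_comm]
  rw [chE, inner_add_right, this, chE]
  push_cast
  rw [mul_add, Complex.exp_add]
  have h := Complex.exp_int_mul_two_pi_mul_I (∑ j, n j * k j : ℤ)
  push_cast at h
  rw [mul_comm (2 * (Real.pi : ℂ) * Complex.I) (∑ x, (n x : ℂ) * (k x : ℂ)), h, mul_one]

lemma norm_toLp_le (d : ℕ) {f : EuclideanSpace ℝ (Fin d) → ℂ} (hf : MemLp f 2 volume) (g : HE d) (c : ℝ) (hc : 0 ≤ c)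
    (G : EuclideanSpace ℝ (Fin d) → ℂ) (hG : eLpNorm G 2 volume = eLpNorm g 2 volume)
    (h : ∀ᵐ ξ, ‖f ξ‖ ≤ c * ‖G ξ‖) : ‖hf.toLp‖ ≤ c * ‖g‖ := by
  rw [Lp.norm_toLp, Lp.norm_def]
  have := eLpNorm_le_mul_eLpNorm_of_ae_le_mul h 2
  rw [hG] at this
  have h2 := ENNReal.toReal_mono (ENNReal.mul_ne_top ENNReal.ofReal_ne_top (Lp.eLpNorm_ne_top g)) this
  rwa [ENNReal.toReal_mul, ENNReal.toReal_ofReal hc] at h2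

def Cal (d : ℕ) : ℝ := 1 + ∑' k : Fin d → ℤ, Real.exp (-1 * ‖ptE d k‖ ^ 2)

theorem alias_bd (d : ℕ) (e : (Fin d → ℤ) → HE d)
    (he : ∀ n, e n =ᵐ[volume] (Qc d).indicator (chE d (ptE d n)))
    (hc : ∀ h : HE d, (∀ᵐ ξ, ξ ∉ Qc d → h ξ = 0) → HasSum (fun n => (inner ℂ (e n) h : ℂ) • e n) h)
    {s : ℝ} (hs : 1 ≤ s) (g V : HE d) (hV : V =ᵐ[volume] fun ξ => (gsn d s ξ : ℂ) * g ξ)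
    (hVi : Integrable V volume) (a : (Fin d → ℤ) → ℂ)
    (ha : ∀ n, a n = ∫ ξ, (starRingEnd ℂ) (chE d (ptE d n) ξ) * V ξ) :
    ∃ P : HE d, HasSum (fun n => a n • e n) P ∧ ‖V - P‖ ≤ Cal d * Real.exp (-8 * s) * ‖g‖ := by
  have hs0 : 0 < s := by linarith
  have hpi : 9 ≤ Real.pi ^ 2 := by nlinarith [Real.pi_gt_three]
  have hgn : ∀ ξ, ‖(gsn d s ξ : ℂ)‖ = gsn d s ξ := fun ξ => by
    rw [Complex.norm_real, Real.norm_eq_abs, gsn, Real.abs_exp]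
  -- shifted pieces
  have hVk : ∀ k, MemLp (fun ξ => V (ξ + ptE d k)) 2 volume := fun k =>
    (Lp.memLp V).comp_measurePreserving (mp_add d k)
  have hm : ∀ k, MemLp ((Qc d).indicator (fun ξ => V (ξ + ptE d k))) 2 volume := fun k =>
    (hVk k).indicator (measurableSet_Qc d)
  set h : (Fin d → ℤ) → HE d := fun k => (hm k).toLp with hh
  have hnorm : ∀ k, ‖h k‖ ≤ Real.exp (-(Real.pi ^ 2 * s) * ‖ptE d k‖ ^ 2) * ‖g‖ := by
    intro k
    refine norm_toLp_le d (hm k) g _ (Real.exp_pos _).le (fun ξ => g (ξ + ptE d k))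
      (eLpNorm_comp_measurePreserving (Lp.aestronglyMeasurable g) (mp_add d k)) ?_
    have h1 := (mp_add d k).quasiMeasurePreserving.ae hV
    filter_upwards [h1] with ξ h1
    by_cases hξ : ξ ∈ Qc d
    · simp only [Set.indicator_of_mem hξ, h1, norm_mul, hgn]
      gcongr
      exact gsn_le_of_mem d hs0 k hξ
    · simp only [Set.indicator_of_notMem hξ, norm_zero]; positivity
  have hck : ∀ k : Fin d → ℤ, k ≠ 0 → Real.exp (-(Real.pi ^ 2 * s) * ‖ptE d k‖ ^ 2) ≤
      Real.exp (-8 * s) * Real.exp (-1 * ‖ptE d k‖ ^ 2) := by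
    intro k hk
    rw [← Real.exp_add]
    refine Real.exp_le_exp.2 ?_
    have h1 := one_le_normsq d hk
    have h2 : 9 * s ≤ Real.pi ^ 2 * s := by nlinarith
    have h3 : 9 * s * ‖ptE d k‖ ^ 2 ≤ Real.pi ^ 2 * s * ‖ptE d k‖ ^ 2 := by gcongr
    nlinarith [mul_nonneg (sub_nonneg.2 hs) (by linarith : (0:ℝ) ≤ ‖ptE d k‖ ^ 2), mul_nonneg hs0.le (sub_nonneg.2 h1)]
  have hsum1 : Summable (fun k : Fin d → ℤ => Real.exp (-(Real.pi ^ 2 * s) * ‖ptE d k‖ ^ 2)) :=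
    summable_gsn d (by positivity)
  have hsum : Summable h := Summable.of_norm_bounded (hsum1.mul_right ‖g‖) hnorm
  set P : HE d := ∑' k, h k with hP
  have hPs : HasSum h P := hsum.hasSum
  -- support of P
  have hPQ : ∀ᵐ ξ, ξ ∉ Qc d → P ξ = 0 := by
    have hmap := hPs.mapL (LpToLpRestrictCLM (EuclideanSpace ℝ (Fin d)) ℂ ℂ volume 2 (Qc d)ᶜ)
    have hz : ∀ k, (LpToLpRestrictCLM (EuclideanSpace ℝ (Fin d)) ℂ ℂ volume 2 (Qc d)ᶜ) (h k) = 0 := by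
      intro k
      refine Lp.ext ?_
      refine (LpToLpRestrictCLM_coeFn ℂ (Qc d)ᶜ (h k)).trans ?_
      refine EventuallyEq.trans ?_ (Lp.coeFn_zero _ _ _).symm
      refine (ae_restrict_iff' (measurableSet_Qc d).compl).2 ?_
      filter_upwards [(hm k).coeFn_toLp] with ξ h1 h2
      rw [h1, Set.indicator_of_notMem h2]; rfl
    simp only [hz] at hmap
    have h0 := hmap.unique hasSum_zero
    have h1 := LpToLpRestrictCLM_coeFn ℂ (Qc d)ᶜ P
    rw [h0] at h1
    have h2 := h1.symm.trans (Lp.coeFn_zero _ _ _)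
    exact (ae_restrict_iff' (measurableSet_Qc d).compl).1 h2
  have hexp := hc P hPQ
  -- coefficients
  have hcoef : ∀ n, (inner ℂ (e n) P : ℂ) = a n := by
    intro n
    have h1 : HasSum (fun k => (inner ℂ (e n) (h k) : ℂ)) (inner ℂ (e n) P) := hPs.mapL (innerSL ℂ (e n))
    have hint : Integrable (fun ξ => (starRingEnd ℂ) (chE d (ptE d n) ξ) * V ξ) volume := by
      have hcc : Continuous (fun ξ => (starRingEnd ℂ) (chE d (ptE d n) ξ)) := by unfold chE; fun_prop
      refine hVi.bdd_mul (c := 1) hcc.aestronglyMeasurable (Eventually.of_forall fun ξ => ?_)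
      simp [norm_chE]
    have h2 := hasSum_integral_iUnion (measurableSet_Qk d) (disj_Qk d) (hint.integrableOn (s := ⋃ k, Qk d k))
    rw [iUnion_Qk, setIntegral_univ, ← ha n] at h2
    refine h1.unique ?_
    convert! h2 using 1
    ext k
    rw [L2.inner_def]
    have h3 := (mp_add d k).setIntegral_preimage_emb (MeasurableEquiv.addRight (ptE d k)).measurableEmbedding
      (fun ξ => (starRingEnd ℂ) (chE d (ptE d n) ξ) * V ξ) (Qk d k)
    rw [← h3]
    have h4 : (fun ξ => ξ + ptE d k) ⁻¹' Qk d k = Qc d := by ext; simp [Qk]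
    rw [h4, ← integral_indicator (measurableSet_Qc d)]
    refine integral_congr_ae ?_
    filter_upwards [he n, (hm k).coeFn_toLp] with ξ h5 h6
    rw [h5, h6, RCLike.inner_apply]
    by_cases hξ : ξ ∈ Qc d
    · simp [hξ, chE_add, mul_comm]
    · simp [hξ]
  simp only [hcoef] at hexp
  refine ⟨P, hexp, ?_⟩
  -- the bound
  have hsplit := hsum.tsum_eq_add_tsum_ite 0
  have hb1 : ‖V - h 0‖ ≤ Real.exp (-8 * s) * ‖g‖ := by
    have hm' : MemLp ((Qc d)ᶜ.indicator V) 2 volume := (Lp.memLp V).indicator (measurableSet_Qc d).compl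
    have : V - h 0 = hm'.toLp := by
      refine Lp.ext ?_
      filter_upwards [Lp.coeFn_sub V (h 0), (hm 0).coeFn_toLp, hm'.coeFn_toLp] with ξ h1 h2 h3
      have hp0 : ptE d 0 = 0 := by ext; simp [ptE]
      rw [h1, h3, Pi.sub_apply, h2]
      by_cases hξ : ξ ∈ Qc d <;> simp [hξ, hp0]
    rw [this]
    refine norm_toLp_le d hm' g _ (Real.exp_pos _).le g rfl ?_
    filter_upwards [hV] with ξ h1
    by_cases hξ : ξ ∈ Qc d
    · simp [hξ]; positivity
    · simp only [Set.indicator_of_mem (show ξ ∈ (Qc d)ᶜ from hξ), h1, norm_mul, hgn]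
      gcongr
      refine (gsn_le_of_notMem d hs0 hξ).trans (Real.exp_le_exp.2 ?_)
      nlinarith
  have hb2 : ‖∑' k, (if k = 0 then 0 else h k)‖ ≤ Real.exp (-8 * s) * (∑' k : Fin d → ℤ, Real.exp (-1 * ‖ptE d k‖ ^ 2)) * ‖g‖ := by
    have hs2 := (((summable_gsn d one_pos).hasSum.mul_left (Real.exp (-8 * s))).mul_right ‖g‖)
    refine tsum_of_norm_bounded hs2 fun k => ?_
    split_ifs with hk
    · simp; positivity
    · refine (hnorm k).trans ?_
      gcongr
      exact hck k hk
  have : V - P = (V - h 0) - ∑' k, (if k = 0 then 0 else h k) := by rw [hP, hsplit]; abel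
  rw [this]
  refine (norm_sub_le _ _).trans ?_
  unfold Cal
  linarith

lemma cs_lint {α : Type*} [MeasurableSpace α] {μ : Measure α} {K f : α → ℝ≥0∞} (hK : Measurable K) (hf : AEMeasurable f μ) :
    (∫⁻ y, K y * f y ∂μ) ^ 2 ≤ (∫⁻ y, K y ∂μ) * ∫⁻ y, K y * f y ^ 2 ∂μ := by
  have h := ENNReal.lintegral_mul_le_Lp_mul_Lq μ (p := 2) (q := 2) Real.HolderConjugate.two_two
    (f := fun y => K y ^ (1/2 : ℝ)) (g := fun y => K y ^ (1/2 : ℝ) * f y)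
    (hK.pow_const _).aemeasurable ((hK.pow_const _).aemeasurable.mul hf)
  have hh : ∀ a : ℝ≥0∞, (a ^ (1/2 : ℝ)) ^ (2 : ℝ) = a := fun a => by
    rw [← ENNReal.rpow_mul]; norm_num
  have h2 : ∀ a : ℝ≥0∞, a ^ (1/2 : ℝ) * a ^ (1/2 : ℝ) = a := fun a => by
    rw [← ENNReal.rpow_add_of_nonneg _ _ (by norm_num) (by norm_num)]; norm_num
  simp only [Pi.mul_apply, ← mul_assoc, h2, hh, ENNReal.mul_rpow_of_nonneg _ _ (zero_le_two : (0:ℝ) ≤ 2)] at h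
  have h3 := pow_le_pow_left₀ zero_le h 2
  rw [mul_pow, ← ENNReal.rpow_natCast, ← ENNReal.rpow_natCast, ← ENNReal.rpow_natCast] at h3
  push_cast at h3
  rw [hh, hh] at h3
  simpa using h3

theorem schur {α ι : Type*} [Countable ι] [MeasurableSpace α] {μ : Measure α} {K : ι → α → ℝ≥0∞} {f : α → ℝ≥0∞}
    (hK : ∀ n, Measurable (K n)) (hf : AEMeasurable f μ) {A B : ℝ≥0∞}
    (hA : ∀ n, ∫⁻ y, K n y ∂μ ≤ A) (hB : ∀ y, ∑' n, K n y ≤ B) :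
    ∑' n, (∫⁻ y, K n y * f y ∂μ) ^ 2 ≤ A * B * ∫⁻ y, f y ^ 2 ∂μ := by
  calc _ ≤ ∑' n, A * ∫⁻ y, K n y * f y ^ 2 ∂μ :=
        ENNReal.tsum_le_tsum fun n => (cs_lint (hK n) hf).trans (by gcongr; exact hA n)
    _ = A * ∫⁻ y, (∑' n, K n y) * f y ^ 2 ∂μ := by
        rw [ENNReal.tsum_mul_left, ← lintegral_tsum (f := fun n y => K n y * f y ^ 2) (fun n => (hK n).aemeasurable.mul (hf.pow_const 2))]
        simp only [ENNReal.tsum_mul_right]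
    _ ≤ A * ∫⁻ y, B * f y ^ 2 ∂μ := by gcongr with y; exact hB y
    _ = _ := by rw [lintegral_const_mul'' _ (hf.pow_const 2), mul_assoc]

lemma l2_sq (d : ℕ) {u₀ : EuclideanSpace ℝ (Fin d) → ℝ} (hu : MemLp u₀ 2 volume) :
    ∫⁻ y, ‖u₀ y‖ₑ ^ 2 = ENNReal.ofReal (l2norm d u₀ ^ 2) := by
  have := eLpNorm_nnreal_pow_eq_lintegral (f := u₀) (μ := volume) (p := 2) (by norm_num)
  simp only [NNReal.coe_ofNat, ENNReal.coe_ofNat, ENNReal.rpow_ofNat] at this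
  rw [← this, l2norm, ENNReal.ofReal_pow ENNReal.toReal_nonneg, ENNReal.ofReal_toReal hu.2.ne]

def gk (d : ℕ) (b : ℝ) (x y : EuclideanSpace ℝ (Fin d)) : ℝ := Real.exp (-b * ‖x - y‖ ^ 2)

lemma gk_pos (d b x y) : 0 < gk d b x y := Real.exp_pos _

lemma cont_gk (d : ℕ) (b : ℝ) (x) : Continuous (gk d b x) := by unfold gk; fun_prop

lemma lint_gk (d : ℕ) {b : ℝ} (hb : 0 < b) (x) : ∫⁻ y, ENNReal.ofReal (gk d b x y) = ENNReal.ofReal ((Real.pi / b) ^ (d / 2 : ℝ)) := by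
  rw [← lintegral_gsn d hb x]
  simp only [gk, norm_sub_rev]

lemma memLp_gk (d : ℕ) {b : ℝ} (hb : 0 < b) (x) : MemLp (gk d b x) 2 volume := by
  rw [memLp_two_iff_integrable_sq (cont_gk d b x).aestronglyMeasurable]
  have := (integrable_gsn d (b := 2 * b) (by positivity)).comp_sub_left x
  refine this.congr (Eventually.of_forall fun y => ?_)
  simp only [gk]
  rw [← Real.exp_nat_mul]; congr 1; push_cast; ring

lemma heat_eq (d : ℕ) (u₀ : EuclideanSpace ℝ (Fin d) → ℝ) {s : ℝ} (x) :
    heatSol d u₀ s x = ∫ y, (4 * Real.pi * s) ^ (-(d : ℝ) / 2) * gk d (1/(4*s)) x y * u₀ y := by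
  rw [heatSol, ← integral_const_mul]
  congr 1; ext y
  rw [gk, ← mul_assoc]
  congr 3; ring

lemma heat_int (d : ℕ) {u₀ : EuclideanSpace ℝ (Fin d) → ℝ} (hu : MemLp u₀ 2 volume) {s : ℝ} (hs : 0 < s) (x) :
    Integrable (fun y => (4 * Real.pi * s) ^ (-(d : ℝ) / 2) * gk d (1/(4*s)) x y * u₀ y) volume := by
  simp only [mul_assoc]
  exact ((memLp_gk d (by positivity) x).integrable_mul hu).const_mul _

lemma gk_diff (d : ℕ) {s ε : ℝ} (hs : 1 ≤ s) (hε1 : ε ≤ 1) (x x' y : EuclideanSpace ℝ (Fin d)) (h : ‖x - x'‖ ≤ ε) :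
    |gk d (1/(4*s)) x y - gk d (1/(4*s)) x' y| ≤ 3 * ε * (gk d (1/(8*s)) x y + gk d (1/(8*s)) x' y) := by
  have hε : 0 ≤ ε := (norm_nonneg _).trans h
  set q := Real.sqrt (1/(4*s)) with hq
  have hs0 : 0 < s := by linarith
  have hq2 : q ^ 2 = 1/(4*s) := Real.sq_sqrt (by positivity)
  have hq0 : 0 ≤ q := Real.sqrt_nonneg _
  have hq1 : q ≤ 1 := by
    have : q ^ 2 ≤ 1 := by rw [hq2, div_le_one (by positivity)]; linarith
    nlinarith
  set r := q * ‖x - y‖ with hr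
  set t := q * ‖x' - y‖ with ht
  have hr0 : 0 ≤ r := by positivity
  have ht0 : 0 ≤ t := by positivity
  have hab : |‖x - y‖ - ‖x' - y‖| ≤ ε := by
    refine (abs_norm_sub_norm_le _ _).trans ?_
    simpa using h
  have hrt : |r - t| ≤ ε := by
    rw [hr, ht, ← mul_sub, abs_mul, abs_of_nonneg hq0]
    exact (mul_le_of_le_one_left (abs_nonneg _) hq1).trans hab
  have e1 : gk d (1/(4*s)) x y = Real.exp (-r^2) := by
    rw [gk, hr, mul_pow, hq2]; congr 1; ring
  have e2 : gk d (1/(4*s)) x' y = Real.exp (-t^2) := by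
    rw [gk, ht, mul_pow, hq2]; congr 1; ring
  have e3 : gk d (1/(8*s)) x y = Real.exp (-r^2/2) := by
    rw [gk, hr, mul_pow, hq2]; congr 1; field_simp; ring
  have e4 : gk d (1/(8*s)) x' y = Real.exp (-t^2/2) := by
    rw [gk, ht, mul_pow, hq2]; congr 1; field_simp; ring
  rw [e1, e2, e3, e4]
  have key : ∀ a b : ℝ, 0 ≤ a → 0 ≤ b → |a - b| ≤ ε → Real.exp (-a^2) - Real.exp (-b^2) ≤ 3 * ε * Real.exp (-a^2/2) := by
    intro a b ha hb hab
    have h1 : Real.exp (-a^2) - Real.exp (-b^2) ≤ (b^2 - a^2) * Real.exp (-a^2) := by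
      have : Real.exp (-b^2) = Real.exp (-a^2) * Real.exp (a^2 - b^2) := by rw [← Real.exp_add]; congr 1; ring
      rw [this]
      have := Real.add_one_le_exp (a^2 - b^2)
      nlinarith [Real.exp_pos (-a^2)]
    have h2 : b^2 - a^2 ≤ ε * (2 * a + 1) := by
      have := abs_le.1 hab
      have : b ≤ a + ε := by linarith
      nlinarith
    have h3 : Real.exp (-a^2) = Real.exp (-a^2/2) * Real.exp (-a^2/2) := by rw [← Real.exp_add]; congr 1; ring
    have h4 : (2 * a + 1) * Real.exp (-a^2/2) ≤ 3 := by
      have h5 : 2 * a + 1 ≤ 3 * Real.exp (a^2/2) := by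
        have := Real.add_one_le_exp (a^2/2)
        nlinarith [sq_nonneg (a - 1)]
      calc _ ≤ 3 * Real.exp (a^2/2) * Real.exp (-a^2/2) := by gcongr
        _ = 3 := by rw [mul_assoc, ← Real.exp_add]; ring_nf; simp
    calc _ ≤ (b^2 - a^2) * Real.exp (-a^2) := h1
      _ ≤ ε * (2 * a + 1) * Real.exp (-a^2) := by gcongr
      _ = ε * Real.exp (-a^2/2) * ((2 * a + 1) * Real.exp (-a^2/2)) := by rw [h3]; ring
      _ ≤ ε * Real.exp (-a^2/2) * 3 := by gcongr
      _ = _ := by ring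
  have k1 := key r t hr0 ht0 hrt
  have k2 := key t r ht0 hr0 (by rwa [abs_sub_comm])
  have := Real.exp_pos (-r^2/2)
  have := Real.exp_pos (-t^2/2)
  rw [abs_le]
  constructor <;> nlinarith [mul_nonneg hε (Real.exp_pos (-r^2/2)).le, mul_nonneg hε (Real.exp_pos (-t^2/2)).le]

lemma heat_schur (d : ℕ) {u₀ : EuclideanSpace ℝ (Fin d) → ℝ} (hu : MemLp u₀ 2 volume)
    (K : (Fin d → ℤ) → EuclideanSpace ℝ (Fin d) → ℝ) (hK : ∀ n, Continuous (K n))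
    (a : (Fin d → ℤ) → ℝ) (ha : ∀ n, ‖a n‖ₑ ≤ ∫⁻ y, ENNReal.ofReal (K n y) * ‖u₀ y‖ₑ)
    {A B M : ℝ} (hA0 : 0 ≤ A)
    (hA : ∀ n, ∫⁻ y, ENNReal.ofReal (K n y) ≤ ENNReal.ofReal A)
    (hB : ∀ y, ∑' n, ENNReal.ofReal (K n y) ≤ ENNReal.ofReal B) (hM : A * B ≤ M ^ 2) :
    ∑' n, ‖a n‖ₑ ^ 2 ≤ ENNReal.ofReal ((M * l2norm d u₀) ^ 2) := by
  calc _ ≤ ∑' n, (∫⁻ y, ENNReal.ofReal (K n y) * ‖u₀ y‖ₑ) ^ 2 :=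
        ENNReal.tsum_le_tsum fun n => pow_le_pow_left₀ zero_le (ha n) 2
    _ ≤ ENNReal.ofReal A * ENNReal.ofReal B * ∫⁻ y, ‖u₀ y‖ₑ ^ 2 :=
        schur (fun n => (hK n).measurable.ennreal_ofReal) hu.1.enorm hA hB
    _ = ENNReal.ofReal (A * B) * ENNReal.ofReal (l2norm d u₀ ^ 2) := by
        rw [l2_sq d hu, ENNReal.ofReal_mul hA0]
    _ ≤ ENNReal.ofReal (M ^ 2) * ENNReal.ofReal (l2norm d u₀ ^ 2) := by gcongr
    _ = _ := by rw [← ENNReal.ofReal_mul (by positivity), mul_pow]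

def Kd (d : ℕ) : ℝ := 4 ^ (d / 2 : ℝ) * Real.exp ((1 + √d) ^ 2)

lemma tsum_gk (d : ℕ) {b : ℝ} (hb : 0 < b) (y) (lam : (Fin d → ℤ) → EuclideanSpace ℝ (Fin d))
    (hl : ∀ n, ‖lam n - ptE d n‖ ≤ 1) :
    ∑' n, ENNReal.ofReal (gk d b (lam n) y) ≤ ENNReal.ofReal (Real.exp (b*(1+√d)^2) * (2*Real.pi/b)^(d/2:ℝ)) :=
  lemG d hb y lam hl

lemma pow_cancel (d : ℕ) {s c : ℝ} (hs : 0 < s) (hc : 0 < c) :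
    (4 * Real.pi * s) ^ (-(d : ℝ) / 2) * (c * (4 * Real.pi * s)) ^ (d / 2 : ℝ) = c ^ (d / 2 : ℝ) := by
  have := Real.pi_pos
  rw [Real.mul_rpow hc.le (by positivity), neg_div, Real.rpow_neg (by positivity)]
  field_simp

lemma schur2 (d : ℕ) {u₀ : EuclideanSpace ℝ (Fin d) → ℝ} (hu : MemLp u₀ 2 volume) {s : ℝ} (hs : 0 < s) (hs1 : s ≤ 1)
    (lam : (Fin d → ℤ) → EuclideanSpace ℝ (Fin d))
    (hl : ∀ n, ‖lam n - ptE d n‖ ≤ 1) :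
    ∑' n, ‖heatSol d u₀ s (lam n)‖ₑ ^ 2 ≤ ENNReal.ofReal ((Kd d * s ^ (-(d:ℝ) / 4) * l2norm d u₀) ^ 2) := by
  have hpi := Real.pi_pos
  have hc : 0 ≤ (4 * Real.pi * s) ^ (-(d : ℝ) / 2) := by positivity
  have hle : ∀ x y, gk d (1/(4*s)) x y ≤ gk d (1/4) x y := fun x y => by
    unfold gk
    gcongr
    linarith
  refine heat_schur d hu (fun n y => (4 * Real.pi * s) ^ (-(d : ℝ) / 2) * gk d (1/(4*s)) (lam n) y)
    (fun n => continuous_const.mul (cont_gk _ _ _)) _ (fun n => ?_) (A := 1)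
    (B := (4 * Real.pi * s) ^ (-(d : ℝ) / 2) * (Real.exp ((1/4)*(1+√d)^2) * (2*Real.pi/(1/4))^(d/2:ℝ))) zero_le_one (fun n => ?_) (fun y => ?_) ?_
  · rw [heat_eq]
    refine (enorm_integral_le_lintegral_enorm _).trans (le_of_eq ?_)
    congr 1; ext y
    rw [enorm_mul, Real.enorm_of_nonneg (mul_nonneg hc (gk_pos _ _ _ _).le)]
  · simp only [ENNReal.ofReal_mul hc]
    rw [lintegral_const_mul _ (cont_gk _ _ _).measurable.ennreal_ofReal, lint_gk d (by positivity), ← ENNReal.ofReal_mul hc]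
    apply ENNReal.ofReal_le_ofReal
    have := pow_cancel d hs one_pos
    rw [Real.one_rpow] at this
    have e : Real.pi / (1 / (4 * s)) = 1 * (4 * Real.pi * s) := by field_simp
    rw [e, this]
  · simp only [ENNReal.ofReal_mul hc]
    rw [ENNReal.tsum_mul_left]
    refine mul_le_mul_right (((ENNReal.tsum_le_tsum fun n => ENNReal.ofReal_le_ofReal (hle _ _)).trans
      (tsum_gk d (by norm_num) y lam hl)).trans (le_of_eq ?_)) _
    rw [ENNReal.ofReal_mul (by positivity)]
  · have h1 : (s ^ (-(d:ℝ) / 4)) ^ 2 = s ^ (-(d:ℝ)/2) := by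
      rw [← Real.rpow_natCast, ← Real.rpow_mul hs.le]; congr 1; push_cast; ring
    have h2 : (4 * Real.pi * s) ^ (-(d : ℝ) / 2) * (2*Real.pi/(1/4))^(d/2:ℝ) = s ^ (-(d:ℝ)/2) * 2 ^ (d/2:ℝ) := by
      have := pow_cancel d one_pos two_pos
      rw [Real.mul_rpow (by positivity) hs.le, ← this]
      ring_nf
    rw [mul_pow, h1, Kd, one_mul]
    calc _ = s ^ (-(d:ℝ)/2) * (2 ^ (d/2:ℝ) * Real.exp ((1/4)*(1+√d)^2)) := by
          rw [← mul_assoc (s ^ (-(d:ℝ)/2)), ← h2]; ring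
      _ ≤ s ^ (-(d:ℝ)/2) * (4 ^ (d/2:ℝ) * Real.exp ((1+√d)^2)) := by
          gcongr
          · norm_num
          · nlinarith [sq_nonneg (1+√d)]
      _ ≤ s ^ (-(d:ℝ)/2) * (4 ^ (d/2:ℝ) * Real.exp ((1+√d)^2))^2 := by
          gcongr
          apply le_self_pow₀ _ two_ne_zero
          exact one_le_mul_of_one_le_of_one_le (Real.one_le_rpow (by norm_num) (by positivity)) (Real.one_le_exp (by positivity))
      _ = _ := by ring

lemma schur1 (d : ℕ) {u₀ : EuclideanSpace ℝ (Fin d) → ℝ} (hu : MemLp u₀ 2 volume) {s ε : ℝ} (hs : 1 ≤ s) (hε : 0 ≤ ε) (hε1 : ε ≤ 1)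
    (lam : (Fin d → ℤ) → EuclideanSpace ℝ (Fin d))
    (hl : ∀ n, ‖lam n - ptE d n‖ ≤ ε) :
    ∑' n, ‖heatSol d u₀ s (lam n) - heatSol d u₀ s (ptE d n)‖ₑ ^ 2 ≤ ENNReal.ofReal ((6 * Kd d * ε * l2norm d u₀) ^ 2) := by
  have hpi := Real.pi_pos
  have hs0 : 0 < s := by linarith
  set c := (4 * Real.pi * s) ^ (-(d : ℝ) / 2) with hcdef
  have hc : 0 ≤ c := by positivity
  have hc3 : 0 ≤ c * (3 * ε) := by positivity
  have g0 := fun b x y => (gk_pos d b x y).le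
  have hcc : ∀ b x, Measurable fun y => ENNReal.ofReal (gk d b x y) := fun b x => (cont_gk _ _ _).measurable.ennreal_ofReal
  refine heat_schur d hu (fun n y => c * (3 * ε) * (gk d (1/(8*s)) (lam n) y + gk d (1/(8*s)) (ptE d n) y))
    (fun n => continuous_const.mul ((cont_gk _ _ _).add (cont_gk _ _ _))) _ (fun n => ?_) (A := 6 * ε * 2 ^ (d/2:ℝ))
    (B := 6 * ε * 4 ^ (d/2:ℝ) * Real.exp ((1/(8*s))*(1+√d)^2)) (by positivity) (fun n => ?_) (fun y => ?_) ?_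
  · rw [heat_eq, heat_eq, ← integral_sub (heat_int d hu hs0 _) (heat_int d hu hs0 _)]
    refine (enorm_integral_le_lintegral_enorm _).trans (lintegral_mono fun y => ?_)
    rw [← sub_mul, ← mul_sub, enorm_mul]
    gcongr
    rw [Real.enorm_eq_ofReal_abs]
    apply ENNReal.ofReal_le_ofReal
    rw [abs_mul, abs_of_nonneg hc, mul_assoc]
    gcongr
    exact gk_diff d hs hε1 _ _ _ (hl n)
  · simp only [ENNReal.ofReal_mul hc3, ENNReal.ofReal_add (g0 _ _ _) (g0 _ _ _)]
    rw [lintegral_const_mul' _ _ ENNReal.ofReal_ne_top, lintegral_add_left (hcc _ _), lint_gk d (by positivity), lint_gk d (by positivity), ← ENNReal.ofReal_add (by positivity) (by positivity), ← ENNReal.ofReal_mul hc3]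
    apply ENNReal.ofReal_le_ofReal
    have := pow_cancel d hs0 two_pos
    rw [← this]
    apply le_of_eq
    have e : Real.pi / (1 / (8 * s)) = 2 * (4 * Real.pi * s) := by field_simp; ring
    rw [e]; ring
  · simp only [ENNReal.ofReal_mul hc3, ENNReal.ofReal_add (g0 _ _ _) (g0 _ _ _)]
    rw [ENNReal.tsum_mul_left, ENNReal.tsum_add]
    have t1 := tsum_gk d (b := 1/(8*s)) (by positivity) y lam (fun n => (hl n).trans hε1)
    have t2 := tsum_gk d (b := 1/(8*s)) (by positivity) y (ptE d) (fun n => by simp)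
    refine (mul_le_mul_right (add_le_add t1 t2) _).trans ?_
    rw [← ENNReal.ofReal_add (by positivity) (by positivity), ← ENNReal.ofReal_mul hc3]
    apply ENNReal.ofReal_le_ofReal
    have := pow_cancel d hs0 four_pos
    rw [← this]
    apply le_of_eq
    have e : 2 * Real.pi / (1 / (8 * s)) = 4 * (4 * Real.pi * s) := by field_simp; ring
    rw [e]; ring
  · have h1 : (2:ℝ) ^ (d/2:ℝ) ≤ Kd d := by
      unfold Kd
      calc _ ≤ (4:ℝ) ^ (d/2:ℝ) := by gcongr; norm_num
        _ ≤ _ := le_mul_of_one_le_right (by positivity) (Real.one_le_exp (by positivity))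
    have h2 : 4 ^ (d/2:ℝ) * Real.exp ((1/(8*s))*(1+√d)^2) ≤ Kd d := by
      unfold Kd
      gcongr
      apply mul_le_of_le_one_left (by positivity)
      rw [div_le_one (by positivity)]; linarith
    have h0 : 0 ≤ Kd d := by unfold Kd; positivity
    calc _ = (6 * ε)^2 * (2 ^ (d/2:ℝ) * (4 ^ (d/2:ℝ) * Real.exp ((1/(8*s))*(1+√d)^2))) := by ring
      _ ≤ (6 * ε)^2 * (Kd d * Kd d) := by gcongr
      _ = _ := by ring

lemma synth (d : ℕ) (e : (Fin d → ℤ) → HE d) (he : Orthonormal ℂ e) (a : (Fin d → ℤ) → ℝ) {M : ℝ} (hM : 0 ≤ M)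
    (h : ∑' n, ‖a n‖ₑ ^ 2 ≤ ENNReal.ofReal (M ^ 2)) :
    ∃ S : HE d, HasSum (fun n => (a n : ℂ) • e n) S ∧ ‖S‖ ≤ M := by
  have hfin : ∀ t : Finset (Fin d → ℤ), ‖∑ n ∈ t, (a n : ℂ) • e n‖ ^ 2 = ∑ n ∈ t, ‖a n‖ ^ 2 := by
    intro t
    have := he.orthogonalFamily.norm_sum (fun n => (a n : ℂ)) t
    simpa using this
  have hb : ∀ t : Finset (Fin d → ℤ), ∑ n ∈ t, ‖a n‖ ^ 2 ≤ M ^ 2 := by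
    intro t
    have := (ENNReal.sum_le_tsum t).trans h
    have e1 : ∑ n ∈ t, ‖a n‖ₑ ^ 2 = ENNReal.ofReal (∑ n ∈ t, ‖a n‖ ^ 2) := by
      rw [ENNReal.ofReal_sum_of_nonneg (fun _ _ => by positivity)]
      refine Finset.sum_congr rfl fun n _ => ?_
      rw [ENNReal.ofReal_pow (norm_nonneg _), ofReal_norm]
    rw [e1] at this
    exact (ENNReal.ofReal_le_ofReal_iff (by positivity)).1 this
  have hsum : Summable fun n => (a n : ℂ) • e n := by
    have := (he.orthogonalFamily.summable_iff_norm_sq_summable (fun n => (a n : ℂ))).2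
      (summable_of_sum_le (c := M ^ 2) (fun n => by positivity) (fun t => by simpa using hb t))
    simpa using this
  refine ⟨_, hsum.hasSum, ?_⟩
  refine le_of_tendsto hsum.hasSum.norm (Eventually.of_forall fun t => ?_)
  exact (sq_le_sq₀ (norm_nonneg _) hM).1 ((hfin t).le.trans (hb t))

lemma re_bd {d : ℕ} (h : HE d) {f : EuclideanSpace ℝ (Fin d) → ℝ} (hf : f =ᵐ[volume] fun x => (h x).re) :
    MemLp f 2 volume ∧ eLpNorm f 2 volume ≤ ENNReal.ofReal ‖h‖ := by
  constructor
  · exact (memLp_congr_ae hf).2 (Lp.memLp h).re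
  · rw [eLpNorm_congr_ae hf, ofReal_norm, Lp.enorm_def]
    exact eLpNorm_mono fun x => Complex.abs_re_le_norm _

open scoped FourierTransform in
lemma core_of_S (d : ℕ) {u : EuclideanSpace ℝ (Fin d) → ℝ} (e : (Fin d → ℤ) → HE d)
    (he : ∀ n, e n =ᵐ[volume] (Qc d).indicator (chE d (ptE d n)))
    (V S : HE d) (hV : (𝓕 V : HE d) =ᵐ[volume] fun x => (u x : ℂ)) (a : (Fin d → ℤ) → ℝ)
    (hS : HasSum (fun n => (a n : ℂ) • e n) S) {B : ℝ} (hB : ‖V - S‖ ≤ B) :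
    ∃ R : EuclideanSpace ℝ (Fin d) → ℝ, MemLp R 2 volume ∧ l2norm d R ≤ B ∧
      HasSumL2 d (fun n x => a n * fN d 1 n x) (fun x => u x - R x) := by
  have hB0 : 0 ≤ B := (norm_nonneg _).trans hB
  let F := FourierTransform.fourierCLM ℂ (HE d) (F := HE d)
  have hF : ∀ h : HE d, F h = 𝓕 h := fun h => rfl
  have hFn : ∀ h : HE d, ‖F h‖ = ‖h‖ := fun h => Lp.norm_fourier_eq h
  let W : HE d := F S
  have hR : (fun x => u x - (W x).re) =ᵐ[volume] fun x => ((F (V - S) : HE d) x).re := by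
    rw [map_sub]
    filter_upwards [hV, Lp.coeFn_sub (F V) (F S)] with x h1 h2
    rw [h2, Pi.sub_apply, hF V, h1]
    simp [W]
  obtain ⟨m, b⟩ := re_bd _ hR
  refine ⟨_, m, ?_, ?_⟩
  · rw [l2norm]
    refine ENNReal.toReal_le_of_le_ofReal hB0 (b.trans (ENNReal.ofReal_le_ofReal ?_))
    rw [hFn]; exact hB
  · unfold HasSumL2
    have hlim : Tendsto (fun t : Finset (Fin d → ℤ) => ENNReal.ofReal ‖S - ∑ n ∈ t, (a n : ℂ) • e n‖) atTop (𝓝 0) := by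
      rw [← ENNReal.ofReal_zero]
      apply ENNReal.tendsto_ofReal
      have := (tendsto_const_nhds (x := S)).sub hS
      simpa using this.norm
    refine tendsto_of_tendsto_of_tendsto_of_le_of_le tendsto_const_nhds hlim (fun _ => zero_le) (fun t => ?_)
    have hcl : ∀ t : Finset (Fin d → ℤ), (F (∑ n ∈ t, (a n : ℂ) • e n) : HE d) =ᵐ[volume]
        fun x => ((∑ n ∈ t, a n * fN d 1 n x : ℝ) : ℂ) := by
      intro t
      induction t using Finset.induction_on with
      | empty => 
        simp only [Finset.sum_empty, map_zero, Complex.ofReal_zero]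
        exact Lp.coeFn_zero _ _ _
      | insert n t hn ih =>
        rw [Finset.sum_insert hn, map_add, map_smul]
        filter_upwards [ih, Lp.coeFn_add ((a n : ℂ) • F (e n)) (F (∑ n ∈ t, (a n : ℂ) • e n)),
          Lp.coeFn_smul (a n : ℂ) (F (e n)), lp_fourier_e (e n) (he n)] with x h1 h2 h3 h4
        rw [h2, Pi.add_apply, h1, h3, Pi.smul_apply, hF, h4, Finset.sum_insert hn]
        push_cast; simp
    have hh : (fun x => u x - (u x - (W x).re) - ∑ n ∈ t, a n * fN d 1 n x) =ᵐ[volume]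
        fun x => ((F (S - ∑ n ∈ t, (a n : ℂ) • e n) : HE d) x).re := by
      rw [map_sub]
      filter_upwards [hcl t, Lp.coeFn_sub (F S) (F (∑ n ∈ t, (a n : ℂ) • e n))] with x h1 h2
      rw [h2, Pi.sub_apply, h1, Complex.sub_re, Complex.ofReal_re, _root_.sub_sub_cancel]
    refine (re_bd _ hh).2.trans ?_
    rw [hFn]

lemma exp_bd (d : ℕ) {s : ℝ} (hs : 1 ≤ s) :
    Real.exp (-8 * s) ≤ d.factorial * (s ^ (-(d:ℝ) / 4) * Real.exp (-s)) := by
  have hs0 : 0 < s := by linarith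
  have h1 : s ^ ((d:ℝ) / 4) ≤ d.factorial * Real.exp s := by
    calc s ^ ((d:ℝ) / 4) ≤ s ^ (d:ℝ) := by
          apply Real.rpow_le_rpow_of_exponent_le hs
          have : (0:ℝ) ≤ d := by positivity
          linarith
      _ = s ^ d := Real.rpow_natCast _ _
      _ ≤ _ := by
        have := Real.pow_div_factorial_le_exp s hs0.le d
        rw [div_le_iff₀ (by positivity)] at this
        linarith
  have h2 : s ^ ((d:ℝ) / 4) * s ^ (-(d:ℝ) / 4) = 1 := by
    rw [← Real.rpow_add hs0]; ring_nf; simp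
  have hp : 0 < s ^ (-(d:ℝ) / 4) := by positivity
  calc Real.exp (-8 * s) ≤ Real.exp (-s + -s) := by gcongr; linarith
    _ = (s ^ ((d:ℝ) / 4) * s ^ (-(d:ℝ) / 4)) * (Real.exp (-s) * Real.exp (-s)) := by rw [h2, Real.exp_add, one_mul]
    _ ≤ (d.factorial * Real.exp s * s ^ (-(d:ℝ) / 4)) * (Real.exp (-s) * Real.exp (-s)) := by gcongr
    _ = d.factorial * (s ^ (-(d:ℝ) / 4) * Real.exp (-s)) * (Real.exp s * Real.exp (-s)) := by ring
    _ = _ := by rw [← Real.exp_add]; simp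

def Ccore (d : ℕ) : ℝ := 6 * Kd d + Cal d * d.factorial + (1 + Kd d) * Real.exp 1

lemma Kd_pos (d) : 0 < Kd d := by unfold Kd; positivity
lemma Cal_pos (d) : 0 < Cal d := by
  unfold Cal
  have : 0 ≤ ∑' k : Fin d → ℤ, Real.exp (-1 * ‖ptE d k‖ ^ 2) := tsum_nonneg fun _ => by positivity
  linarith

theorem core (d : ℕ) {u₀ : EuclideanSpace ℝ (Fin d) → ℝ} (hu : MemLp u₀ 2 volume) {s ε : ℝ} (hs : 0 < s)
    (hε : 0 < ε) (hε1 : ε < 1) (lam : (Fin d → ℤ) → EuclideanSpace ℝ (Fin d)) (hl : ∀ n, ‖lam n - ptE d n‖ ≤ ε) :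
    ∃ R : EuclideanSpace ℝ (Fin d) → ℝ, MemLp R 2 volume ∧
      l2norm d R ≤ Ccore d * (ε + (1 + s ^ (-(1:ℝ)/2)) * s ^ (-(d:ℝ)/4) * Real.exp (-s)) * l2norm d u₀ ∧
      HasSumL2 d (fun n x => heatSol d u₀ s (lam n) * fN d 1 n x) (fun x => heatSol d u₀ s x - R x) := by
  obtain ⟨e, he, ho, hc⟩ := lemA d
  obtain ⟨g, V, hg, hV, hVi, hrep, hFV⟩ := heat_repr d hu hs
  have hK := Kd_pos d
  have hC := Cal_pos d
  have hL : 0 ≤ l2norm d u₀ := ENNReal.toReal_nonneg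
  set L := l2norm d u₀
  set X := s ^ (-(d:ℝ)/4) with hX
  have hX0 : 0 < X := by positivity
  set Y := s ^ (-(1:ℝ)/2)
  have hY0 : 0 < Y := by positivity
  have hE0 := Real.exp_pos (-s)
  have hXE : X * Real.exp (-s) ≤ (1 + Y) * X * Real.exp (-s) := by
    have : 0 < Y * (X * Real.exp (-s)) := by positivity
    nlinarith
  set Z := (1 + Y) * X * Real.exp (-s) with hZ
  have hZ0 : 0 < Z := by positivity
  have hF : (0:ℝ) < d.factorial := by positivity
  rcases le_total 1 s with h1 | h1
  · obtain ⟨P, hP, hPb⟩ := alias_bd d e he hc h1 g V hV hVi (fun n => (heatSol d u₀ s (ptE d n) : ℂ)) (fun n => hrep _)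
    obtain ⟨D, hD, hDb⟩ := synth d e ho _ (M := 6 * Kd d * ε * L) (by positivity) (schur1 d hu h1 hε.le hε1.le lam hl)
    refine core_of_S d e he V (P + D) hFV _ ?_ ?_
    · convert hP.add hD using 1
      ext1 n
      rw [← add_smul]; congr 1; push_cast; ring
    · have : ‖V - (P + D)‖ ≤ ‖V - P‖ + ‖D‖ := by
        rw [← sub_sub]; exact norm_sub_le _ _
      refine this.trans ((add_le_add hPb hDb).trans ?_)
      rw [hg]
      have hx := (exp_bd d h1).trans (mul_le_mul_of_nonneg_left hXE hF.le)
      calc _ ≤ Cal d * (d.factorial * Z) * L + 6 * Kd d * ε * L := by gcongr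
        _ = (6 * Kd d * ε + Cal d * d.factorial * Z) * L := by ring
        _ ≤ _ := by
          refine mul_le_mul_of_nonneg_right ?_ hL
          unfold Ccore
          have t1 : 0 ≤ 6 * Kd d * Z := by positivity
          have t2 : 0 ≤ Cal d * d.factorial * ε := by positivity
          have t3 : 0 ≤ (1 + Kd d) * Real.exp 1 * (ε + Z) := by positivity
          linarith
  · obtain ⟨S, hS, hSb⟩ := synth d e ho _ (M := Kd d * X * L) (by positivity)
      (schur2 d hu hs h1 lam (fun n => (hl n).trans hε1.le))
    refine core_of_S d e he V S hFV _ hS ?_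
    have hVn : ‖V‖ ≤ ‖g‖ := by
      apply Lp.norm_le_norm_of_ae_le
      filter_upwards [hV] with ξ h
      rw [h, norm_mul, Complex.norm_real, Real.norm_eq_abs, gsn, Real.abs_exp]
      refine mul_le_of_le_one_left (norm_nonneg _) (Real.exp_le_one_iff.2 ?_)
      have : 0 ≤ (4 * Real.pi ^ 2 * s) * ‖ξ‖^2 := by positivity
      linarith
    refine (norm_sub_le _ _).trans ((add_le_add hVn hSb).trans ?_)
    rw [hg]
    have hX1 : 1 ≤ X := by
      apply Real.one_le_rpow_of_pos_of_le_one_of_nonpos hs h1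
      have : (0:ℝ) ≤ d := by positivity
      linarith
    have hee : 1 ≤ Real.exp 1 * Real.exp (-s) := by
      rw [← Real.exp_add]; apply Real.one_le_exp; linarith
    calc L + Kd d * X * L ≤ (1 + Kd d) * X * L := by nlinarith
      _ ≤ ((1 + Kd d) * X * (Real.exp 1 * Real.exp (-s))) * L := by
          refine mul_le_mul_of_nonneg_right ?_ hL
          exact le_mul_of_one_le_right (by positivity) hee
      _ = ((1 + Kd d) * Real.exp 1 * (X * Real.exp (-s))) * L := by ring
      _ ≤ ((1 + Kd d) * Real.exp 1 * Z) * L := by gcongr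
      _ ≤ _ := by
          refine mul_le_mul_of_nonneg_right ?_ hL
          unfold Ccore
          have t1 : 0 ≤ 6 * Kd d * (ε + Z) := by positivity
          have t2 : 0 ≤ Cal d * d.factorial * (ε + Z) := by positivity
          have t3 : 0 ≤ (1 + Kd d) * Real.exp 1 * ε := by positivity
          linarith

lemma eLp_scale (d : ℕ) {N : ℝ} (hN : 0 < N) (f : EuclideanSpace ℝ (Fin d) → ℝ) :
    eLpNorm (fun x => f (N • x)) 2 volume = ENNReal.ofReal ((N ^ d)⁻¹) ^ (1/2 : ℝ) * eLpNorm f 2 volume := by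
  have hme : MeasurableEmbedding (fun x : EuclideanSpace ℝ (Fin d) => N • x) :=
    (Homeomorph.smulOfNeZero N hN.ne').measurableEmbedding
  have h1 := hme.eLpNorm_map_measure (μ := volume) (g := f) (p := 2)
  have h2 := Measure.map_addHaar_smul (volume : Measure (EuclideanSpace ℝ (Fin d))) hN.ne'
  have h3 : eLpNorm (fun x => f (N • x)) 2 volume = eLpNorm f 2 (Measure.map (fun x : EuclideanSpace ℝ (Fin d) => N • x) volume) := h1.symm
  rw [h3, show (fun x : EuclideanSpace ℝ (Fin d) => N • x) = (N • ·) from rfl, h2]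
  rw [finrank_euclideanSpace_fin, abs_of_pos (by positivity)]
  rw [eLpNorm_smul_measure_of_ne_top (by norm_num)]
  simp

lemma memLp_scale (d : ℕ) {N : ℝ} (hN : 0 < N) {f : EuclideanSpace ℝ (Fin d) → ℝ} (hf : MemLp f 2 volume) :
    MemLp (fun x => f (N • x)) 2 volume := by
  refine ⟨hf.1.comp_quasiMeasurePreserving ?_, ?_⟩
  · exact Measure.quasiMeasurePreserving_smul volume hN.ne'
  · rw [eLp_scale d hN]
    exact ENNReal.mul_lt_top (ENNReal.rpow_lt_top_of_nonneg (by norm_num) ENNReal.ofReal_ne_top) hf.2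

lemma heat_scale (d : ℕ) {N T : ℝ} (hN : 0 < N) (hT : 0 < T) (u₀ : EuclideanSpace ℝ (Fin d) → ℝ) (x) :
    heatSol d u₀ T x = heatSol d (fun y => u₀ (N⁻¹ • y)) (T * N ^ 2) (N • x) := by
  have hpi := Real.pi_pos
  unfold heatSol
  have h := Measure.integral_comp_smul (volume : Measure (EuclideanSpace ℝ (Fin d)))
    (fun y => Real.exp (-‖N • x - y‖ ^ 2 / (4 * (T * N^2))) * u₀ (N⁻¹ • y)) N
  rw [finrank_euclideanSpace_fin, abs_of_pos (by positivity)] at h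
  have h2 : ∫ y, Real.exp (-‖x - y‖ ^ 2 / (4 * T)) * u₀ y =
      ∫ y, Real.exp (-‖N • x - N • y‖ ^ 2 / (4 * (T * N^2))) * u₀ (N⁻¹ • N • y) := by
    congr 1; ext y
    rw [inv_smul_smul₀ hN.ne', ← smul_sub, norm_smul, Real.norm_of_nonneg hN.le, mul_pow]
    congr 2; field_simp
  rw [h2, h, smul_eq_mul, ← mul_assoc]
  congr 1
  rw [← mul_assoc, Real.mul_rpow (x := 4 * Real.pi * T) (y := N ^ 2) (by positivity) (by positivity)]
  congr 1
  rw [← Real.rpow_natCast N 2, ← Real.rpow_mul hN.le, ← Real.rpow_natCast N d, ← Real.rpow_neg hN.le]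
  congr 1; push_cast; ring

theorem main4 (d : ℕ) :
    ∃ C : ℝ, 0 < C ∧
      ∀ u₀ : EuclideanSpace ℝ (Fin d) → ℝ, MemLp u₀ 2 volume →
      ∀ T N ε : ℝ, 0 < T → 0 < N → ε ∈ Set.Ioo (0 : ℝ) 1 →
      ∀ lam : (Fin d → ℤ) → EuclideanSpace ℝ (Fin d),
        (∀ n, ‖lam n - latticePt d N n‖ ≤ ε / N) →
        ∃ R : EuclideanSpace ℝ (Fin d) → ℝ, MemLp R 2 volume ∧
          l2norm d R ≤
            C * (ε + (1 + (T * N ^ 2) ^ (-(1 : ℝ) / 2)) * (T * N ^ 2) ^ (-(d : ℝ) / 4)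
                * Real.exp (-(T * N ^ 2))) * l2norm d u₀ ∧
          HasSumL2 d (fun n x => heatSol d u₀ T (lam n) * fN d N n x)
            (fun x => heatSol d u₀ T x - R x) := by
  refine ⟨Ccore d, ?_, ?_⟩
  · have hK := Kd_pos d
    have hC := Cal_pos d
    unfold Ccore; positivity
  intro u₀ hu T N ε hT hN hε lam hlam
  have hl : ∀ n, ‖N • lam n - ptE d n‖ ≤ ε := fun n => by
    have : N • lam n - ptE d n = N • (lam n - latticePt d N n) := by
      rw [smul_sub]; congr 1
      ext j
      simp [ptE, latticePt]; field_simp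
    rw [this, norm_smul, Real.norm_of_nonneg hN.le]
    have := hlam n
    rw [le_div_iff₀ hN] at this
    linarith
  obtain ⟨R, hR, hRb, hS⟩ := core d (memLp_scale d (inv_pos.2 hN) hu) (s := T * N ^ 2) (by positivity) hε.1 hε.2 _ hl
  simp only [← heat_scale d hN hT] at hS
  have hcne : ENNReal.ofReal ((N ^ d)⁻¹) ^ (1/2 : ℝ) ≠ ∞ := (ENNReal.rpow_lt_top_of_nonneg (by norm_num) ENNReal.ofReal_ne_top).ne
  refine ⟨fun x => R (N • x), memLp_scale d hN hR, ?_, ?_⟩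
  · have e1 : l2norm d (fun x => R (N • x)) = (ENNReal.ofReal ((N ^ d)⁻¹) ^ (1/2 : ℝ)).toReal * l2norm d R := by
      rw [l2norm, eLp_scale d hN, ENNReal.toReal_mul, l2norm]
    have e2 : l2norm d u₀ = (ENNReal.ofReal ((N ^ d)⁻¹) ^ (1/2 : ℝ)).toReal * l2norm d (fun y => u₀ (N⁻¹ • y)) := by
      rw [l2norm, l2norm, ← ENNReal.toReal_mul, ← eLp_scale d hN (fun y => u₀ (N⁻¹ • y))]
      simp only [inv_smul_smul₀ hN.ne']
    rw [e1, e2]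
    refine (mul_le_mul_of_nonneg_left hRb ENNReal.toReal_nonneg).trans (le_of_eq ?_)
    ring
  · unfold HasSumL2 at hS ⊢
    have h := ENNReal.Tendsto.const_mul hS (Or.inr hcne)
    rw [mul_zero] at h
    refine h.congr fun t => ?_
    rw [← eLp_scale d hN]
    congr 1; ext x
    have hf : ∀ n, fN d 1 n (N • x) = fN d N n x := fun n => by simp [fN]
    beta_reduce
    rw [← heat_scale d hN hT u₀ x]
    simp only [hf]


/-- Robustness of the asymptotic observability identity: there is `C = C(d) > 0` such that
for all `u₀ ∈ L²(ℝ^d)`, `T > 0`, `N > 0`, `ε ∈ (0,1)` and every family `(λ_n)_{n ∈ ℤ^d}`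
with `|λ_n - n/N| ≤ ε/N`, there exists `R̃ ∈ L²(ℝ^d)` with
`‖R̃‖ ≤ C (ε + (1 + (TN²)^{-1/2}) (TN²)^{-d/4} e^{-TN²}) ‖u₀‖` and
`u(T,·) = Σ_{n ∈ ℤ^d} u(T, λ_n) f_{N,n} + R̃` in `L²(ℝ^d)`. -/
theorem statement4 (d : ℕ) (hd : 0 < d) :
    ∃ C : ℝ, 0 < C ∧
      ∀ u₀ : EuclideanSpace ℝ (Fin d) → ℝ, MemLp u₀ 2 volume →
      ∀ T N ε : ℝ, 0 < T → 0 < N → ε ∈ Set.Ioo (0 : ℝ) 1 →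
      ∀ lam : (Fin d → ℤ) → EuclideanSpace ℝ (Fin d),
        (∀ n, ‖lam n - latticePt d N n‖ ≤ ε / N) →
        ∃ R : EuclideanSpace ℝ (Fin d) → ℝ, MemLp R 2 volume ∧
          l2norm d R ≤
            C * (ε + (1 + (T * N ^ 2) ^ (-(1 : ℝ) / 2)) * (T * N ^ 2) ^ (-(d : ℝ) / 4)
                * Real.exp (-(T * N ^ 2))) * l2norm d u₀ ∧
          HasSumL2 d (fun n x => heatSol d u₀ T (lam n) * fN d N n x)
            (fun x => heatSol d u₀ T x - R x) := by
  exact main4 d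
end
end
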